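/- arXiv:2405.20480 — 2 statements merged into one kernel-verified Lean document; each statement's English description precedes it below -/
import Mathlib

section
/- Let G = ([n], E) be a finite simple graph and let d ≥ pmd(G) + k(G) + 1. Then the Lovász–Saks–Schrijver ring R_G(d) is a unique factorization domain. -/
open MvPolynomial

/-- The Lovász–Saks–Schrijver ideal `L_G(d)` of a simple graph `G`, inside the polynomial
ring `K[y_{ij} : i ∈ V, j ∈ [d]]`: it is generated by the polynomials
`f_{ij} = ∑_{k=1}^d y_{ik} y_{jk}` for the edges `{i,j}` of `G`. -/
noncomputable def lssIdeal (K : Type) [Field K] {V : Type} (G : SimpleGraph V) (d : ℕ) :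
    Ideal (MvPolynomial (V × Fin d) K) :=
  Ideal.span {f | ∃ i j : V, G.Adj i j ∧
    f = ∑ k : Fin d, MvPolynomial.X (i, k) * MvPolynomial.X (j, k)}

/-- The total weight `w(i) + w(j)` of an edge `e = {i,j}`. -/
noncomputable def edgeWeight {V : Type} (w : V → ℝ) : Sym2 V → ℝ :=
  Sym2.lift ⟨fun i j => w i + w j, fun i j => add_comm (w i) (w j)⟩

/-- `M` is a positive matching of the edge set `E`: `M ⊆ E` consists of pairwise disjoint
edges, and there is a weight function `w` with positive total weight exactly on the
edges of `M` and negative total weight on the edges of `E \ M`. -/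
def IsPositiveMatching {V : Type} (E M : Set (Sym2 V)) : Prop :=
  M ⊆ E ∧ (M.Pairwise fun e e' => ∀ v : V, ¬(v ∈ e ∧ v ∈ e')) ∧
    ∃ w : V → ℝ, (∀ e ∈ M, 0 < edgeWeight w e) ∧ ∀ e ∈ E \ M, edgeWeight w e < 0

/-- `F 0, …, F (p-1)` is a positive matching decomposition of the edge set `E`:
a partition of `E` into pairwise disjoint subsets such that `F i` is a positive matching
on the graph with edge set `E ∖ (F 0 ∪ ⋯ ∪ F (i-1))`. -/
def IsPMDecomposition {V : Type} (E : Set (Sym2 V)) {p : ℕ} (F : Fin p → Set (Sym2 V)) : Prop :=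
  (⋃ i, F i) = E ∧ (Pairwise fun i j => Disjoint (F i) (F j)) ∧
    ∀ i : Fin p, IsPositiveMatching (E \ ⋃ j : Fin p, ⋃ _ : j < i, F j) (F i)

/-- The positive matching decomposition number `pmd(G)`. -/
noncomputable def pmd {V : Type} (G : SimpleGraph V) : ℕ :=
  sInf {p | ∃ F : Fin p → Set (Sym2 V), IsPMDecomposition G.edgeSet F}

/-- The degeneracy `k(G)`: the least `k` such that every (nonempty) induced subgraph of `G`
has a vertex of degree at most `k`. -/
noncomputable def degeneracy {V : Type} (G : SimpleGraph V) : ℕ :=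
  sInf {k | ∀ s : Set V, s.Nonempty → ∃ v ∈ s, {u | u ∈ s ∧ G.Adj v u}.ncard ≤ k}

/-!
Let `v` be a vertex of `G` of degree `r ≤ k(G)`, and let `A` be the ring of `G - v`. Then
`R_G(d) = A[x] / (M x)`, where `x` is the vector of `v` and the rows of `M` are the vectors of its
neighbours. Inverting a maximal minor of `M` solves these equations and leaves a polynomial ring
over a localization of `A`. By induction and Nagata's criterion it is enough that some maximal
minor `D` is regular in `R_G(d)` and that a second one is regular modulo `D`: the latter makes the
prime factors of `D` in `A` stay prime in `R_G(d)`.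

The weights of a positive matching decomposition give a monomial order for which the generators of
the LSS ideal have pairwise coprime leading monomials, all in the first `pmd(G)` columns. Two
consecutive `r`-minors on the remaining columns, of which there are at least `r + 1`, have leading
monomials coprime to these and to each other, so they form a regular sequence by Buchberger's
product criterion.
-/

section LinearQuotient

open Matrix

variable {A : Type*} [CommRing A] {ι κ τ : Type*}

/-- The maximal minor of `M` on the columns `c`. -/
def columnMinor [Fintype ι] [DecidableEq ι] (M : Matrix ι τ A) (c : ι → τ) : A :=
  (M.submatrix id c).det

theorem map_columnMinor [Fintype ι] [DecidableEq ι] {B : Type*} [CommRing B] (f : A →+* B)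
    (M : Matrix ι τ A) (c : ι → τ) : f (columnMinor M c) = columnMinor (M.map f) c :=
  f.map_det _

variable [Fintype τ]

theorem mulVec_eq_add_of_sumEquiv [Fintype ι] [Fintype κ] (M : Matrix ι τ A) (e : ι ⊕ κ ≃ τ)
    (x : τ → A) :
    M *ᵥ x = M.submatrix id (e ∘ Sum.inl) *ᵥ (x ∘ e ∘ Sum.inl) +
      M.submatrix id (e ∘ Sum.inr) *ᵥ (x ∘ e ∘ Sum.inr) := by
  ext i
  simp only [mulVec, dotProduct, Pi.add_apply, submatrix_apply, id, Function.comp_apply]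
  rw [← e.sum_comp, Fintype.sum_sum_type]

/-- The ideal of the linear forms whose coefficients are the rows of `M`. -/
noncomputable def linearFormsIdeal (M : Matrix ι τ A) : Ideal (MvPolynomial τ A) :=
  Ideal.span (Set.range fun i => ∑ t, C (M i t) * X t)

/-- The ring `A[x_t] / (M x)`, that is, the symmetric algebra of the cokernel of `Mᵀ`. -/
abbrev LinearQuotient (M : Matrix ι τ A) : Type _ :=
  MvPolynomial τ A ⧸ linearFormsIdeal M

namespace LinearQuotient

/-- The class of the variable `x_t` in `A[x_t] / (M x)`. -/
noncomputable def gen (M : Matrix ι τ A) (t : τ) : LinearQuotient M :=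
  Ideal.Quotient.mk _ (X t)

/-- The polynomial subring on the variables indexed by `κ`, mapped to `A[x_t] / (M x)`. -/
noncomputable def freePart (M : Matrix ι τ A) (s : κ → τ) :
    MvPolynomial κ A →ₐ[A] LinearQuotient M :=
  aeval fun k => gen M (s k)

@[simp]
theorem freePart_X (M : Matrix ι τ A) (s : κ → τ) (k : κ) :
    freePart M s (X k) = gen M (s k) :=
  aeval_X _ k

variable {M : Matrix ι τ A}

theorem map_mulVec_gen : M.map (algebraMap A (LinearQuotient M)) *ᵥ gen M = 0 := by
  ext i
  have hi : Ideal.Quotient.mk (linearFormsIdeal M) (∑ t, C (M i t) * X t) = 0 :=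
    Ideal.Quotient.eq_zero_iff_mem.2 (Ideal.subset_span ⟨i, rfl⟩)
  rw [map_sum] at hi
  exact hi

/-- The universal property of `A[x_t] / (M x)`: it classifies the solutions of `M z = 0`. -/
noncomputable def lift {B : Type*} [CommRing B] [Algebra A B] (z : τ → B)
    (hz : M.map (algebraMap A B) *ᵥ z = 0) : LinearQuotient M →ₐ[A] B :=
  Ideal.Quotient.liftₐ _ (aeval z) fun a ha => by
    suffices linearFormsIdeal M ≤ RingHom.ker (aeval z : MvPolynomial τ A →ₐ[A] B) from this ha
    refine Ideal.span_le.2 ?_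
    rintro _ ⟨i, rfl⟩
    simpa [mulVec, dotProduct, RingHom.mem_ker] using congrFun hz i

@[simp]
theorem lift_gen {B : Type*} [CommRing B] [Algebra A B] (z : τ → B)
    (hz : M.map (algebraMap A B) *ᵥ z = 0) (t : τ) : lift z hz (gen M t) = z t :=
  aeval_X z t

theorem algHom_ext {B : Type*} [CommRing B] [Algebra A B] {f g : LinearQuotient M →ₐ[A] B}
    (h : ∀ t, f (gen M t) = g (gen M t)) : f = g :=
  Ideal.Quotient.algHom_ext _ (MvPolynomial.algHom_ext h)

theorem algebraMap_mem_map_iff {I : Ideal A} {a : A} :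
    algebraMap A (LinearQuotient M) a ∈ I.map (algebraMap A (LinearQuotient M)) ↔ a ∈ I := by
  refine ⟨fun h => ?_, Ideal.mem_map_of_mem _⟩
  set ρ : LinearQuotient M →ₐ[A] A := lift 0 (mulVec_zero _)
  have hmem := Ideal.mem_map_of_mem (ρ : LinearQuotient M →+* A) h
  rwa [Ideal.map_map, ρ.comp_algebraMap, AlgHom.coe_toRingHom, AlgHom.commutes,
    Algebra.algebraMap_self, Ideal.map_id] at hmem

variable [Fintype ι] [DecidableEq ι] (e : ι ⊕ κ ≃ τ)

theorem columnMinor_mul_gen_mem_range (i : ι) :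
    algebraMap A _ (columnMinor M (e ∘ Sum.inl)) * gen M (e (Sum.inl i)) ∈
      (freePart M (e ∘ Sum.inr)).range := by
  have := Fintype.ofInjective (e ∘ Sum.inr) (e.injective.comp Sum.inr_injective)
  set φ := algebraMap A (LinearQuotient M)
  set N := M.submatrix id (e ∘ Sum.inl)
  set B := M.submatrix id (e ∘ Sum.inr)
  have hrel : N.map φ *ᵥ (gen M ∘ e ∘ Sum.inl) = -(B.map φ *ᵥ (gen M ∘ e ∘ Sum.inr)) :=
    eq_neg_of_add_eq_zero_left ((mulVec_eq_add_of_sumEquiv _ e _).symm.trans map_mulVec_gen)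
  have hcramer : φ N.det • (gen M ∘ e ∘ Sum.inl) =
      N.adjugate.map φ *ᵥ -(B.map φ *ᵥ (gen M ∘ e ∘ Sum.inr)) := by
    have hadj : N.adjugate.map φ = (N.map φ).adjugate := φ.map_adjugate N
    have hdet : φ N.det = (N.map φ).det := φ.map_det N
    rw [← hrel, hadj, mulVec_mulVec, adjugate_mul, smul_mulVec, one_mulVec, hdet]
  have hi := congrFun hcramer i
  rw [Pi.smul_apply, smul_eq_mul] at hi
  refine hi ▸ Subalgebra.sum_mem _ fun j _ => Subalgebra.mul_mem _ (Subalgebra.algebraMap_mem _ _)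
    (Subalgebra.neg_mem _ (Subalgebra.sum_mem _ fun k _ =>
      Subalgebra.mul_mem _ (Subalgebra.algebraMap_mem _ _) ⟨X k, freePart_X _ _ k⟩))

theorem exists_columnMinor_pow_mul_eq_freePart (r : LinearQuotient M) :
    ∃ n b, algebraMap A _ (columnMinor M (e ∘ Sum.inl)) ^ n * r =
      freePart M (e ∘ Sum.inr) b := by
  set δ := columnMinor M (e ∘ Sum.inl)
  obtain ⟨q, rfl⟩ := Ideal.Quotient.mk_surjective r
  induction q using MvPolynomial.induction_on with
  | C a =>
    exact ⟨0, C a, by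
      rw [pow_zero, one_mul]; exact ((freePart M (e ∘ Sum.inr)).commutes a).symm⟩
  | add p q hp hq =>
    obtain ⟨n, b, hb⟩ := hp
    obtain ⟨n', b', hb'⟩ := hq
    refine ⟨n + n', C δ ^ n' * b + C δ ^ n * b', ?_⟩
    simp only [map_add, map_mul, map_pow, ← hb, ← hb', algHom_C]
    ring
  | mul_X p t hp =>
    obtain ⟨n, b, hb⟩ := hp
    obtain ⟨i | k, rfl⟩ := e.surjective t
    · obtain ⟨b', hb'⟩ := columnMinor_mul_gen_mem_range (M := M) e i
      refine ⟨n + 1, b * b', ?_⟩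
      rw [map_mul, map_mul, ← hb, pow_succ, mul_mul_mul_comm]
      exact congrArg _ hb'.symm
    · refine ⟨n, b * X k, ?_⟩
      rw [map_mul, map_mul, ← hb, mul_assoc]
      rw [freePart_X]
      rfl

theorem exists_algHom_comp_freePart {F : Type*} [CommRing F] [Algebra A F]
    (hF : IsUnit (algebraMap A F (columnMinor M (e ∘ Sum.inl)))) :
    ∃ g : LinearQuotient M →ₐ[A] MvPolynomial κ F,
      ∀ b, g (freePart M (e ∘ Sum.inr) b) = map (algebraMap A F) b := by
  have := Fintype.ofInjective (e ∘ Sum.inr) (e.injective.comp Sum.inr_injective)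
  set φ := algebraMap A (MvPolynomial κ F)
  set N := (M.submatrix id (e ∘ Sum.inl)).map φ
  set B := (M.submatrix id (e ∘ Sum.inr)).map φ
  have hN : IsUnit N.det := by
    have : N.det = C (algebraMap A F (columnMinor M (e ∘ Sum.inl))) :=
      (φ.map_det _).symm.trans rfl
    exact this ▸ hF.map C
  let z : τ → MvPolynomial κ F := Sum.elim (-(N⁻¹ *ᵥ (B *ᵥ X))) X ∘ e.symm
  have hz : M.map φ *ᵥ z = 0 := by
    have hl : z ∘ e ∘ Sum.inl = -(N⁻¹ *ᵥ (B *ᵥ X)) := by ext1; simp [z]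
    have hr : z ∘ e ∘ Sum.inr = X := by ext1; simp [z]
    rw [mulVec_eq_add_of_sumEquiv _ e, hl, hr, mulVec_neg, mulVec_mulVec]
    change -((N * N⁻¹) *ᵥ _) + B *ᵥ X = 0
    rw [mul_nonsing_inv N hN, one_mulVec, neg_add_cancel]
  refine ⟨lift z hz, fun b => ?_⟩
  suffices (lift z hz).comp (freePart M (e ∘ Sum.inr)) = mapAlgHom (Algebra.ofId A F) from
    DFunLike.congr_fun this b
  ext1 k
  simp [z]

end LinearQuotient

end LinearQuotient

section Nagata

variable {R : Type*} [CommRing R]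

/-- A domain with unique factorization; unlike `UniqueFactorizationMonoid`, this does not presuppose
that zero is the only zero divisor. -/
def IsUFD (R : Type*) [CommRing R] : Prop :=
  ∃ _ : IsDomain R, UniqueFactorizationMonoid R

theorem IsUFD.of_ringEquiv {R S : Type*} [CommRing R] [CommRing S] (e : R ≃+* S)
    (hR : IsUFD R) : IsUFD S := by
  obtain ⟨_, _⟩ := hR
  exact ⟨e.symm.toMulEquiv.isDomain, e.toMulEquiv.uniqueFactorizationMonoid ‹_›⟩

theorem dvd_of_dvd_prod_mul_of_prime [IsDomain R] {s : Multiset R} (hs : ∀ p ∈ s, Prime p)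
    {a y : R} (ha : ∀ p ∈ s, ¬p ∣ a) (h : a ∣ s.prod * y) : a ∣ y := by
  induction s using Multiset.induction_on with
  | empty => rwa [Multiset.prod_zero, one_mul] at h
  | cons p s ih =>
    rw [Multiset.forall_mem_cons] at hs ha
    rw [Multiset.prod_cons, mul_assoc] at h
    exact ih hs.2 ha.2 ((hs.1.left_dvd_or_dvd_right_of_dvd_mul h).resolve_left ha.1)

theorem dvd_of_dvd_prod_pow_mul_of_prime [IsDomain R] {s : Multiset R} (hs : ∀ p ∈ s, Prime p)
    {a y : R} (ha : ∀ p ∈ s, ¬p ∣ a) {n : ℕ} (h : a ∣ s.prod ^ n * y) : a ∣ y := by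
  rw [← Multiset.prod_nsmul] at h
  exact dvd_of_dvd_prod_mul_of_prime (fun p hp => hs p (Multiset.mem_of_mem_nsmul hp))
    (fun p hp => ha p (Multiset.mem_of_mem_nsmul hp)) h

theorem exists_pow_mul_dvd_of_algebraMap_dvd {x a b : R} (L : Type*) [CommRing L] [Algebra R L]
    [IsLocalization.Away x L] (h : algebraMap R L a ∣ algebraMap R L b) :
    ∃ n : ℕ, a ∣ x ^ n * b := by
  obtain ⟨t, ht⟩ := h
  obtain ⟨n, c, hc⟩ := IsLocalization.Away.surj x t
  have heq : algebraMap R L (x ^ n * b) = algebraMap R L (a * c) := by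
    rw [map_mul, map_mul, map_pow, ht, ← hc]
    ring
  obtain ⟨m, hm⟩ := IsLocalization.Away.exists_of_eq x heq
  exact ⟨m + n, x ^ m * c, by rw [pow_add, mul_assoc, hm, mul_left_comm]⟩

theorem exists_prime_associated_algebraMap [IsDomain R] [IsNoetherianRing R] {s : Multiset R}
    (hs : ∀ p ∈ s, Prime p) {L : Type*} [CommRing L] [Algebra R L]
    [IsLocalization.Away s.prod L] {a : R} (ha : Prime (algebraMap R L a)) :
    ∃ q, Prime q ∧ Associated (algebraMap R L q) (algebraMap R L a) := by
  induction a using (wellFounded_dvdNotUnit (α := R)).induction with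
  | _ a ih =>
  by_cases hdvd : ∃ p ∈ s, p ∣ a
  · obtain ⟨p, hp, b, rfl⟩ := hdvd
    have hassoc : Associated (algebraMap R L b) (algebraMap R L (p * b)) := by
      rw [map_mul]
      exact (associated_unit_mul_left _ _
        (IsLocalization.Away.isUnit_of_dvd s.prod (Multiset.dvd_prod hp))).symm
    have hb0 : b ≠ 0 := by
      rintro rfl
      exact ha.ne_zero (by rw [mul_zero, map_zero])
    obtain ⟨q, hq, hqb⟩ := ih b ⟨hb0, p, (hs p hp).not_isUnit, mul_comm p b⟩
      (hassoc.prime_iff.2 ha)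
    exact ⟨q, hq, hqb.trans hassoc⟩
  · push Not at hdvd
    have hcancel {y : R} (h : algebraMap R L a ∣ algebraMap R L y) : a ∣ y := by
      obtain ⟨n, hn⟩ := exists_pow_mul_dvd_of_algebraMap_dvd (x := s.prod) L h
      exact dvd_of_dvd_prod_pow_mul_of_prime hs hdvd hn
    refine ⟨a, ⟨fun h0 => ha.ne_zero (h0 ▸ map_zero _), fun hu => ha.not_isUnit (hu.map _),
      fun y z h => ?_⟩, Associated.refl _⟩
    have hyz := map_dvd (algebraMap R L) h
    rw [map_mul] at hyz
    exact (ha.dvd_or_dvd hyz).imp hcancel hcancel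

/-- Nagata's criterion. -/
theorem uniqueFactorizationMonoid_of_isLocalizationAway_prod [IsDomain R] [IsNoetherianRing R]
    {s : Multiset R} (hs : ∀ p ∈ s, Prime p) (L : Type*) [CommRing L] [IsDomain L]
    [UniqueFactorizationMonoid L] [Algebra R L] [IsLocalization.Away s.prod L] :
    UniqueFactorizationMonoid R := by
  rw [UniqueFactorizationMonoid.iff_exists_prime_mem_of_isPrime]
  intro P hP0 hP
  by_cases hsP : s.prod ∈ P
  · obtain ⟨p, hp, hpP⟩ := hP.multiset_prod_mem_iff_exists_mem s |>.1 hsP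
    exact ⟨p, hpP, hs p hp⟩
  have hdisj : Disjoint (Submonoid.powers s.prod : Set R) P :=
    (Ideal.disjoint_powers_iff_notMem _ hP.isRadical).2 hsP
  have hPL := IsLocalization.isPrime_of_isPrime_disjoint (.powers s.prod) L P hP hdisj
  have hcomap := IsLocalization.under_map_of_isPrime_disjoint (.powers s.prod) L hP hdisj
  have hPL0 : P.map (algebraMap R L) ≠ ⊥ := by
    intro h0
    have hs0 : s.prod ≠ 0 := Multiset.prod_ne_zero fun h => (hs 0 h).ne_zero rfl
    have hinj := IsLocalization.injective L (powers_le_nonZeroDivisors_of_noZeroDivisors hs0)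
    exact hP0 ((Ideal.map_eq_bot_iff_of_injective hinj).1 h0)
  obtain ⟨π, hπP, hπ⟩ := hPL.exists_mem_prime_of_ne_bot hPL0
  have hassoc := IsLocalization.Away.associated_sec_fst s.prod π
  obtain ⟨q, hq, hqπ⟩ := exists_prime_associated_algebraMap hs (hassoc.symm.prime hπ)
  have hqP : algebraMap R L q ∈ P.map (algebraMap R L) :=
    Ideal.mem_of_dvd _ (hqπ.trans hassoc).dvd' hπP
  exact ⟨q, hcomap ▸ hqP, hq⟩

end Nagata

section LinearQuotient

variable {A : Type*} [CommRing A] {ι κ τ : Type*} [Fintype τ] [Fintype ι] [DecidableEq ι]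
  {M : Matrix ι τ A}

namespace LinearQuotient

variable (e : ι ⊕ κ ≃ τ)

theorem ker_eq_map_of_comp_freePart {P : Ideal A} {F : Type*} [CommRing F] [Algebra A F]
    (hP : RingHom.ker (algebraMap A F) = P)
    (hreg : ∀ r : LinearQuotient M,
      algebraMap A _ (columnMinor M (e ∘ Sum.inl)) * r ∈ P.map (algebraMap A (LinearQuotient M)) →
        r ∈ P.map (algebraMap A (LinearQuotient M)))
    {g : LinearQuotient M →ₐ[A] MvPolynomial κ F}
    (hg : ∀ b, g (freePart M (e ∘ Sum.inr) b) = map (algebraMap A F) b) :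
    RingHom.ker g = P.map (algebraMap A (LinearQuotient M)) := by
  refine le_antisymm (fun r hr => ?_) (Ideal.map_le_iff_le_comap.2 fun a ha => ?_)
  · obtain ⟨n, b, hb⟩ := exists_columnMinor_pow_mul_eq_freePart e r
    have hb0 : map (algebraMap A F) b = 0 := by
      rw [← hg, ← hb, map_mul, (show g r = 0 from hr), mul_zero]
    have hbP : b ∈ P.map (C : A →+* MvPolynomial κ A) := by
      refine mem_map_C_iff.2 fun m => ?_
      rw [← hP, RingHom.mem_ker, ← coeff_map, hb0, coeff_zero]
    have hmem : freePart M (e ∘ Sum.inr) b ∈ P.map (algebraMap A (LinearQuotient M)) := by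
      rw [← (freePart M (e ∘ Sum.inr)).comp_algebraMap, ← Ideal.map_map]
      exact Ideal.mem_map_of_mem _ hbP
    rw [← hb] at hmem
    clear hb hr
    induction n with
    | zero => rwa [pow_zero, one_mul] at hmem
    | succ n ih => exact ih (hreg _ (by rwa [← mul_assoc, ← pow_succ']))
  · have ha0 : algebraMap A F a = 0 := by rwa [← RingHom.mem_ker, hP]
    rw [Ideal.mem_comap, RingHom.mem_ker, AlgHom.commutes, MvPolynomial.algebraMap_apply, ha0, C_0]

theorem map_isPrime {P : Ideal A} (hP : P.IsPrime)
    (hreg : ∀ r : LinearQuotient M,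
      algebraMap A _ (columnMinor M (e ∘ Sum.inl)) * r ∈ P.map (algebraMap A (LinearQuotient M)) →
        r ∈ P.map (algebraMap A (LinearQuotient M))) :
    (P.map (algebraMap A (LinearQuotient M))).IsPrime := by
  have hδ : columnMinor M (e ∘ Sum.inl) ∉ P := by
    intro h
    have hone := hreg 1 (Ideal.mul_mem_right _ _ (Ideal.mem_map_of_mem _ h))
    rw [← map_one (algebraMap A _), algebraMap_mem_map_iff] at hone
    exact hP.one_notMem hone
  have hunit : IsUnit (algebraMap A P.ResidueField (columnMinor M (e ∘ Sum.inl))) :=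
    isUnit_iff_ne_zero.2 fun h => hδ (P.algebraMap_residueField_eq_zero.1 h)
  obtain ⟨g, hg⟩ := exists_algHom_comp_freePart e hunit
  rw [← ker_eq_map_of_comp_freePart e P.ker_algebraMap_residueField hreg hg]
  exact RingHom.ker_isPrime _

theorem exists_isLocalization_away (F : Type*) [CommRing F] [Algebra A F]
    [IsLocalization.Away (columnMinor M (e ∘ Sum.inl)) F] :
    ∃ _ : Algebra (LinearQuotient M) (MvPolynomial κ F), IsLocalization.Away
      (algebraMap A (LinearQuotient M) (columnMinor M (e ∘ Sum.inl))) (MvPolynomial κ F) := by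
  set δ := columnMinor M (e ∘ Sum.inl)
  have hunit : IsUnit (algebraMap A F δ) := IsLocalization.Away.algebraMap_isUnit δ
  obtain ⟨g, hg⟩ := exists_algHom_comp_freePart (M := M) e hunit
  have hgδ : g (algebraMap A _ δ) = map (algebraMap A F) (C δ) := by
    rw [AlgHom.commutes, map_C, MvPolynomial.algebraMap_apply]
  let := algebraMvPolynomial (σ := κ) (R := A) (S := F)
  have hloc : IsLocalization.Away (C δ : MvPolynomial κ A) (MvPolynomial κ F) := by
    rw [IsLocalization.Away, ← Submonoid.map_powers]
    exact MvPolynomial.isLocalization _ _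
  refine ⟨g.toAlgebra, ?_⟩
  let := g.toAlgebra
  refine .mk _ ?_ (fun s => ?_) fun r r' h => ?_
  · change IsUnit (g _)
    rw [hgδ, map_C]
    exact hunit.map C
  · obtain ⟨n, b, hb⟩ := IsLocalization.Away.surj (C δ : MvPolynomial κ A) s
    refine ⟨n, freePart M (e ∘ Sum.inr) b, ?_⟩
    change s * g _ ^ n = g _
    rw [hgδ, hg]
    exact hb
  · replace h : g (r - r') = 0 := (map_sub g r r').trans (sub_eq_zero.2 h)
    obtain ⟨n, b, hb⟩ := exists_columnMinor_pow_mul_eq_freePart e (r - r')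
    have hb0 : algebraMap (MvPolynomial κ A) (MvPolynomial κ F) b =
        algebraMap (MvPolynomial κ A) _ 0 := by
      rw [map_zero]
      change map (algebraMap A F) b = 0
      rw [← hg, ← hb, map_mul, h, mul_zero]
    obtain ⟨m, hm⟩ := IsLocalization.Away.exists_of_eq (C δ : MvPolynomial κ A) hb0
    refine ⟨m + n, sub_eq_zero.1 ?_⟩
    have hmb := congrArg (freePart M (e ∘ Sum.inr)) hm
    rw [mul_zero, map_mul, map_pow, map_zero, ← hb, ← mul_assoc] at hmb
    rw [← mul_sub, pow_add, ← hmb]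
    exact congrArg (· ^ m * _ * _) ((freePart M (e ∘ Sum.inr)).commutes δ).symm

theorem prime_algebraMap [IsDomain A] [IsDomain (LinearQuotient M)] {a : A} (ha : Prime a)
    (hreg : ∀ r : LinearQuotient M, algebraMap A _ a ∣
      algebraMap A _ (columnMinor M (e ∘ Sum.inl)) * r → algebraMap A _ a ∣ r) :
    Prime (algebraMap A (LinearQuotient M) a) := by
  have ha0 : algebraMap A (LinearQuotient M) a ≠ 0 := fun h =>
    ha.ne_zero (algebraMap_mem_map_iff (M := M) (I := ⊥).1 (by rw [h]; exact zero_mem _))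
  have hspan : (Ideal.span {a}).map (algebraMap A (LinearQuotient M)) =
      Ideal.span {algebraMap A (LinearQuotient M) a} := by rw [Ideal.map_span, Set.image_singleton]
  rw [← Ideal.span_singleton_prime ha0, ← hspan]
  refine map_isPrime e ((Ideal.span_singleton_prime ha.ne_zero).2 ha) ?_
  simpa only [hspan, Ideal.mem_span_singleton] using hreg

theorem prime_algebraMap_of_dvd [IsDomain A] [IsDomain (LinearQuotient M)] {δ a : A}
    (hδ : algebraMap A (LinearQuotient M) δ ≠ 0) (ha : Prime a) (haδ : a ∣ δ)
    (hreg : ∀ r : LinearQuotient M, algebraMap A _ δ ∣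
      algebraMap A _ (columnMinor M (e ∘ Sum.inl)) * r → algebraMap A _ δ ∣ r) :
    Prime (algebraMap A (LinearQuotient M) a) := by
  refine prime_algebraMap e ha fun r hr => ?_
  obtain ⟨b, rfl⟩ := haδ
  rw [map_mul] at hδ
  rw [map_mul, mul_comm] at hreg
  refine (mul_dvd_mul_iff_left (right_ne_zero_of_mul hδ)).1 (hreg _ ?_)
  rw [mul_left_comm]
  exact mul_dvd_mul_left _ hr

theorem isDomain (hA : IsDomain A)
    (hreg : ∀ r : LinearQuotient M,
      algebraMap A _ (columnMinor M (e ∘ Sum.inl)) * r = 0 → r = 0) :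
    IsDomain (LinearQuotient M) := by
  have hbot : (⊥ : Ideal (LinearQuotient M)).IsPrime := by
    rw [← Ideal.map_bot (f := algebraMap A (LinearQuotient M))]
    refine map_isPrime e Ideal.isPrime_bot ?_
    simpa only [Ideal.map_bot, Ideal.mem_bot] using hreg
  exact IsDomain.of_bot_isPrime _

theorem exists_sumEquiv_comp_inl_eq.{u, v} {ι : Type u} {τ : Type v} {c : ι → τ}
    (hc : Function.Injective c) :
    ∃ (κ : Type v) (e : ι ⊕ κ ≃ τ), e ∘ Sum.inl = c := by
  classical exact ⟨↥(Set.range c)ᶜ, (Equiv.sumCongr (Equiv.ofInjective c hc) (Equiv.refl _)).trans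
    (Equiv.Set.sumCompl _), rfl⟩

theorem isUFD_of_columnMinors [IsNoetherianRing A] (hA : IsUFD A)
    {c c' : ι → τ} (hc : Function.Injective c) (hc' : Function.Injective c')
    (hreg : ∀ r : LinearQuotient M, algebraMap A _ (columnMinor M c) * r = 0 → r = 0)
    (hreg' : ∀ r : LinearQuotient M, algebraMap A _ (columnMinor M c) ∣
      algebraMap A _ (columnMinor M c') * r → algebraMap A _ (columnMinor M c) ∣ r) :
    IsUFD (LinearQuotient M) := by
  obtain ⟨_, _⟩ := hA
  obtain ⟨κ, e, rfl⟩ := exists_sumEquiv_comp_inl_eq hc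
  obtain ⟨κ', e', rfl⟩ := exists_sumEquiv_comp_inl_eq hc'
  set δ := columnMinor M (e ∘ Sum.inl)
  have := isDomain e ‹_› hreg
  have hδ : algebraMap A (LinearQuotient M) δ ≠ 0 := fun h =>
    one_ne_zero (hreg 1 (by rw [mul_one, h]))
  have hδ0 : δ ≠ 0 := fun h => hδ (by rw [h, map_zero])
  obtain ⟨s, hs, hsδ⟩ := UniqueFactorizationMonoid.exists_prime_factors δ hδ0
  have hprime : ∀ q ∈ s.map (algebraMap A (LinearQuotient M)), Prime q := by
    intro q hq
    obtain ⟨a, ha, rfl⟩ := Multiset.mem_map.1 hq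
    exact prime_algebraMap_of_dvd e' hδ (hs a ha) ((Multiset.dvd_prod ha).trans hsδ.dvd) hreg'
  let F := Localization.Away δ
  have : IsDomain F := IsLocalization.Away.isDomain F hδ0
  have : UniqueFactorizationMonoid F := inferInstance
  obtain ⟨_, hloc⟩ := exists_isLocalization_away (M := M) e F
  have hassoc : Associated (algebraMap A (LinearQuotient M) δ)
      (s.map (algebraMap A (LinearQuotient M))).prod := by
    rw [← map_multiset_prod]
    exact hsδ.symm.map (algebraMap A (LinearQuotient M))
  have := IsLocalization.Away.of_associated (S := MvPolynomial κ F) hassoc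
  exact ⟨‹_›, uniqueFactorizationMonoid_of_isLocalizationAway_prod hprime (MvPolynomial κ F)⟩

end LinearQuotient

end LinearQuotient

section LeadingTerms

open scoped MonomialOrder

variable {σ R : Type*} [CommRing R] {m : MonomialOrder σ} {B : Set (MvPolynomial σ R)}

theorem finsupp_le_of_le_add_of_disjoint {α : Type*} {a b c : α →₀ ℕ} (h : c ≤ a + b)
    (hcb : Disjoint c.support b.support) : c ≤ a := by
  intro s
  by_cases hs : s ∈ b.support
  · rw [Finsupp.notMem_support_iff.1 (Finset.disjoint_right.1 hcb hs)]
    exact Nat.zero_le _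
  · simpa [Finsupp.notMem_support_iff.1 hs] using h s

/-- The hypothesis of Buchberger's product criterion: the leading coefficients of the members
of `B` are units and their leading monomials are pairwise coprime. -/
structure CoprimeLeadingTerms (m : MonomialOrder σ) (B : Set (MvPolynomial σ R)) : Prop where
  isUnit_leadingCoeff : ∀ b ∈ B, IsUnit (m.leadingCoeff b)
  disjoint : B.Pairwise fun f g => Disjoint (m.degree f).support (m.degree g).support

namespace CoprimeLeadingTerms

theorem mono {B' : Set (MvPolynomial σ R)} (hB : CoprimeLeadingTerms m B) (h : B' ⊆ B) :
    CoprimeLeadingTerms m B' :=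
  ⟨fun b hb => hB.isUnit_leadingCoeff b (h hb), hB.disjoint.mono h⟩

protected theorem insert (hB : CoprimeLeadingTerms m B) {f : MvPolynomial σ R}
    (hf : IsUnit (m.leadingCoeff f))
    (hfB : ∀ b ∈ B, Disjoint (m.degree b).support (m.degree f).support) :
    CoprimeLeadingTerms m (insert f B) :=
  ⟨Set.forall_mem_insert.2 ⟨hf, hB.isUnit_leadingCoeff⟩,
    Set.pairwise_insert.2
      ⟨hB.disjoint, fun b hb _ => ⟨(hfB b hb).symm, hfB b hb⟩⟩⟩

theorem exists_remainder (hB : CoprimeLeadingTerms m B) (g : MvPolynomial σ R) :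
    ∃ r, g - r ∈ Ideal.span B ∧ ∀ c ∈ r.support, ∀ b ∈ B, ¬ m.degree b ≤ c := by
  obtain ⟨q, r, rfl, -, hr⟩ := m.div_set hB.isUnit_leadingCoeff g
  refine ⟨r, ?_, hr⟩
  rw [add_sub_cancel_right, Finsupp.linearCombination_apply]
  exact Submodule.sum_mem _ fun b _ => Ideal.mul_mem_left _ _ (Ideal.subset_span b.2)

theorem not_degree_le_degree_mul {f r : MvPolynomial σ R}
    (hf : IsUnit (m.leadingCoeff f))
    (hr0 : r ≠ 0) (hr : ∀ c ∈ r.support, ∀ b ∈ B, ¬ m.degree b ≤ c) {b : MvPolynomial σ R}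
    (hb : b ∈ B) (hbf : Disjoint (m.degree b).support (m.degree f).support) :
    ¬ m.degree b ≤ m.degree (r * f) := by
  rw [m.degree_mul_of_right_mem_nonZeroDivisors hr0 hf.mem_nonZeroDivisors]
  exact fun hle =>
    hr _ (m.degree_mem_support hr0) b hb (finsupp_le_of_le_add_of_disjoint hle hbf)

theorem exists_degree_le_add {f : MvPolynomial σ R} (hB : CoprimeLeadingTerms m (insert f B))
    (hfB : f ∉ B) (ih : ∀ g ∈ Ideal.span B, g ≠ 0 → ∃ b ∈ B, m.degree b ≤ m.degree g)
    {g r : MvPolynomial σ R} (hg : g ∈ Ideal.span B)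
    (hr : ∀ c ∈ r.support, ∀ b ∈ B, ¬ m.degree b ≤ c) (hne : g + r * f ≠ 0) :
    ∃ b ∈ insert f B, m.degree b ≤ m.degree (g + r * f) := by
  have hf := hB.isUnit_leadingCoeff f (Set.mem_insert f _)
  by_cases hr0 : r = 0
  · rw [hr0, zero_mul, add_zero] at hne ⊢
    exact (ih g hg hne).imp fun _ => And.imp_left (Set.mem_insert_of_mem f)
  have hf_le : m.degree f ≤ m.degree (r * f) := by
    rw [m.degree_mul_of_right_mem_nonZeroDivisors hr0 hf.mem_nonZeroDivisors]
    exact le_add_self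
  by_cases hg0 : g = 0
  · rw [hg0, zero_add]
    exact ⟨f, Set.mem_insert f B, hf_le⟩
  obtain ⟨a, ha, hag⟩ := ih g hg hg0
  have hdegree : m.degree g ≠ m.degree (r * f) := fun he =>
    not_degree_le_degree_mul hf hr0 hr ha
      (hB.disjoint (Set.mem_insert_of_mem f ha) (Set.mem_insert f _)
        (ne_of_mem_of_not_mem ha hfB)) (he ▸ hag)
  rcases lt_or_gt_of_ne (m.toSyn.injective.ne hdegree) with hlt | hlt
  · rw [m.degree_add_eq_right_of_lt hlt]
    exact ⟨f, Set.mem_insert f B, hf_le⟩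
  · rw [m.degree_add_of_lt hlt]
    exact ⟨a, Set.mem_insert_of_mem f ha, hag⟩

/-- Buchberger's product criterion: `B` is a Gröbner basis of the ideal it spans. -/
theorem exists_degree_le (hB : CoprimeLeadingTerms m B) {h : MvPolynomial σ R}
    (hh : h ∈ Ideal.span B) (hne : h ≠ 0) : ∃ b ∈ B, m.degree b ≤ m.degree h := by
  classical
  obtain ⟨P, hPB, hP⟩ := Submodule.mem_span_finite_of_mem_span hh
  suffices ∃ b ∈ (P : Set (MvPolynomial σ R)), m.degree b ≤ m.degree h from
    this.imp fun b => And.imp_left (@hPB b)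
  replace hB := hB.mono hPB
  clear hPB hh
  induction P using Finset.induction_on generalizing h with
  | empty => simp [hne] at hP
  | insert f P hfP ih =>
    rw [Finset.coe_insert] at hB hP ⊢
    have hBP := hB.mono (Set.subset_insert f P)
    obtain ⟨q, z, hz, rfl⟩ := Ideal.mem_span_insert.1 hP
    obtain ⟨r, hqr, hr⟩ := hBP.exists_remainder q
    obtain ⟨g, hg, hgr⟩ : ∃ g ∈ Ideal.span (P : Set (MvPolynomial σ R)),
        q * f + z = g + r * f :=
      ⟨z + (q - r) * f, add_mem hz (Ideal.mul_mem_right _ _ hqr), by ring⟩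
    rw [hgr] at hne ⊢
    exact exists_degree_le_add hB hfP (fun g hg hg0 => ih hg0 hg hBP) hg hr hne

theorem mem_span_of_mul_mem_span (hB : CoprimeLeadingTerms m B) {f g : MvPolynomial σ R}
    (hf : IsUnit (m.leadingCoeff f))
    (hfB : ∀ b ∈ B, Disjoint (m.degree b).support (m.degree f).support)
    (h : g * f ∈ Ideal.span B) : g ∈ Ideal.span B := by
  obtain ⟨r, hgr, hr⟩ := hB.exists_remainder g
  by_cases hr0 : r = 0
  · rwa [hr0, sub_zero] at hgr
  have hrf : r * f ∈ Ideal.span B := by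
    rw [← sub_sub_cancel g r, sub_mul]
    exact sub_mem h (Ideal.mul_mem_right _ _ hgr)
  have hrf0 : r * f ≠ 0 :=
    fun h0 => hr0 ((mul_right_mem_nonZeroDivisors_eq_zero_iff
      (m.mem_nonZeroDivisors_of_leadingCoeff_mem_nonZeroDivisors hf.mem_nonZeroDivisors)).1 h0)
  obtain ⟨b, hb, hle⟩ := hB.exists_degree_le hrf hrf0
  exact absurd hle (not_degree_le_degree_mul hf hr0 hr hb (hfB b hb))

end CoprimeLeadingTerms

section SumMonomial

variable {ι : Type*} [Fintype ι] {μ : ι → σ →₀ ℕ} {c : ι → R} {k₀ : ι}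

theorem coeff_sum_monomial (hlt : ∀ k ≠ k₀, μ k ≺[m] μ k₀) :
    coeff (μ k₀) (∑ k, monomial (μ k) (c k)) = c k₀ := by
  classical
  rw [coeff_sum, Finset.sum_eq_single k₀]
  · rw [coeff_monomial, if_pos rfl]
  · exact fun k _ hk => by rw [coeff_monomial, if_neg (ne_of_apply_ne m.toSyn (hlt k hk).ne)]
  · simp

theorem degree_sum_monomial (hc : c k₀ ≠ 0) (hlt : ∀ k ≠ k₀, μ k ≺[m] μ k₀) :
    m.degree (∑ k, monomial (μ k) (c k)) = μ k₀ := by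
  classical
  refine m.toSyn.injective (le_antisymm (m.degree_le_iff.2 fun a ha => ?_) (m.le_degree ?_))
  · obtain ⟨k, -, hk⟩ := Finset.mem_biUnion.1 (support_sum ha)
    obtain rfl := Finset.mem_singleton.1 (support_monomial_subset hk)
    obtain rfl | hk := eq_or_ne k k₀
    · exact le_rfl
    · exact (hlt k hk).le
  · rwa [mem_support_iff, coeff_sum_monomial hlt]

theorem leadingCoeff_sum_monomial (hc : c k₀ ≠ 0) (hlt : ∀ k ≠ k₀, μ k ≺[m] μ k₀) :
    m.leadingCoeff (∑ k, monomial (μ k) (c k)) = c k₀ := by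
  rw [MonomialOrder.leadingCoeff, degree_sum_monomial hc hlt, coeff_sum_monomial hlt]

end SumMonomial

/-- `m` sorts monomials of equal degree by their weight for `W`. -/
def RefinesWeight {Γ : Type*} [AddCommMonoid Γ] [Preorder Γ] (m : MonomialOrder σ) (W : σ → Γ) :
    Prop :=
  ∀ ⦃a b : σ →₀ ℕ⦄, a.degree = b.degree → Finsupp.weight W a < Finsupp.weight W b → a ≺[m] b

/-- Compare degrees first, so that the order is a well-order by Dickson's lemma whatever the
signs of the weights; ties are broken by the lexicographic order. -/
theorem exists_refinesWeight.{u, v} {σ : Type u} [Finite σ] {Γ : Type v} [AddCommMonoid Γ]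
    [LinearOrder Γ] [IsOrderedCancelAddMonoid Γ] (W : σ → Γ) :
    ∃ m : MonomialOrder.{u, max u v} σ, RefinesWeight m W := by
  have := Fintype.ofFinite σ
  let : LinearOrder σ := LinearOrder.lift' (Fintype.equivFin σ) (Equiv.injective _)
  let m₀ : MonomialOrder σ := MonomialOrder.lex
  let φ : (σ →₀ ℕ) →+ ℕ ×ₗ Γ ×ₗ m₀.syn :=
    { toFun a := toLex (a.degree, toLex (Finsupp.weight W a, m₀.toSyn a))
      map_zero' := by simp only [map_zero]; rfl
      map_add' a b := by simp only [map_add]; rfl }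
  have hφ : Function.Injective φ := fun a b hab => m₀.toSyn.injective
    (congrArg (fun x => (ofLex (ofLex x).2).2) hab)
  have hφ_degree {a b : σ →₀ ℕ} (h : a.degree < b.degree) : φ a < φ b :=
    Prod.Lex.toLex_lt_toLex.2 (Or.inl h)
  let toSyn : (σ →₀ ℕ) ≃+ AddMonoidHom.mrange φ := AddEquiv.ofBijective φ.mrangeRestrict
    ⟨fun a b hab => hφ (congrArg Subtype.val hab), φ.mrangeRestrict_surjective⟩
  have hmono : Monotone toSyn := fun a b hab => by
    change φ a ≤ φ b
    obtain ⟨c, rfl⟩ := exists_add_of_le hab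
    obtain rfl | hc := eq_or_ne c 0
    · rw [add_zero]
    · refine (hφ_degree ?_).le
      rw [map_add]
      exact Nat.lt_add_of_pos_right (Nat.pos_of_ne_zero ((Finsupp.degree_eq_zero_iff c).not.2 hc))
  have := hmono.wellQuasiOrderedLE_of_wellQuasiOrderedLE_of_surjective toSyn.surjective
  exact ⟨{ syn := AddMonoidHom.mrange φ, toSyn, toSyn_monotone := hmono }, fun a b hab hW =>
    Prod.Lex.toLex_lt_toLex.2 (Or.inr ⟨hab, Prod.Lex.toLex_lt_toLex.2 (Or.inl hW)⟩)⟩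

end LeadingTerms

section WeightedColumns

open scoped MonomialOrder

theorem toLex_single_lt_toLex_single {ι : Type*} [LinearOrder ι] {k l : ι} {a b : ℝ}
    (hkl : k ≠ l) (ha : k < l → a < 0) (hb : 0 < b) :
    toLex (Pi.single k a : ι → ℝ) < toLex (Pi.single l b) := by
  obtain hlt | hgt := hkl.lt_or_gt
  · refine ⟨k, fun j hj => ?_, ?_⟩
    · simp [hj.ne, (hj.trans hlt).ne]
    · simpa [hkl] using ha hlt
  · refine ⟨l, fun j hj => ?_, ?_⟩
    · simp [hj.ne, (hj.trans hgt).ne]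
    · simpa [hkl.symm] using hb

theorem exists_lt_apply_of_ne_one {ι : Type*} [LinearOrder ι] [WellFoundedLT ι]
    {s : Equiv.Perm ι} (hs : s ≠ 1) : ∃ i, (∀ j < i, s j = j) ∧ i < s i := by
  obtain ⟨i, hi, hmin⟩ := wellFounded_lt.has_min {i | s i ≠ i} (DFunLike.ne_iff.1 hs)
  have hfix : ∀ j < i, s j = j := fun j hj => not_not.1 fun h => hmin j h hj
  exact ⟨i, hfix, (Ne.lt_or_gt hi).resolve_left fun h => hi (s.injective (hfix _ h))⟩

variable {K : Type*} [CommRing K] {V : Type*} {d : ℕ} {w : Fin d → V → ℝ}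

/-- The weight of the variable `y_{vk}`: the real `w k v` in coordinate `k`, so that monomials
are compared column by column. -/
def columnWeight (w : Fin d → V → ℝ) (s : V × Fin d) : Lex (Fin d → ℝ) :=
  toLex (Pi.single s.2 (w s.2 s.1))

theorem weight_columnWeight_single (v : V) (k : Fin d) :
    Finsupp.weight (columnWeight w) (Finsupp.single (v, k) 1) = toLex (Pi.single k (w k v)) := by
  rw [Finsupp.weight_single, one_smul, columnWeight]

theorem weight_columnWeight_sum_apply {ι : Type*} [Fintype ι] (u : ι → V) (c : ι → Fin d)
    (l : Fin d) :
    ofLex (Finsupp.weight (columnWeight w) (∑ i, Finsupp.single (u i, c i) 1)) l =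
      ∑ i, if c i = l then w l (u i) else 0 := by
  simp only [map_sum, weight_columnWeight_single]
  change (∑ i, (Pi.single (c i) (w (c i) (u i)) : Fin d → ℝ)) l = _
  simp only [Finset.sum_apply, Pi.single_apply, eq_comm (a := l)]
  exact Finset.sum_congr rfl fun i _ => by split_ifs with h <;> simp [h]

/-- `l` is the first index at which `w` is positive on `{i, j}`, and `w` is negative on `{i, j}`
at all smaller indices. -/
def IsFirstPositive {ι : Type*} [LT ι] (w : ι → V → ℝ) (i j : V) (l : ι) : Prop :=
  0 < w l i + w l j ∧ ∀ k < l, w k i + w k j < 0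

theorem IsFirstPositive.symm {ι : Type*} [LT ι] {w : ι → V → ℝ} {i j : V} {l : ι}
    (h : IsFirstPositive w i j l) : IsFirstPositive w j i l := by
  simpa only [IsFirstPositive, add_comm] using h

theorem IsFirstPositive.unique {ι : Type*} [LinearOrder ι] {w : ι → V → ℝ} {i j : V} {l l' : ι}
    (h : IsFirstPositive w i j l) (h' : IsFirstPositive w i j l') : l = l' := by
  by_contra hne
  obtain hlt | hlt := Ne.lt_or_gt hne
  · exact (h'.2 l hlt).not_gt h.1
  · exact (h.2 l' hlt).not_gt h'.1

theorem IsFirstPositive.append_left {p q : ℕ} {w : Fin p → V → ℝ} (w' : Fin q → V → ℝ) {i j : V}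
    {l : Fin p} (h : IsFirstPositive w i j l) :
    IsFirstPositive (Fin.append w w') i j (Fin.castAdd q l) := by
  refine ⟨by simpa using h.1, fun k hk => ?_⟩
  induction k using Fin.addCases with
  | left k => simpa using h.2 k hk
  | right k => exact absurd hk (by
    rw [Fin.lt_def, Fin.val_natAdd, Fin.val_castAdd]; omega)

variable {m : MonomialOrder (V × Fin d)}

variable (K d) in
/-- The generator `f_{ij} = ∑ k, y_{ik} y_{jk}` of the LSS ideal. -/
noncomputable def edgeForm (i j : V) : MvPolynomial (V × Fin d) K :=
  ∑ k, X (i, k) * X (j, k)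

theorem edgeForm_comm (i j : V) : edgeForm K d i j = edgeForm K d j i := by
  simp only [edgeForm, mul_comm]

theorem edgeForm_eq_sum_monomial (i j : V) : edgeForm K d i j =
    ∑ k, monomial (Finsupp.single (i, k) 1 + Finsupp.single (j, k) 1) 1 := by
  simp only [edgeForm, X, monomial_mul, one_mul]

theorem RefinesWeight.edge_lt (hm : RefinesWeight m (columnWeight w)) {i j : V} {k l : Fin d}
    (hl : IsFirstPositive w i j l) (hk : k ≠ l) :
    Finsupp.single (i, k) 1 + Finsupp.single (j, k) 1 ≺[m]
      Finsupp.single (i, l) 1 + Finsupp.single (j, l) 1 := by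
  refine hm (by simp) ?_
  simp only [map_add, weight_columnWeight_single, ← toLex_add, ← Pi.single_add]
  exact toLex_single_lt_toLex_single hk (hl.2 k) hl.1

theorem RefinesWeight.degree_edgeForm [Nontrivial K] (hm : RefinesWeight m (columnWeight w))
    {i j : V} {l : Fin d} (hl : IsFirstPositive w i j l) :
    m.degree (edgeForm K d i j) = Finsupp.single (i, l) 1 + Finsupp.single (j, l) 1 :=
  edgeForm_eq_sum_monomial (K := K) i j ▸
    degree_sum_monomial one_ne_zero fun _ hk => hm.edge_lt hl hk

theorem RefinesWeight.leadingCoeff_edgeForm [Nontrivial K] (hm : RefinesWeight m (columnWeight w))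
    {i j : V} {l : Fin d} (hl : IsFirstPositive w i j l) :
    m.leadingCoeff (edgeForm K d i j) = 1 :=
  edgeForm_eq_sum_monomial (K := K) i j ▸
    leadingCoeff_sum_monomial one_ne_zero fun _ hk => hm.edge_lt hl hk

variable {ι : Type*}

variable (K d) in
/-- The matrix of variables whose rows are the vectors `y_{u i}`. -/
noncomputable def variableMatrix (u : ι → V) : Matrix ι (Fin d) (MvPolynomial (V × Fin d) K) :=
  Matrix.of fun i k => X (u i, k)

variable [Fintype ι] [LinearOrder ι] {u : ι → V} {c : ι → Fin d}

theorem columnMinor_variableMatrix_eq_sum_monomial (u : ι → V) (c : ι → Fin d) :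
    columnMinor (variableMatrix K d u) c = ∑ s : Equiv.Perm ι,
      monomial (∑ i, Finsupp.single (u (s i), c i) 1) ((Equiv.Perm.sign s : ℤ) : K) := by
  rw [columnMinor, Matrix.det_apply]
  refine Finset.sum_congr rfl fun s _ => ?_
  have hprod : ∏ i, (X (u (s i), c i) : MvPolynomial (V × Fin d) K) =
      monomial (∑ i, Finsupp.single (u (s i), c i) 1) 1 := by
    rw [monomial_sum_one]; rfl
  change _ • ∏ i, (X (u (s i), c i) : MvPolynomial (V × Fin d) K) = _
  rw [hprod, Units.smul_def, smul_monomial, zsmul_one]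

theorem RefinesWeight.minor_lt (hm : RefinesWeight m (columnWeight w)) (hc : StrictMono c)
    (hw : ∀ i, StrictAnti (w (c i) ∘ u)) {s : Equiv.Perm ι} (hs : s ≠ 1) :
    ∑ i, Finsupp.single (u (s i), c i) 1 ≺[m] ∑ i, Finsupp.single (u i, c i) 1 := by
  obtain ⟨i₀, hfix, hlt⟩ := exists_lt_apply_of_ne_one hs
  have hweight (u : ι → V) := weight_columnWeight_sum_apply (w := w) u c
  refine hm (by simp) ⟨c i₀, fun l hl => ?_, ?_⟩
  · refine (hweight (u ∘ s) l).trans (Eq.trans ?_ (hweight u l).symm)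
    refine Finset.sum_congr rfl fun i _ => ?_
    split_ifs with hi
    · rw [Function.comp_apply, hfix i (hc.lt_iff_lt.1 (hi ▸ hl))]
    · rfl
  · refine (hweight (u ∘ s) _).trans_lt (lt_of_lt_of_eq ?_ (hweight u _).symm)
    simp only [hc.injective.eq_iff, Finset.sum_ite_eq', Finset.mem_univ, if_true]
    exact hw i₀ hlt

theorem RefinesWeight.degree_columnMinor [Nontrivial K] (hm : RefinesWeight m (columnWeight w))
    (hc : StrictMono c) (hw : ∀ i, StrictAnti (w (c i) ∘ u)) :
    m.degree (columnMinor (variableMatrix K d u) c) = ∑ i, Finsupp.single (u i, c i) 1 := by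
  rw [columnMinor_variableMatrix_eq_sum_monomial]
  exact degree_sum_monomial (k₀ := 1) (by simp) fun s hs => hm.minor_lt hc hw hs

theorem RefinesWeight.leadingCoeff_columnMinor [Nontrivial K]
    (hm : RefinesWeight m (columnWeight w)) (hc : StrictMono c)
    (hw : ∀ i, StrictAnti (w (c i) ∘ u)) :
    m.leadingCoeff (columnMinor (variableMatrix K d u) c) = 1 := by
  rw [columnMinor_variableMatrix_eq_sum_monomial]
  exact (leadingCoeff_sum_monomial (k₀ := 1) (by simp) fun s hs => hm.minor_lt hc hw hs).trans
    (by simp)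

end WeightedColumns

section SeparatesEdges

variable {V : Type*}

/-- The weights `w` witness a positive matching decomposition of `G`: every edge has a first
index at which it is positive, and the edges sharing this index form a matching. -/
structure SeparatesEdges {ι : Type*} [LT ι] (G : SimpleGraph V) (w : ι → V → ℝ) : Prop where
  exists_isFirstPositive : ∀ ⦃i j⦄, G.Adj i j → ∃ l, IsFirstPositive w i j l
  eq_of_isFirstPositive : ∀ ⦃i j j' l⦄, G.Adj i j → G.Adj i j' →
    IsFirstPositive w i j l → IsFirstPositive w i j' l → j = j'

theorem SeparatesEdges.induce {ι : Type*} [LT ι] {G : SimpleGraph V} {w : ι → V → ℝ}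
    (hw : SeparatesEdges G w) (s : Set V) : SeparatesEdges (G.induce s) fun l v => w l v where
  exists_isFirstPositive _ _ hij := hw.exists_isFirstPositive hij
  eq_of_isFirstPositive _ _ _ _ hij hij' hl hl' :=
    Subtype.ext (hw.eq_of_isFirstPositive hij hij' hl hl')

end SeparatesEdges

section Decomposition

variable {V : Type} {G : SimpleGraph V} {p : ℕ}

theorem IsPMDecomposition.exists_separatesEdges {F : Fin p → Set (Sym2 V)}
    (hF : IsPMDecomposition G.edgeSet F) : ∃ w : Fin p → V → ℝ, SeparatesEdges G w := by
  obtain ⟨hunion, hdisj, hmatching⟩ := hF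
  choose hsub hpairwise w hpos hneg using hmatching
  have hfirst {i j : V} {l : Fin p} (hl : s(i, j) ∈ F l) : IsFirstPositive w i j l := by
    refine ⟨hpos l _ hl, fun k hk => hneg k s(i, j) ⟨⟨(hsub l hl).1, ?_⟩, ?_⟩⟩
    · simp only [Set.mem_iUnion, not_exists]
      exact fun k' hk' => Set.disjoint_right.1 (hdisj (hk'.trans hk).ne) hl
    · exact Set.disjoint_right.1 (hdisj hk.ne) hl
  have hmem {i j : V} (hij : G.Adj i j) : ∃ l, s(i, j) ∈ F l := by
    rwa [← Set.mem_iUnion, hunion]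
  have hmem_of_first {i j : V} {l : Fin p} (hij : G.Adj i j) (hl : IsFirstPositive w i j l) :
      s(i, j) ∈ F l := by
    obtain ⟨l', hl'⟩ := hmem hij
    rwa [hl.unique (hfirst hl')]
  refine ⟨w, fun i j hij => (hmem hij).imp fun l hl => hfirst hl, ?_⟩
  intro i j j' l hij hij' hl hl'
  by_contra hne
  exact hpairwise l (hmem_of_first hij hl) (hmem_of_first hij' hl')
    (Sym2.congr_right.not.2 hne) i ⟨Sym2.mem_mk_left _ _, Sym2.mem_mk_left _ _⟩

theorem isPositiveMatching_singleton {E : Set (Sym2 V)} {e : Sym2 V} (he : e ∈ E)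
    (hE : ∀ e ∈ E, ¬ e.IsDiag) : IsPositiveMatching E {e} := by
  classical
  refine ⟨Set.singleton_subset_iff.2 he, Set.pairwise_singleton _ _,
    fun v => if v ∈ e then 1 else -2, ?_, ?_⟩
  · intro x hx
    rw [Set.mem_singleton_iff.1 hx]
    induction e using Sym2.ind with
    | _ a b => simp [edgeWeight]
  · rintro x ⟨hx, hxe⟩
    induction x using Sym2.ind with
    | _ a b =>
      have hab : ¬ (a ∈ e ∧ b ∈ e) := fun h => hxe ((Sym2.mem_and_mem_iff (hE _ hx)).1 h).symm
      simp only [edgeWeight, Sym2.lift_mk]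
      split_ifs with ha hb
      · exact absurd ⟨ha, hb⟩ hab
      all_goals norm_num

theorem exists_isPMDecomposition [Finite V] (G : SimpleGraph V) :
    ∃ (p : ℕ) (F : Fin p → Set (Sym2 V)), IsPMDecomposition G.edgeSet F := by
  let e := (Finite.equivFin G.edgeSet).symm
  have he : Function.Injective fun i => (e i : Sym2 V) := Subtype.val_injective.comp e.injective
  refine ⟨_, fun i => {(e i : Sym2 V)}, ?_, fun i j hij => ?_, fun i => ?_⟩
  · rw [Set.iUnion_singleton_eq_range, ← Function.comp_def, e.surjective.range_comp,
      Subtype.range_coe]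
  · exact Set.disjoint_singleton.2 (he.ne hij)
  · refine isPositiveMatching_singleton ⟨(e i).2, ?_⟩ fun e he => G.not_isDiag_of_mem_edgeSet he.1
    simp only [Set.mem_iUnion, Set.mem_singleton_iff, not_exists]
    exact fun j hj hij => hj.ne (he hij).symm

theorem exists_separatesEdges_pmd [Finite V] (G : SimpleGraph V) :
    ∃ w : Fin (pmd G) → V → ℝ, SeparatesEdges G w := by
  obtain ⟨F, hF⟩ := Nat.sInf_mem (exists_isPMDecomposition G)
  exact hF.exists_separatesEdges

end Decomposition

section Degeneracy

/-- `G` is `k`-degenerate: every nonempty induced subgraph has a vertex of degree at most `k`. -/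
def IsDegenerate {V : Type*} (k : ℕ) (G : SimpleGraph V) : Prop :=
  ∀ s : Set V, s.Nonempty → ∃ v ∈ s, {u | u ∈ s ∧ G.Adj v u}.ncard ≤ k

theorem isDegenerate_degeneracy {V : Type} [Finite V] (G : SimpleGraph V) :
    IsDegenerate (degeneracy G) G := by
  refine Nat.sInf_mem (s := {k | IsDegenerate k G}) ⟨Nat.card V, fun s ⟨v, hv⟩ => ⟨v, hv, ?_⟩⟩
  exact Set.ncard_le_card _

variable {V : Type*} {k : ℕ} {G : SimpleGraph V}

theorem IsDegenerate.induce [Finite V] (hG : IsDegenerate k G) (s : Set V) :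
    IsDegenerate k (G.induce s) := by
  intro t ht
  obtain ⟨_, ⟨v, hv, rfl⟩, hcard⟩ := hG (Subtype.val '' t) (ht.image _)
  refine ⟨v, hv, (Set.ncard_image_of_injective _ Subtype.val_injective).symm.trans_le
    ((Set.ncard_le_ncard ?_ (Set.toFinite _)).trans hcard)⟩
  rintro _ ⟨u, ⟨hu, hvu⟩, rfl⟩
  exact ⟨⟨u, hu, rfl⟩, hvu⟩

theorem IsDegenerate.exists_ncard_neighborSet_le [Nonempty V] (hG : IsDegenerate k G) :
    ∃ v, (G.neighborSet v).ncard ≤ k := by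
  obtain ⟨v, -, hv⟩ := hG Set.univ Set.univ_nonempty
  exact ⟨v, by simpa [SimpleGraph.neighborSet] using hv⟩

end Degeneracy

section RegularMinors

variable {K : Type*} [CommRing K] {V : Type*} {p q : ℕ} {G : SimpleGraph V} {w : Fin p → V → ℝ}
  {w' : Fin q → V → ℝ} {m : MonomialOrder (V × Fin (p + q))}

variable (K G) in
/-- The generators of the LSS ideal. -/
def edgeForms (d : ℕ) : Set (MvPolynomial (V × Fin d) K) :=
  {f | ∃ i j, G.Adj i j ∧ f = edgeForm K d i j}

theorem SeparatesEdges.exists_of_mem_support_degree [Nontrivial K] (hw : SeparatesEdges G w)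
    (hm : RefinesWeight m (columnWeight (Fin.append w w')))
    {f : MvPolynomial (V × Fin (p + q)) K} (hf : f ∈ edgeForms K G (p + q))
    {s : V × Fin (p + q)} (hs : s ∈ (m.degree f).support) :
    ∃ j l, G.Adj s.1 j ∧ IsFirstPositive w s.1 j l ∧ s.2 = Fin.castAdd q l ∧
      f = edgeForm K (p + q) s.1 j := by
  classical
  obtain ⟨i, j, hij, rfl⟩ := hf
  obtain ⟨l, hl⟩ := hw.exists_isFirstPositive hij
  rw [hm.degree_edgeForm (hl.append_left w')] at hs
  obtain hs | hs := Finset.mem_union.1 (Finsupp.support_add hs)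
  · obtain rfl := Finset.mem_singleton.1 (Finsupp.support_single_subset hs)
    exact ⟨j, l, hij, hl, rfl, rfl⟩
  · obtain rfl := Finset.mem_singleton.1 (Finsupp.support_single_subset hs)
    exact ⟨i, l, hij.symm, hl.symm, rfl, edgeForm_comm i j⟩

theorem SeparatesEdges.coprimeLeadingTerms [Nontrivial K] (hw : SeparatesEdges G w)
    (hm : RefinesWeight m (columnWeight (Fin.append w w'))) :
    CoprimeLeadingTerms m (edgeForms K G (p + q)) where
  isUnit_leadingCoeff := by
    rintro _ ⟨i, j, hij, rfl⟩
    obtain ⟨l, hl⟩ := hw.exists_isFirstPositive hij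
    exact (hm.leadingCoeff_edgeForm (K := K) (hl.append_left w')).symm ▸ isUnit_one
  disjoint f hf g hg := by
    contrapose!
    rw [Finset.not_disjoint_iff]
    rintro ⟨s, hsf, hsg⟩
    obtain ⟨j, l, hij, hl, hsl, rfl⟩ := hw.exists_of_mem_support_degree hm hf hsf
    obtain ⟨j', l', hij', hl', hsl', rfl⟩ := hw.exists_of_mem_support_degree hm hg hsg
    obtain rfl := Fin.castAdd_injective p q (hsl.symm.trans hsl')
    rw [hw.eq_of_isFirstPositive hij hij' hl hl']

theorem exists_eq_of_mem_support_sum_single {σ ι : Type*} [Fintype ι] {a : ι → σ} {s : σ}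
    (hs : s ∈ (∑ i, Finsupp.single (a i) 1 : σ →₀ ℕ).support) : ∃ i, s = a i := by
  classical
  obtain ⟨i, -, hi⟩ := Finset.mem_biUnion.1 (Finsupp.support_finsetSum hs)
  exact ⟨i, Finset.mem_singleton.1 (Finsupp.support_single_subset hi)⟩

variable {ι : Type*} [Fintype ι] [LinearOrder ι] {u : ι → V} {b b' : ι → Fin q}

variable (K p) in
/-- The minor of the vectors `y_{u i}` on the columns `b` among the last `q` ones. The first `p`
columns carry the leading monomials of the edge forms. -/
noncomputable def lateMinor (u : ι → V) (b : ι → Fin q) : MvPolynomial (V × Fin (p + q)) K :=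
  columnMinor (variableMatrix K (p + q) u) (Fin.natAdd p ∘ b)

section LeadingMonomials

variable [Nontrivial K] (hm : RefinesWeight m (columnWeight (Fin.append w w')))
  (hw' : ∀ k, StrictAnti (w' k ∘ u))
include hm hw'

theorem degree_lateMinor (hb : StrictMono b) :
    m.degree (lateMinor K p u b) = ∑ i, Finsupp.single (u i, Fin.natAdd p (b i)) 1 :=
  hm.degree_columnMinor ((Fin.strictMono_natAdd p).comp hb) fun i => by
    simpa only [Function.comp_apply, Fin.append_right] using hw' (b i)

theorem isUnit_leadingCoeff_lateMinor (hb : StrictMono b) :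
    IsUnit (m.leadingCoeff (lateMinor K p u b)) := by
  rw [lateMinor, hm.leadingCoeff_columnMinor ((Fin.strictMono_natAdd p).comp hb)]
  · exact isUnit_one
  · simpa only [Function.comp_apply, Fin.append_right] using fun i => hw' (b i)

theorem SeparatesEdges.disjoint_degree_lateMinor (hw : SeparatesEdges G w) (hb : StrictMono b) :
    ∀ f ∈ edgeForms K G (p + q),
      Disjoint (m.degree f).support (m.degree (lateMinor K p u b)).support := by
  intro f hf
  rw [degree_lateMinor hm hw' hb, Finset.disjoint_right]
  intro s hs hsf
  obtain ⟨i, rfl⟩ := exists_eq_of_mem_support_sum_single hs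
  obtain ⟨_, l, -, -, hl, -⟩ := hw.exists_of_mem_support_degree hm hf hsf
  have hval : p + (b i : ℕ) = l := congrArg Fin.val hl
  omega

theorem disjoint_degree_lateMinor_lateMinor (hb : StrictMono b) (hb' : StrictMono b')
    (hu : Function.Injective u) (hne : ∀ i, b i ≠ b' i) :
    Disjoint (m.degree (lateMinor K p u b)).support (m.degree (lateMinor K p u b')).support := by
  rw [degree_lateMinor hm hw' hb, degree_lateMinor hm hw' hb', Finset.disjoint_left]
  intro s hs hs'
  obtain ⟨i, rfl⟩ := exists_eq_of_mem_support_sum_single hs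
  obtain ⟨j, hij⟩ := exists_eq_of_mem_support_sum_single hs'
  obtain ⟨hu_eq, hb_eq⟩ := Prod.ext_iff.1 hij
  obtain rfl := hu hu_eq
  exact hne i (Fin.natAdd_injective q p hb_eq)

end LeadingMonomials

theorem exists_refinesWeight_append.{v} {V : Type v} [Finite V] (w : Fin p → V → ℝ) {r : ℕ}
    {u : Fin r → V} (hu : Function.Injective u) :
    ∃ (w' : Fin q → V → ℝ) (m : MonomialOrder.{v, v} (V × Fin (p + q))),
      RefinesWeight m (columnWeight (Fin.append w w')) ∧ ∀ k, StrictAnti (w' k ∘ u) := by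
  let w' (_ : Fin q) : V → ℝ := Function.extend u (fun i => -(i : ℝ)) 0
  obtain ⟨m, hm⟩ := exists_refinesWeight (columnWeight (Fin.append w w'))
  exact ⟨w', m, hm, fun _ i j hij => by simpa [w', hu.extend_apply] using hij⟩

namespace SeparatesEdges

variable [Finite V] [Nontrivial K] {r : ℕ} {u : Fin r → V} {b b' : Fin r → Fin q}
  {g : MvPolynomial (V × Fin (p + q)) K}

theorem mem_span_of_mul_lateMinor_mem (hw : SeparatesEdges G w) (hu : Function.Injective u)
    (hb : StrictMono b) (hg : g * lateMinor K p u b ∈ Ideal.span (edgeForms K G (p + q))) :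
    g ∈ Ideal.span (edgeForms K G (p + q)) := by
  obtain ⟨w', m, hm, hw'⟩ := exists_refinesWeight_append (q := q) w hu
  exact (hw.coprimeLeadingTerms hm).mem_span_of_mul_mem_span
    (isUnit_leadingCoeff_lateMinor hm hw' hb) (hw.disjoint_degree_lateMinor hm hw' hb) hg

theorem mem_span_insert_of_mul_lateMinor_mem (hw : SeparatesEdges G w) (hu : Function.Injective u)
    (hb : StrictMono b) (hb' : StrictMono b') (hne : ∀ i, b i ≠ b' i)
    (hg : g * lateMinor K p u b' ∈
      Ideal.span (insert (lateMinor K p u b) (edgeForms K G (p + q)))) :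
    g ∈ Ideal.span (insert (lateMinor K p u b) (edgeForms K G (p + q))) := by
  obtain ⟨w', m, hm, hw'⟩ := exists_refinesWeight_append (q := q) w hu
  have hcoprime := (hw.coprimeLeadingTerms (K := K) hm).insert
    (isUnit_leadingCoeff_lateMinor hm hw' hb) (hw.disjoint_degree_lateMinor hm hw' hb)
  exact hcoprime.mem_span_of_mul_mem_span (isUnit_leadingCoeff_lateMinor hm hw' hb')
    (Set.forall_mem_insert.2 ⟨disjoint_degree_lateMinor_lateMinor hm hw' hb hb' hu hne,
      hw.disjoint_degree_lateMinor hm hw' hb'⟩) hg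

end SeparatesEdges

end RegularMinors

section LSSRing

open Matrix

variable (K : Type) [Field K] {V : Type} (G : SimpleGraph V) (d : ℕ)

/-- The Lovász–Saks–Schrijver ring `R_G(d)`. -/
abbrev LSSRing : Type :=
  MvPolynomial (V × Fin d) K ⧸ lssIdeal K G d

namespace LSSRing

/-- The class of the vector of variables `y_v`. -/
noncomputable def gen (v : V) (k : Fin d) : LSSRing K G d :=
  Ideal.Quotient.mk _ (X (v, k))

variable {G d}

theorem gen_dotProduct_gen {i j : V} (hij : G.Adj i j) :
    gen K G d i ⬝ᵥ gen K G d j = 0 := by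
  have h : Ideal.Quotient.mk (lssIdeal K G d) (edgeForm K d i j) = 0 :=
    Ideal.Quotient.eq_zero_iff_mem.2 (Ideal.subset_span ⟨i, j, hij, rfl⟩)
  rwa [edgeForm, map_sum] at h

variable {K} {B : Type*} [CommRing B] [Algebra K B]

/-- The universal property of `R_G(d)`: it classifies the orthogonal representations of `G`. -/
noncomputable def lift (z : V → Fin d → B) (hz : ∀ ⦃i j⦄, G.Adj i j → z i ⬝ᵥ z j = 0) :
    LSSRing K G d →ₐ[K] B :=
  Ideal.Quotient.liftₐ _ (aeval fun s => z s.1 s.2) fun a ha => by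
    suffices lssIdeal K G d ≤ RingHom.ker (aeval fun s : V × Fin d => z s.1 s.2) from this ha
    refine Ideal.span_le.2 ?_
    rintro _ ⟨i, j, hij, rfl⟩
    simpa [RingHom.mem_ker, dotProduct] using hz hij

@[simp]
theorem lift_gen (z : V → Fin d → B) (hz : ∀ ⦃i j⦄, G.Adj i j → z i ⬝ᵥ z j = 0) (v : V)
    (k : Fin d) : lift (K := K) z hz (gen K G d v k) = z v k :=
  aeval_X _ (v, k)

theorem algHom_ext {f g : LSSRing K G d →ₐ[K] B}
    (h : ∀ v k, f (gen K G d v k) = g (gen K G d v k)) : f = g :=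
  Ideal.Quotient.algHom_ext _ (MvPolynomial.algHom_ext fun s => h s.1 s.2)

/-- The functoriality of `R_G(d)` in `G`. -/
noncomputable def map (K : Type) [Field K] (d : ℕ) {V' : Type} {G' : SimpleGraph V'}
    (f : G' →g G) : LSSRing K G' d →ₐ[K] LSSRing K G d :=
  lift (fun i => gen K G d (f i)) fun _ _ hij => gen_dotProduct_gen K (f.map_adj hij)

@[simp]
theorem map_gen {V' : Type} {G' : SimpleGraph V'} (f : G' →g G) (v : V') (k : Fin d) :
    map K d f (gen K G' d v k) = gen K G d (f v) k :=
  lift_gen ..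

theorem map_columnMinor_gen {V' : Type} {G' : SimpleGraph V'} (f : G' →g G) {ι : Type*}
    [Fintype ι] [DecidableEq ι] (u : ι → V') (c : ι → Fin d) :
    map K d f (columnMinor (Matrix.of fun i => gen K G' d (u i)) c) =
      Ideal.Quotient.mk _ (columnMinor (variableMatrix K d (f ∘ u)) c) := by
  rw [← RingHom.coe_coe, map_columnMinor, map_columnMinor]
  congr 1
  ext i k
  exact map_gen f (u i) k

end LSSRing

end LSSRing

section VertexDeletion

open Matrix

variable {K : Type} [Field K] {V : Type} {G : SimpleGraph V} {d : ℕ} {v : V} {ι : Type*}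
  {u : ι → ({v}ᶜ : Set V)}

namespace LSSRing

variable (K d G v) in
/-- The canonical map from the ring of `G - v` to the ring of `G`. -/
noncomputable abbrev ofDeletion : LSSRing K (G.induce {v}ᶜ) d →ₐ[K] LSSRing K G d :=
  map K d (SimpleGraph.Embedding.induce {v}ᶜ).toHom

variable (K d G) in
/-- The matrix over the ring of `G - v` whose rows are the classes of the vectors `y_{u i}`. -/
noncomputable def genMatrix (u : ι → ({v}ᶜ : Set V)) :
    Matrix ι (Fin d) (LSSRing K (G.induce {v}ᶜ) d) :=
  Matrix.of fun i => gen K (G.induce {v}ᶜ) d (u i)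

open Classical in
variable (K d G) in
/-- The images in `A[x] / (M x)` of the vectors `y_w` of `G`, where `A` is the ring of `G - v`:
the vector of variables `x` for `w = v`, and a vector over `A` otherwise. -/
noncomputable def deletionVector (u : ι → ({v}ᶜ : Set V)) (w : V) :
    Fin d → LinearQuotient (genMatrix K G d u) :=
  if h : w = v then LinearQuotient.gen _ else
    algebraMap _ _ ∘ gen K (G.induce {v}ᶜ) d ⟨w, h⟩

@[simp]
theorem deletionVector_self : deletionVector K G d u v = LinearQuotient.gen _ :=
  dif_pos rfl

@[simp]
theorem deletionVector_coe (w : ({v}ᶜ : Set V)) :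
    deletionVector K G d u w = algebraMap _ _ ∘ gen K (G.induce {v}ᶜ) d w :=
  dif_neg w.2

theorem deletionVector_dotProduct (hu : ∀ w, G.Adj v w → ∃ i, (u i : V) = w) {i j : V}
    (hij : G.Adj i j) : deletionVector K G d u i ⬝ᵥ deletionVector K G d u j = 0 := by
  have hv {w : V} (hw : G.Adj v w) :
      deletionVector K G d u w ⬝ᵥ deletionVector K G d u v = 0 := by
    obtain ⟨i, rfl⟩ := hu w hw
    rw [deletionVector_coe, deletionVector_self]
    exact congrFun LinearQuotient.map_mulVec_gen i
  obtain rfl | hi := eq_or_ne i v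
  · rw [dotProduct_comm, hv hij]
  obtain rfl | hj := eq_or_ne j v
  · exact hv hij.symm
  lift i to ({v}ᶜ : Set V) using hi
  lift j to ({v}ᶜ : Set V) using hj
  rw [deletionVector_coe, deletionVector_coe, ← RingHom.map_dotProduct,
    gen_dotProduct_gen K (by exact hij), map_zero]

/-- The vector `y_v` is only subject to the linear equations given by the neighbours of `v`. -/
theorem exists_ringEquiv_linearQuotient (hu : ∀ w, G.Adj v w ↔ ∃ i, (u i : V) = w) :
    ∃ e : LSSRing K G d ≃+* LinearQuotient (genMatrix K G d u),
      ∀ a, e (ofDeletion K G d v a) = algebraMap _ _ a := by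
  let : Algebra (LSSRing K (G.induce {v}ᶜ) d) (LSSRing K G d) := (ofDeletion K G d v).toAlgebra
  have : IsScalarTower K (LSSRing K (G.induce {v}ᶜ) d) (LSSRing K G d) :=
    .of_algHom (ofDeletion K G d v)
  let f : LSSRing K G d →ₐ[K] LinearQuotient (genMatrix K G d u) :=
    lift (deletionVector K G d u) fun _ _ => deletionVector_dotProduct fun w => (hu w).1
  have hf : f.comp (ofDeletion K G d v) = IsScalarTower.toAlgHom K _ _ :=
    algHom_ext fun w k => by simp [f]
  have hgen : (genMatrix K G d u).map (ofDeletion K G d v) *ᵥ gen K G d v = 0 := by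
    ext i
    have hi := gen_dotProduct_gen (d := d) K ((hu _).2 ⟨i, rfl⟩).symm
    simpa [genMatrix, mulVec, dotProduct] using hi
  let g : LinearQuotient (genMatrix K G d u) →ₐ[LSSRing K (G.induce {v}ᶜ) d] LSSRing K G d :=
    LinearQuotient.lift (gen K G d v) hgen
  let f' : LSSRing K G d →ₐ[LSSRing K (G.induce {v}ᶜ) d] LinearQuotient (genMatrix K G d u) :=
    { f with commutes' := DFunLike.congr_fun hf }
  have hfg : f'.comp g = AlgHom.id _ _ := LinearQuotient.algHom_ext fun t => by simp [f', f, g]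
  have hgf : g.comp f' = AlgHom.id _ _ := by
    refine AlgHom.restrictScalars_injective K (algHom_ext fun w k => ?_)
    change g (f (gen K G d w k)) = gen K G d w k
    rw [lift_gen]
    obtain rfl | hw := eq_or_ne w v
    · rw [deletionVector_self, LinearQuotient.lift_gen]
    · lift w to ({v}ᶜ : Set V) using hw
      rw [deletionVector_coe, Function.comp_apply, AlgHom.commutes]
      exact map_gen _ w k
  exact ⟨AlgEquiv.ofAlgHom f' g hfg hgf, AlgEquiv.commutes _⟩

end LSSRing

end VertexDeletion

section UniqueFactorization

variable {K : Type} [Field K] {V : Type} {G : SimpleGraph V} {p q k : ℕ}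

namespace LSSRing

theorem mk_dvd_mk_iff {d : ℕ} {a b : MvPolynomial (V × Fin d) K} :
    Ideal.Quotient.mk (lssIdeal K G d) a ∣ Ideal.Quotient.mk (lssIdeal K G d) b ↔
      b ∈ Ideal.span (insert a (edgeForms K G d)) := by
  rw [Ideal.span_insert, ← Ideal.mem_span_singleton, ← Set.image_singleton, ← Ideal.map_span]
  exact Ideal.mem_quotient_iff_mem_sup

theorem ofDeletion_columnMinor_genMatrix {v : V} {ι : Type*} [Fintype ι] [LinearOrder ι]
    (u : ι → ({v}ᶜ : Set V)) (b : ι → Fin q) :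
    ofDeletion K G (p + q) v (columnMinor (genMatrix K G (p + q) u) (Fin.natAdd p ∘ b)) =
      Ideal.Quotient.mk _ (lateMinor K p (Subtype.val ∘ u) b) :=
  map_columnMinor_gen _ u _

theorem eq_zero_of_lateMinor_mul_eq_zero [Finite V] {w : Fin p → V → ℝ} (hw : SeparatesEdges G w)
    {r : ℕ} {u : Fin r → V} (hu : Function.Injective u) {b : Fin r → Fin q} (hb : StrictMono b)
    {x : LSSRing K G (p + q)} (hx : Ideal.Quotient.mk _ (lateMinor K p u b) * x = 0) : x = 0 := by
  obtain ⟨g, rfl⟩ := Ideal.Quotient.mk_surjective x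
  rw [mul_comm, ← map_mul, Ideal.Quotient.eq_zero_iff_mem] at hx
  exact Ideal.Quotient.eq_zero_iff_mem.2 (hw.mem_span_of_mul_lateMinor_mem hu hb hx)

theorem lateMinor_dvd_of_dvd_lateMinor_mul [Finite V] {w : Fin p → V → ℝ}
    (hw : SeparatesEdges G w) {r : ℕ} {u : Fin r → V} (hu : Function.Injective u)
    {b b' : Fin r → Fin q} (hb : StrictMono b) (hb' : StrictMono b') (hne : ∀ i, b i ≠ b' i)
    {x : LSSRing K G (p + q)} (hx : Ideal.Quotient.mk _ (lateMinor K p u b) ∣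
      Ideal.Quotient.mk _ (lateMinor K p u b') * x) :
    Ideal.Quotient.mk _ (lateMinor K p u b) ∣ x := by
  obtain ⟨g, rfl⟩ := Ideal.Quotient.mk_surjective x
  rw [mul_comm, ← map_mul, mk_dvd_mk_iff] at hx
  exact mk_dvd_mk_iff.2 (hw.mem_span_insert_of_mul_lateMinor_mem hu hb hb' hne hx)

theorem isUFD_of_deletion [Finite V] {w : Fin p → V → ℝ} (hw : SeparatesEdges G w) {v : V}
    (hv : (G.neighborSet v).ncard + 1 ≤ q)
    (ih : IsUFD (LSSRing K (G.induce {v}ᶜ) (p + q))) : IsUFD (LSSRing K G (p + q)) := by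
  let e := (Finite.equivFinOfCardEq (Nat.card_coe_set_eq (G.neighborSet v))).symm
  let u (i : Fin (G.neighborSet v).ncard) : ({v}ᶜ : Set V) := ⟨e i, (e i).2.ne'⟩
  have hu_inj : Function.Injective (Subtype.val ∘ u) := fun i j hij =>
    e.injective (Subtype.ext hij)
  have hu (x : V) : G.Adj v x ↔ ∃ i, (u i : V) = x :=
    ⟨fun hx => ⟨e.symm ⟨x, hx⟩, by simp [u]⟩, by rintro ⟨i, rfl⟩; exact (e i).2⟩
  let b (i : Fin (G.neighborSet v).ncard) : Fin q := Fin.castLE hv i.castSucc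
  let b' (i : Fin (G.neighborSet v).ncard) : Fin q := Fin.castLE hv i.succ
  have hb : StrictMono b := (Fin.strictMono_castLE hv).comp Fin.strictMono_castSucc
  have hb' : StrictMono b' := (Fin.strictMono_castLE hv).comp Fin.strictMono_succ
  have hne (i) : b i ≠ b' i := (Fin.castLE_injective hv).ne i.castSucc_lt_succ.ne
  obtain ⟨ε, hε⟩ := exists_ringEquiv_linearQuotient (K := K) (d := p + q) hu
  refine .of_ringEquiv ε.symm (LinearQuotient.isUFD_of_columnMinors ih
    ((Fin.natAdd_injective q p).comp hb.injective)
    ((Fin.natAdd_injective q p).comp hb'.injective) (fun y hy => ?_) fun y hy => ?_)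
  all_goals
    obtain ⟨x, rfl⟩ := ε.surjective y
    simp only [← hε, ofDeletion_columnMinor_genMatrix, ← map_mul] at hy ⊢
  · rw [map_eq_zero_iff ε ε.injective] at hy ⊢
    exact eq_zero_of_lateMinor_mul_eq_zero hw hu_inj hb hy
  · rw [map_dvd_iff ε] at hy ⊢
    exact lateMinor_dvd_of_dvd_lateMinor_mul hw hu_inj hb hb' hne hy

theorem isUFD_of_isEmpty [IsEmpty V] (d : ℕ) : IsUFD (LSSRing K G d) := by
  have hbot : lssIdeal K G d = ⊥ := by
    rw [lssIdeal, Ideal.span_eq_bot]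
    rintro f ⟨i, -⟩
    exact isEmptyElim i
  have hpoly : IsUFD (MvPolynomial (V × Fin d) K) := ⟨inferInstance, inferInstance⟩
  exact hpoly.of_ringEquiv ((RingEquiv.quotientBot _).symm.trans (Ideal.quotEquivOfEq hbot.symm))

theorem isUFD_of_separatesEdges (K : Type) [Field K] [Finite V] {w : Fin p → V → ℝ}
    (hw : SeparatesEdges G w) (hG : IsDegenerate k G) (hq : k + 1 ≤ q) :
    IsUFD (LSSRing K G (p + q)) := by
  obtain ⟨n, hn⟩ : ∃ n, Nat.card V = n := ⟨_, rfl⟩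
  induction n using Nat.strong_induction_on generalizing V with
  | _ n ih =>
    obtain _ | _ := isEmpty_or_nonempty V
    · exact isUFD_of_isEmpty (p + q)
    obtain ⟨v, hv⟩ := hG.exists_ncard_neighborSet_le
    have hcard : Nat.card ({v}ᶜ : Set V) < n :=
      hn ▸ Finite.card_subtype_lt (x := v) (not_not.2 rfl)
    exact isUFD_of_deletion hw ((Nat.succ_le_succ hv).trans hq)
      (ih _ hcard (hw.induce _) (hG.induce _) rfl)

end LSSRing

end UniqueFactorization

theorem lss_ring_isUFD_general (K : Type) [Field K] {V : Type} [Finite V] (d : ℕ)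
    (G : SimpleGraph V) (hd : pmd G + degeneracy G + 1 ≤ d) : IsUFD (LSSRing K G d) := by
  obtain ⟨q, rfl⟩ : ∃ q, d = pmd G + q := exists_add_of_le (by omega)
  obtain ⟨w, hw⟩ := exists_separatesEdges_pmd G
  exact LSSRing.isUFD_of_separatesEdges K hw (isDegenerate_degeneracy G) (by omega)

/-- If `d ≥ pmd(G) + k(G) + 1` then the LSS ring `R_G(d)` is a unique factorization
domain. -/
theorem lss_ring_isUFD (K : Type) [Field K] (n d : ℕ) (G : SimpleGraph (Fin n))
    (hd : pmd G + degeneracy G + 1 ≤ d) :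
    ∃ _ : IsDomain (MvPolynomial (Fin n × Fin d) K ⧸ lssIdeal K G d),
      UniqueFactorizationMonoid (MvPolynomial (Fin n × Fin d) K ⧸ lssIdeal K G d) :=
  lss_ring_isUFD_general K d G hd
end

section
/- Let G = ([n], E) be the (n−1)-star graph, i.e., the graph on n vertices in which one central vertex is adjacent to each of the other n−1 vertices and there are no other edges. For d = n, the divisor class group of the normal Noetherian domain R_G(n) satisfies Cl(R_G(n)) ≅ ℤ. -/
/-!
Let `R` be the ring of the star, `s` and `p` the first and the last coordinate of the vector at
the center, and `t` and `d` the maximal minors of the matrix of the leaf vectors that omit the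
last and the first column, respectively. Where `s ≠ 0`, every edge equation can be solved for the
first coordinate of its leaf; where `t ≠ 0`, Cramer's rule expresses the vector at the center
through `p`. Hence `R[1/s]` and `R[1/t]` are localizations of polynomial rings, so they are
factorial. Since `s, t` is a regular sequence, `R = R[1/s] ∩ R[1/t]`. Therefore `R` is normal, a
divisorial ideal is determined by its generators over the two charts, and the class group is
`R[1/st]ˣ / (R[1/s]ˣ * R[1/t]ˣ)`.

Up to sign, `t * s = p * d`. As `s`, `p` and `d` are irreducible in the polynomial ring of the
first chart, `R[1/st]ˣ` is generated there by `s`, `p`, `d` and the constants, so the quotient is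
generated by the class of `p / s`, which is that of the ideal of the locus where the vector at the
center vanishes. Its nontrivial powers are nontrivial: along an arc with `s = w * T`, `p = T` and
`t = 1`, a relation `(p / s) ^ k = u * s ^ j * v`, with `u` a unit of `R` and `v` a unit of
`R[1/t]`, becomes a relation between degrees, and comparing `w = 1` with `w = T` gives `k = 0`.
-/

open MvPolynomial nonZeroDivisors

/-- The `(n-1)`-star graph on `n` vertices: the last vertex is adjacent to all the
other vertices, and there are no other edges. -/
def starGraph (n : ℕ) (hn : 2 ≤ n) : SimpleGraph (Fin n) :=
  SimpleGraph.fromRel fun i _ => i = (⟨n - 1, by omega⟩ : Fin n)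

section DivisorClassGroup

variable (R : Type) [CommRing R] [IsDomain R]
variable (F : Type) [Field F] [Algebra R F] [IsFractionRing R F]

/-- The divisorial closure `(I⁻¹)⁻¹` of a fractional ideal; a fractional ideal is
divisorial when it equals its divisorial closure. -/
noncomputable def divisorialClosure (I : FractionalIdeal R⁰ F) : FractionalIdeal R⁰ F :=
  1 / (1 / I)

/-- The `n`-th power of a nonzero fractional ideal in the group of divisorial ideals:
for `n ≥ 0` the divisorial closure of `Iⁿ`, and for `n < 0` the divisorial closure of
`(1/I)^{-n}`. -/
noncomputable def divZPow (I : FractionalIdeal R⁰ F) (m : ℤ) : FractionalIdeal R⁰ F :=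
  if 0 ≤ m then divisorialClosure R F (I ^ m.toNat)
  else divisorialClosure R F ((1 / I) ^ (-m).toNat)

/-- Two (nonzero) fractional ideals define the same divisor class iff their divisorial
closures differ by a principal fractional ideal. -/
def SameDivisorClass (I J : FractionalIdeal R⁰ F) : Prop :=
  ∃ a : F, a ≠ 0 ∧
    divisorialClosure R F I = divisorialClosure R F (FractionalIdeal.spanSingleton R⁰ a * J)

/-- The divisor class group of `R` (divisorial fractional ideals modulo principal ones)
is free abelian of rank `r`: there are `r` nonzero fractional ideals whose divisor
classes form a `ℤ`-basis, i.e. every nonzero fractional ideal has the divisor class of a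
unique `ℤ`-linear combination of them. -/
def DivisorClassGroupIsFreeOfRank (r : ℕ) : Prop :=
  ∃ I : Fin r → FractionalIdeal R⁰ F,
    (∀ i, I i ≠ 0) ∧
    (∀ J : FractionalIdeal R⁰ F, J ≠ 0 →
      ∃ v : Fin r → ℤ, SameDivisorClass R F (∏ i, divZPow R F (I i) (v i)) J) ∧
    ∀ v w : Fin r → ℤ,
      SameDivisorClass R F (∏ i, divZPow R F (I i) (v i)) (∏ i, divZPow R F (I i) (w i)) →
        v = w

end DivisorClassGroup

open FractionalIdeal (spanSingleton)

namespace LovaszSaksSchrijver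

section LocalGenerator

variable {R F : Type*} [CommRing R] [Field F] [Algebra R F]

/-- The element `d` generates the fractional ideal `J` over the overring `B` of `R`, up to
divisorial closure: `J * B` and `d * B` have the same inverse `{z | z * J ⊆ B}`. -/
def IsLocalGenerator (B : Subalgebra R F) (J : FractionalIdeal R⁰ F) (d : Fˣ) : Prop :=
  ∀ z : F, (∀ j ∈ J, z * j ∈ B) ↔ z * d ∈ B

variable {B : Subalgebra R F} {J J' : FractionalIdeal R⁰ F} {d d' : Fˣ}

theorem mul_unit_mem_iff {u : Fˣ} (hu : u ∈ B.toSubmonoid.units) {z : F} :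
    z * u ∈ B ↔ z ∈ B := by
  refine ⟨fun h ↦ ?_, fun h ↦ mul_mem h hu.1⟩
  simpa using mul_mem h hu.2

theorem isLocalGenerator_one : IsLocalGenerator B 1 1 := by
  intro z
  refine ⟨fun h ↦ h _ (FractionalIdeal.one_mem_one _), fun h j hj ↦ ?_⟩
  obtain ⟨r, rfl⟩ := (FractionalIdeal.mem_one_iff _).1 hj
  exact mul_mem (by simpa using h) (B.algebraMap_mem r)

namespace IsLocalGenerator

theorem mul (h : IsLocalGenerator B J d) (h' : IsLocalGenerator B J' d') :
    IsLocalGenerator B (J * J') (d * d') := by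
  intro z
  have mul_swap (j : F) : z * j * d' = z * d' * j := by ring
  calc (∀ x ∈ J * J', z * x ∈ B) ↔ ∀ j ∈ J, ∀ j' ∈ J', z * j * j' ∈ B := by
        refine ⟨fun H j hj j' hj' ↦ ?_, fun H x hx ↦ ?_⟩
        · simpa only [mul_assoc] using H _ (FractionalIdeal.mul_mem_mul hj hj')
        · refine FractionalIdeal.mul_induction_on hx (fun j hj j' hj' ↦ ?_) fun x y hx hy ↦ ?_
          · simpa only [mul_assoc] using H j hj j' hj'
          · simpa only [mul_add] using add_mem hx hy
    _ ↔ ∀ j ∈ J, z * d' * j ∈ B := by simp only [h' _, mul_swap]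
    _ ↔ z * ↑(d * d') ∈ B := by rw [h, Units.val_mul, mul_assoc, mul_comm (d' : F)]

theorem pow (h : IsLocalGenerator B J d) (n : ℕ) : IsLocalGenerator B (J ^ n) (d ^ n) := by
  induction n with
  | zero => simpa using isLocalGenerator_one
  | succ n ih => simpa only [pow_succ] using ih.mul h

theorem div_mem_units (h : IsLocalGenerator B J d) (h' : IsLocalGenerator B J d') :
    d / d' ∈ B.toSubmonoid.units := by
  have mem_of_gens {d d' : Fˣ} (h : IsLocalGenerator B J d) (h' : IsLocalGenerator B J d') :
      (↑(d / d') : F) ∈ B := by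
    have hd' : ((d'⁻¹ : Fˣ) : F) * d' ∈ B := by simp [one_mem]
    simpa [div_eq_mul_inv, mul_comm] using (h _).1 ((h' _).2 hd')
  exact ⟨mem_of_gens h h', by simpa using mem_of_gens h' h⟩

end IsLocalGenerator

theorem isInteger_mul_finsetGcd_iff {A K ι : Type*} [CommRing A] [IsDomain A]
    [NormalizedGCDMonoid A] [Field K] [Algebra A K] [IsFractionRing A K] (s : Finset ι)
    (f : ι → A) (y : K) :
    (∀ i ∈ s, IsLocalization.IsInteger A (y * algebraMap A K (f i))) ↔
      IsLocalization.IsInteger A (y * algebraMap A K (s.gcd f)) := by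
  obtain ⟨a, b, hb, rfl⟩ := IsFractionRing.div_surjective A y
  have hb' : algebraMap A K b ≠ 0 := IsFractionRing.to_map_ne_zero_of_mem_nonZeroDivisors hb
  have isInteger_iff (c : A) :
      IsLocalization.IsInteger A (algebraMap A K a / algebraMap A K b * algebraMap A K c) ↔
        b ∣ a * c := by
    rw [div_mul_eq_mul_div, ← map_mul]
    refine exists_congr fun r ↦ ?_
    rw [eq_div_iff hb', ← map_mul, (IsFractionRing.injective A K).eq_iff, mul_comm, eq_comm]
  simp only [isInteger_iff]
  rw [← Finset.dvd_gcd_iff, (Finset.gcd_mul_left' s f a).dvd_iff_dvd_right]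

theorem isLocalGenerator_coeIdeal_span_iff {s : Set R} :
    IsLocalGenerator B (Ideal.span s : FractionalIdeal R⁰ F) d ↔
      ∀ z : F, (∀ r ∈ s, z * algebraMap R F r ∈ B) ↔ z * d ∈ B := by
  refine forall_congr' fun z ↦ iff_congr ⟨fun h r hr ↦ ?_, ?_⟩ Iff.rfl
  · exact h _ (FractionalIdeal.mem_coeIdeal_of_mem _ (Ideal.subset_span hr))
  rintro h _ ⟨r, hr, rfl⟩
  induction hr using Submodule.span_induction with
  | mem r hr => exact h r hr
  | zero => simp [zero_mem]
  | add x y _ _ hx hy => simpa [mul_add] using add_mem hx hy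
  | smul r x _ hx => simpa [mul_left_comm] using mul_mem (B.algebraMap_mem r) hx

theorem isLocalGenerator_spanSingleton [IsFractionRing R F] (a : Fˣ) :
    IsLocalGenerator B (spanSingleton R⁰ a) a := by
  intro z
  refine ⟨fun h ↦ h _ (FractionalIdeal.mem_spanSingleton_self _ _), fun h j hj ↦ ?_⟩
  obtain ⟨r, rfl⟩ := (FractionalIdeal.mem_spanSingleton _).1 hj
  simpa using B.smul_mem h r

theorem exists_isLocalGenerator [IsDomain R] [IsFractionRing R F] [IsNoetherianRing R]
    [UniqueFactorizationMonoid B] (hJ : J ≠ 0) : ∃ d, IsLocalGenerator B J d := by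
  classical
  obtain ⟨a, I, ha, rfl⟩ := FractionalIdeal.exists_eq_spanSingleton_mul J
  obtain ⟨s, rfl : Ideal.span s = I⟩ := IsNoetherian.noetherian I
  obtain ⟨_⟩ : Nonempty (NormalizedGCDMonoid B) := inferInstance
  have hg : algebraMap B F (s.gcd (algebraMap R B)) ≠ 0 := by
    refine (FaithfulSMul.algebraMap_eq_zero_iff B F).not.2 fun h ↦ hJ ?_
    have hs (r : R) (hr : r ∈ s) : r = 0 :=
      (FaithfulSMul.algebraMap_eq_zero_iff R F).1
        (congrArg (algebraMap B F) (Finset.gcd_eq_zero_iff.1 h r hr))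
    rw [Ideal.span_eq_bot.2 hs, FractionalIdeal.coeIdeal_bot, mul_zero]
  have ha' : (algebraMap R F a)⁻¹ ≠ 0 :=
    inv_ne_zero ((FaithfulSMul.algebraMap_eq_zero_iff R F).not.2 ha)
  refine ⟨Units.mk0 _ ha' * Units.mk0 _ hg, (isLocalGenerator_spanSingleton (Units.mk0 _ ha')).mul
    (isLocalGenerator_coeIdeal_span_iff.2 fun z ↦ ?_)⟩
  have isInteger_iff (x : F) : IsLocalization.IsInteger B x ↔ x ∈ B :=
    ⟨by rintro ⟨b, rfl⟩; exact b.2, fun hx ↦ ⟨⟨x, hx⟩, rfl⟩⟩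
  have := isInteger_mul_finsetGcd_iff s (algebraMap R B) z
  simp only [isInteger_iff] at this
  exact this

variable (N : Submonoid R) [IsLocalization N B]

include N in
theorem exists_smul_mem_one_of_fg {M : Submodule R F} (hfg : M.FG) (hM : ∀ x ∈ M, x ∈ B) :
    ∃ n ∈ N, ∀ x ∈ M, n • x ∈ (1 : Submodule R F) := by
  classical
  obtain ⟨s, rfl⟩ := hfg
  obtain ⟨n, hn⟩ := IsLocalization.exist_integer_multiples N s.attach
    fun x ↦ (⟨x, hM x (Submodule.subset_span x.2)⟩ : B)
  refine ⟨n, n.2, fun x hx ↦ ?_⟩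
  induction hx using Submodule.span_induction with
  | mem x hx =>
    obtain ⟨r, hr⟩ := hn ⟨x, hx⟩ (Finset.mem_attach _ _)
    exact Submodule.mem_one.2 ⟨r, congrArg Subtype.val hr⟩
  | zero => simpa only [smul_zero] using Submodule.zero_mem _
  | add x y _ _ hx hy => simpa only [smul_add] using add_mem hx hy
  | smul r x _ hx => simpa only [smul_comm _ r] using Submodule.smul_mem _ r hx

include N in
theorem smul_mem_iff {n : R} (hn : n ∈ N) {x : F} : n • x ∈ B ↔ x ∈ B := by
  refine ⟨fun h ↦ ?_, fun h ↦ B.smul_mem h n⟩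
  obtain ⟨u, hu⟩ := IsLocalization.map_units B (⟨n, hn⟩ : N)
  have hu' : ((u⁻¹ : Bˣ) : F) * algebraMap R F n = 1 := by
    have := congrArg (Subtype.val : B → F) u.inv_mul
    rwa [hu] at this
  have := mul_mem (u⁻¹ : Bˣ).val.2 h
  rwa [Algebra.smul_def, ← mul_assoc, hu', one_mul] at this

variable [IsDomain R] [IsFractionRing R F]

include N in
theorem exists_smul_mul_mem_one [IsNoetherianRing R] {z : F} (hz : ∀ j ∈ J, z * j ∈ B) :
    ∃ n ∈ N, ∀ j ∈ J, n • z * j ∈ (1 : Submodule R F) := by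
  have hfg : ((J : Submodule R F).map (LinearMap.mulLeft R z)).FG :=
    (isNoetherian_submodule.1 J.isNoetherian _ le_rfl).map _
  have hB : ∀ x ∈ (J : Submodule R F).map (LinearMap.mulLeft R z), x ∈ B := by
    rintro _ ⟨j, hj, rfl⟩
    exact hz j hj
  obtain ⟨n, hn, H⟩ := exists_smul_mem_one_of_fg N hfg hB
  exact ⟨n, hn, fun j hj ↦ by simpa using H _ ⟨j, hj, rfl⟩⟩

namespace IsLocalGenerator

variable [IsNoetherianRing R]

include N in
theorem one_div (h : IsLocalGenerator B J d) (hJ : J ≠ 0) : IsLocalGenerator B (1 / J) d⁻¹ := by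
  intro z
  refine ⟨fun H ↦ ?_, fun H w hw ↦ ?_⟩
  · obtain ⟨n, hn, hnJ⟩ := exists_smul_mul_mem_one N ((h ↑d⁻¹).2 (by simp [one_mem]))
    have := H _ ((FractionalIdeal.mem_div_iff_of_ne_zero hJ).2 fun j hj ↦
      (FractionalIdeal.mem_one_iff _).2 (Submodule.mem_one.1 (hnJ j hj)))
    rwa [mul_smul_comm, smul_mem_iff N hn] at this
  · have hwd : w * d ∈ B := by
      refine (h w).1 fun j hj ↦ ?_
      obtain ⟨r, hr⟩ := (FractionalIdeal.mem_one_iff _).1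
        ((FractionalIdeal.mem_div_iff_of_ne_zero hJ).1 hw j hj)
      exact hr ▸ B.algebraMap_mem r
    have hzw : z * ↑d⁻¹ * (w * d) = z * w := by
      rw [mul_mul_mul_comm, d.inv_mul_eq_one.2 rfl, mul_one]
    exact hzw ▸ mul_mem H hwd

include N in
theorem of_le {B' : Subalgebra R F} (h : IsLocalGenerator B' J d) (hB : B' ≤ B) :
    IsLocalGenerator B J d := by
  refine fun z ↦ ⟨fun H ↦ ?_, fun H j hj ↦ ?_⟩
  · obtain ⟨n, hn, hnJ⟩ := exists_smul_mul_mem_one N H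
    have : n • z * d ∈ B' := (h _).1 fun j hj ↦ by
      obtain ⟨r, hr⟩ := Submodule.mem_one.1 (hnJ j hj)
      exact hr ▸ B'.algebraMap_mem r
    rw [smul_mul_assoc] at this
    exact (smul_mem_iff N hn).1 (hB this)
  · have hdj : (↑d⁻¹ : F) * j ∈ B := hB ((h ↑d⁻¹).2 (by simp [one_mem]) j hj)
    have hzj : z * d * (↑d⁻¹ * j) = z * j := by
      rw [mul_assoc, d.mul_inv_cancel_left]
    exact hzj ▸ mul_mem H hdj

end IsLocalGenerator

end LocalGenerator

section DivisorClass

variable {R F : Type} [CommRing R] [IsDomain R] [Field F] [Algebra R F] [IsFractionRing R F]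
variable {J J' : FractionalIdeal R⁰ F}

instance : NoZeroDivisors (FractionalIdeal R⁰ F) :=
  FractionalIdeal.coeToSubmodule_injective.noZeroDivisors _ FractionalIdeal.coe_zero
    FractionalIdeal.coe_mul

theorem one_div_ne_zero_of_ne_zero (hJ : J ≠ 0) : 1 / J ≠ 0 := by
  intro h
  have hden : algebraMap R F J.den ∈ 1 / J := FractionalIdeal.den_mem_inv hJ
  rw [h, FractionalIdeal.mem_zero_iff] at hden
  exact nonZeroDivisors.coe_ne_zero J.den
    ((FaithfulSMul.algebraMap_eq_zero_iff R F).1 hden)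

theorem divisorialClosure_ne_zero (hJ : J ≠ 0) : divisorialClosure R F J ≠ 0 :=
  one_div_ne_zero_of_ne_zero (one_div_ne_zero_of_ne_zero hJ)

theorem divZPow_ne_zero (hJ : J ≠ 0) (m : ℤ) : divZPow R F J m ≠ 0 := by
  unfold divZPow
  split_ifs
  exacts [divisorialClosure_ne_zero (pow_ne_zero _ hJ),
    divisorialClosure_ne_zero (pow_ne_zero _ (one_div_ne_zero_of_ne_zero hJ))]

theorem one_div_eq_one_div {B₁ B₂ : Subalgebra R F} (hB : B₁ ⊓ B₂ = ⊥) {d₁ d₂ d₁' d₂' : Fˣ}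
    (hJ : J ≠ 0) (hJ' : J' ≠ 0) (h₁ : IsLocalGenerator B₁ J d₁) (h₂ : IsLocalGenerator B₂ J d₂)
    (h₁' : IsLocalGenerator B₁ J' d₁') (h₂' : IsLocalGenerator B₂ J' d₂')
    (hd₁ : d₁ / d₁' ∈ B₁.toSubmonoid.units) (hd₂ : d₂ / d₂' ∈ B₂.toSubmonoid.units) :
    1 / J = 1 / J' := by
  have mem_one_iff {x : F} : x ∈ (1 : FractionalIdeal R⁰ F) ↔ x ∈ B₁ ∧ x ∈ B₂ := by
    rw [← Algebra.mem_inf, hB, Algebra.mem_bot, FractionalIdeal.mem_one_iff, Set.mem_range]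
  have mem_iff {B : Subalgebra R F} {d d' : Fˣ} (h : IsLocalGenerator B J d)
      (h' : IsLocalGenerator B J' d') (hd : d / d' ∈ B.toSubmonoid.units) (z : F) :
      (∀ j ∈ J, z * j ∈ B) ↔ ∀ j ∈ J', z * j ∈ B := by
    rw [h, h', ← mul_unit_mem_iff hd (z := z * d'), mul_assoc, ← Units.val_mul, mul_div_cancel]
  ext z
  simp only [FractionalIdeal.mem_div_iff_of_ne_zero hJ, FractionalIdeal.mem_div_iff_of_ne_zero hJ',
    mem_one_iff, forall_and, mem_iff h₁ h₁' hd₁ z, mem_iff h₂ h₂' hd₂ z]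

variable [IsNoetherianRing R]

namespace IsLocalGenerator

variable {B : Subalgebra R F} (N : Submonoid R) [IsLocalization N B] {d : Fˣ}

include N in
protected theorem divisorialClosure (h : IsLocalGenerator B J d) (hJ : J ≠ 0) :
    IsLocalGenerator B (divisorialClosure R F J) d := by
  have := (h.one_div N hJ).one_div N (one_div_ne_zero_of_ne_zero hJ)
  rwa [inv_inv] at this

include N in
protected theorem divZPow (h : IsLocalGenerator B J d) (hJ : J ≠ 0) (m : ℤ) :
    IsLocalGenerator B (divZPow R F J m) (d ^ m) := by
  unfold _root_.divZPow
  split_ifs with hm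
  · lift m to ℕ using hm
    simpa using (h.pow m).divisorialClosure N (pow_ne_zero m hJ)
  · obtain ⟨m, rfl⟩ := Int.exists_eq_neg_ofNat (le_of_not_ge hm)
    simpa using ((h.one_div N hJ).pow m).divisorialClosure N
      (pow_ne_zero m (one_div_ne_zero_of_ne_zero hJ))

end IsLocalGenerator

theorem sameDivisorClass_iff {B₁ B₂ : Subalgebra R F} (hB : B₁ ⊓ B₂ = ⊥)
    (N₁ N₂ : Submonoid R) [IsLocalization N₁ B₁] [IsLocalization N₂ B₂] {d₁ d₂ d₁' d₂' : Fˣ}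
    (hJ : J ≠ 0) (hJ' : J' ≠ 0) (h₁ : IsLocalGenerator B₁ J d₁) (h₂ : IsLocalGenerator B₂ J d₂)
    (h₁' : IsLocalGenerator B₁ J' d₁') (h₂' : IsLocalGenerator B₂ J' d₂') :
    SameDivisorClass R F J J' ↔
      ∃ a : Fˣ, d₁ / (a * d₁') ∈ B₁.toSubmonoid.units ∧
        d₂ / (a * d₂') ∈ B₂.toSubmonoid.units := by
  have smul_ne_zero (a : Fˣ) : spanSingleton R⁰ (a : F) * J' ≠ 0 :=
    mul_ne_zero (FractionalIdeal.spanSingleton_ne_zero_iff.2 a.ne_zero) hJ'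
  constructor
  · rintro ⟨a, ha, H⟩
    lift a to Fˣ using ha.isUnit
    refine ⟨a, ?_, ?_⟩
    · exact (H ▸ h₁.divisorialClosure N₁ hJ).div_mem_units
        (((isLocalGenerator_spanSingleton a).mul h₁').divisorialClosure N₁ (smul_ne_zero a))
    · exact (H ▸ h₂.divisorialClosure N₂ hJ).div_mem_units
        (((isLocalGenerator_spanSingleton a).mul h₂').divisorialClosure N₂ (smul_ne_zero a))
  · rintro ⟨a, ha₁, ha₂⟩
    refine ⟨a, a.ne_zero, congrArg (1 / ·) ?_⟩
    exact one_div_eq_one_div hB hJ (smul_ne_zero a) h₁ h₂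
      ((isLocalGenerator_spanSingleton a).mul h₁') ((isLocalGenerator_spanSingleton a).mul h₂')
      ha₁ ha₂

theorem divisorClassGroupIsFreeOfRank_one {B₁ B₂ B₁₂ : Subalgebra R F} (hB : B₁ ⊓ B₂ = ⊥)
    (N₁ N₂ N₁₂ : Submonoid R) [IsLocalization N₁ B₁] [IsLocalization N₂ B₂]
    [IsLocalization N₁₂ B₁₂] (h₁₂ : B₁ ≤ B₁₂) (h₂₁ : B₂ ≤ B₁₂)
    [UniqueFactorizationMonoid B₁] [UniqueFactorizationMonoid B₂] {d₁ d₂ : Fˣ} (hJ : J ≠ 0)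
    (h₁ : IsLocalGenerator B₁ J d₁) (h₂ : IsLocalGenerator B₂ J d₂)
    (hgen : B₁₂.toSubmonoid.units ≤
      B₁.toSubmonoid.units ⊔ B₂.toSubmonoid.units ⊔ Subgroup.zpowers (d₂ / d₁))
    (hfree : ∀ k : ℤ, (d₂ / d₁) ^ k ∈ B₁.toSubmonoid.units ⊔ B₂.toSubmonoid.units → k = 0) :
    DivisorClassGroupIsFreeOfRank R F 1 := by
  refine ⟨fun _ ↦ J, fun _ ↦ hJ, fun J' hJ' ↦ ?_, fun v w h ↦ ?_⟩
  · obtain ⟨e₁, he₁⟩ := exists_isLocalGenerator (B := B₁) hJ'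
    obtain ⟨e₂, he₂⟩ := exists_isLocalGenerator (B := B₂) hJ'
    obtain ⟨_, hu, _, ⟨k, rfl⟩, hg⟩ := Subgroup.mem_sup.1 (hgen
      ((he₂.of_le N₁₂ h₂₁).div_mem_units (he₁.of_le N₁₂ h₁₂)))
    obtain ⟨u₁, hu₁, u₂, hu₂, rfl⟩ := Subgroup.mem_sup.1 hu
    refine ⟨fun _ ↦ k, ?_⟩
    rw [Fin.prod_univ_one]
    refine (sameDivisorClass_iff hB N₁ N₂ (divZPow_ne_zero hJ k) hJ' (h₁.divZPow N₁ hJ k)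
      (h₂.divZPow N₂ hJ k) he₁ he₂).2 ⟨d₁ ^ k / (u₁ * e₁), ?_, ?_⟩
    · have : d₁ ^ k / (d₁ ^ k / (u₁ * e₁) * e₁) = u₁ := by
        ext
        push_cast
        field_simp
      rwa [this]
    · have : d₂ ^ k / (d₁ ^ k / (u₁ * e₁) * e₂) = u₂⁻¹ := by
        have he : e₂ = u₁ * u₂ * (d₂ / d₁) ^ k * e₁ := div_eq_iff_eq_mul.1 hg.symm
        rw [he, div_zpow]
        ext
        push_cast
        field_simp
      exact this ▸ inv_mem hu₂
  · obtain ⟨a, ha₁, ha₂⟩ : ∃ a : Fˣ, _ := by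
      simp only [Fin.prod_univ_one] at h
      exact (sameDivisorClass_iff hB N₁ N₂ (divZPow_ne_zero hJ _) (divZPow_ne_zero hJ _)
        (h₁.divZPow N₁ hJ _) (h₂.divZPow N₂ hJ _) (h₁.divZPow N₁ hJ _) (h₂.divZPow N₂ hJ _)).1 h
    have hvw : (d₂ / d₁) ^ (v 0 - w 0) =
        (d₁ ^ v 0 / (a * d₁ ^ w 0))⁻¹ * (d₂ ^ v 0 / (a * d₂ ^ w 0)) := by
      rw [zpow_sub, div_zpow, div_zpow]
      ext
      push_cast
      field_simp
    funext i
    rw [Subsingleton.elim i 0, ← sub_eq_zero]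
    exact hfree _ (hvw ▸ Subgroup.mul_mem_sup (inv_mem ha₁) ha₂)

end DivisorClass

section Charts

variable {R : Type*} [CommRing R] [IsDomain R]
variable (F : Type*) [Field F] [Algebra R F] [IsFractionRing R F]

/-- The localization `R[1/s]`, as an overring of `R` inside its field of fractions `F`. -/
noncomputable abbrev awaySubalgebra {s : R} (hs : s ≠ 0) : Subalgebra R F :=
  Localization.subalgebra.ofField F (.powers s) (powers_le_nonZeroDivisors_of_noZeroDivisors hs)

variable {F} {s t : R}

theorem mem_awaySubalgebra_iff {hs : s ≠ 0} {z : F} :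
    z ∈ awaySubalgebra F hs ↔ ∃ (n : ℕ) (a : R), algebraMap R F s ^ n * z = algebraMap R F a := by
  have hs' (n : ℕ) : algebraMap R F s ^ n ≠ 0 :=
    pow_ne_zero n ((FaithfulSMul.algebraMap_eq_zero_iff R F).not.2 hs)
  constructor
  · rintro ⟨a, _, ⟨n, rfl⟩, rfl⟩
    refine ⟨n, a, ?_⟩
    rw [map_pow, mul_comm, inv_mul_cancel_right₀ (hs' n)]
  · rintro ⟨n, a, h⟩
    refine ⟨a, _, ⟨n, rfl⟩, ?_⟩
    rw [map_pow, ← h, mul_comm, inv_mul_cancel_left₀ (hs' n)]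

theorem algebraMap_mem_awaySubalgebra_units {hs : s ≠ 0} {u : Fˣ} {r : R}
    (hu : (u : F) = algebraMap R F r) {n : ℕ} (hr : r ∣ s ^ n) :
    u ∈ (awaySubalgebra F hs).toSubmonoid.units := by
  obtain ⟨q, hq⟩ := hr
  refine ((awaySubalgebra F hs).toSubmonoid.mem_units_iff u).2 ⟨?_, ?_⟩
  · exact hu ▸ (awaySubalgebra F hs).algebraMap_mem r
  · refine mem_awaySubalgebra_iff.2 ⟨n, q, ?_⟩
    rw [← map_pow, hq, map_mul, ← hu, mul_right_comm, u.mul_inv, one_mul]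

theorem awaySubalgebra_le_of_dvd {hs : s ≠ 0} {ht : t ≠ 0} (h : s ∣ t) :
    awaySubalgebra F hs ≤ awaySubalgebra F ht := by
  obtain ⟨r, rfl⟩ := h
  intro z hz
  obtain ⟨n, a, hz⟩ := mem_awaySubalgebra_iff.1 hz
  refine mem_awaySubalgebra_iff.2 ⟨n, r ^ n * a, ?_⟩
  rw [map_mul, mul_pow, mul_right_comm, hz, mul_comm, map_mul, map_pow]

theorem pow_dvd_of_pow_dvd_pow_mul (hs : s ≠ 0) (h : ∀ a, s ∣ t * a → s ∣ a) {m n : ℕ} {a : R}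
    (ha : s ^ n ∣ t ^ m * a) : s ^ n ∣ a := by
  have pow_dvd_of_dvd_mul {n : ℕ} {a : R} (ha : s ^ n ∣ t * a) : s ^ n ∣ a := by
    induction n generalizing a with
    | zero => simp
    | succ n ih =>
      obtain ⟨b, rfl⟩ := h a ((dvd_pow_self s n.succ_ne_zero).trans ha)
      rw [mul_left_comm, pow_succ', mul_dvd_mul_iff_left hs] at ha
      rw [pow_succ']
      exact mul_dvd_mul_left s (ih ha)
  induction m with
  | zero => simpa using ha
  | succ m ih => exact ih (pow_dvd_of_dvd_mul (by rwa [← mul_assoc, ← pow_succ']))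

theorem awaySubalgebra_inf_awaySubalgebra (hs : s ≠ 0) (ht : t ≠ 0)
    (h : ∀ a, s ∣ t * a → s ∣ a) : awaySubalgebra F hs ⊓ awaySubalgebra F ht = ⊥ := by
  refine eq_bot_iff.2 fun z ⟨hzs, hzt⟩ ↦ ?_
  obtain ⟨n, a, ha⟩ := mem_awaySubalgebra_iff.1 hzs
  obtain ⟨m, b, hb⟩ := mem_awaySubalgebra_iff.1 hzt
  have hab : t ^ m * a = s ^ n * b := by
    apply IsFractionRing.injective R F
    simp only [map_mul, map_pow, ← ha, ← hb]
    ring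
  obtain ⟨c, rfl⟩ := pow_dvd_of_pow_dvd_pow_mul hs h (Dvd.intro b hab.symm)
  rw [map_mul, map_pow] at ha
  have hs' : algebraMap R F s ^ n ≠ 0 :=
    pow_ne_zero n ((FaithfulSMul.algebraMap_eq_zero_iff R F).not.2 hs)
  exact Algebra.mem_bot.2 ⟨c, (mul_left_cancel₀ hs' ha).symm⟩

omit [IsDomain R] in
theorem isIntegrallyClosed_of_inf_eq_bot {B₁ B₂ : Subalgebra R F} [IsIntegrallyClosed B₁]
    [IsIntegrallyClosed B₂] (h : B₁ ⊓ B₂ = ⊥) : IsIntegrallyClosed R := by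
  have mem_of_isIntegral (B : Subalgebra R F) [IsIntegrallyClosed B] {x : F}
      (hx : IsIntegral R x) : x ∈ B := by
    obtain ⟨b, rfl⟩ := (isIntegrallyClosed_iff F).1 ‹IsIntegrallyClosed B› (hx.tower_top (A := B))
    exact b.2
  refine (isIntegrallyClosed_iff F).2 fun {x} hx ↦ ?_
  have : x ∈ B₁ ⊓ B₂ := ⟨mem_of_isIntegral B₁ hx, mem_of_isIntegral B₂ hx⟩
  rwa [h, Algebra.mem_bot] at this

theorem isLocalGenerator_coeIdeal_of_mul_le {I : Ideal R} {p : R} {d : Fˣ} (ht : t ≠ 0) (hp : p ∈ I)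
    (hd : (d : F) = algebraMap R F p) (h : ∀ r ∈ I, p ∣ t * r) :
    IsLocalGenerator (awaySubalgebra F ht) (I : FractionalIdeal R⁰ F) d := by
  refine fun z ↦ ⟨fun H ↦ hd ▸ H _ (FractionalIdeal.mem_coeIdeal_of_mem _ hp), fun hz j hj ↦ ?_⟩
  obtain ⟨r, hr, rfl⟩ := (FractionalIdeal.mem_coeIdeal _).1 hj
  obtain ⟨q, hq⟩ := h r hr
  rw [← smul_mem_iff (.powers t) (Submonoid.mem_powers t), ← mul_smul_comm,
    Algebra.smul_def, ← map_mul, hq, map_mul, ← hd, ← mul_assoc]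
  exact mul_mem hz (Subalgebra.algebraMap_mem _ q)

theorem uniqueFactorizationMonoid_awaySubalgebra {P : Type*} [CommRing P]
    [UniqueFactorizationMonoid P] {ψ : P →+* R} (hψ : Function.Injective ψ) {x : P}
    (hs : s ≠ 0) (hx : ψ x = s) (hsurj : ∀ r, ∃ (n : ℕ) (p : P), s ^ n * r = ψ p) :
    UniqueFactorizationMonoid (awaySubalgebra F hs) := by
  subst hx
  let : Algebra P (awaySubalgebra F hs) := ((algebraMap R _).comp ψ).toAlgebra
  have coe_algebraMap (p : P) :
      ((algebraMap P (awaySubalgebra F hs) p : awaySubalgebra F hs) : F) = algebraMap R F (ψ p) :=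
    rfl
  have hpow (n : ℕ) : algebraMap R F (ψ x) ^ n ≠ 0 :=
    pow_ne_zero n ((FaithfulSMul.algebraMap_eq_zero_iff R F).not.2 hs)
  have : IsLocalization.Away x (awaySubalgebra F hs) := {
    map_units := by
      rintro ⟨_, n, rfl⟩
      have hu : Units.mk0 _ (hpow n) ∈ (awaySubalgebra F hs).toSubmonoid.units :=
        algebraMap_mem_awaySubalgebra_units (by simp) (dvd_refl (ψ x ^ n))
      refine .of_mul_eq_one ⟨_, hu.2⟩ (Subtype.ext ?_)
      simp [coe_algebraMap, hpow]
    surj := by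
      rintro ⟨z, hz⟩
      obtain ⟨n, r, hr⟩ := mem_awaySubalgebra_iff.1 hz
      obtain ⟨m, p, hp⟩ := hsurj r
      refine ⟨(p, ⟨x ^ (m + n), m + n, rfl⟩), Subtype.ext ?_⟩
      rw [MulMemClass.coe_mul, coe_algebraMap, coe_algebraMap, ← hp, map_pow, map_pow, map_mul,
        map_pow, ← hr]
      ring
    exists_of_eq := fun {p q} h ↦ ⟨1, by
      rw [hψ (IsFractionRing.injective R F (congrArg Subtype.val h))]⟩ }
  exact .of_isLocalization (.powers x) _

theorem exists_pow_mul_eq_of_mem_awaySubalgebra {P : Type*} [CommRing P] {ψ : P →+* R} {x w : P}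
    (hsurj : ∀ r, ∃ (n : ℕ) (p : P), ψ x ^ n * r = ψ p) (hx : x ∣ w) {hs : s ≠ 0} (hsw : s ∣ ψ w)
    {z : F} (hz : z ∈ awaySubalgebra F hs) :
    ∃ (n : ℕ) (p : P), algebraMap R F (ψ w) ^ n * z = algebraMap R F (ψ p) := by
  obtain ⟨n, r, hr⟩ := mem_awaySubalgebra_iff.1 hz
  obtain ⟨s', hs'⟩ := hsw
  obtain ⟨x', rfl⟩ := hx
  obtain ⟨m, p, hp⟩ := hsurj (s' ^ n * r)
  refine ⟨m + n, x' ^ m * p, ?_⟩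
  calc algebraMap R F (ψ (x * x')) ^ (m + n) * z
      = algebraMap R F (ψ (x * x') ^ m * s' ^ n) * (algebraMap R F s ^ n * z) := by
        rw [pow_add, ← map_pow _ _ n, hs']
        simp only [map_mul, map_pow]
        ring
    _ = algebraMap R F (ψ x' ^ m * (ψ x ^ m * (s' ^ n * r))) := by
        rw [hr, ← map_mul, map_mul ψ]
        ring_nf
    _ = algebraMap R F (ψ (x' ^ m * p)) := by rw [hp, map_mul ψ, map_pow ψ]

theorem natDegree_map_eq_of_mem_awaySubalgebra_units {k : Type*} [CommRing k] [IsDomain k]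
    {χ : R →+* Polynomial k} {ht : t ≠ 0} (hχ : IsUnit (χ t)) {u : Fˣ}
    (hu : u ∈ (awaySubalgebra F ht).toSubmonoid.units) {a b : R}
    (h : algebraMap R F a = u * algebraMap R F b) : (χ a).natDegree = (χ b).natDegree := by
  obtain ⟨m, q, hq⟩ : ∃ m q, algebraMap R F t ^ m * (u : F) = algebraMap R F q :=
    mem_awaySubalgebra_iff (hs := ht).1 hu.1
  obtain ⟨n, q', hq'⟩ : ∃ n q', algebraMap R F t ^ n * ((u⁻¹ : Fˣ) : F) = algebraMap R F q' :=
    mem_awaySubalgebra_iff (hs := ht).1 hu.2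
  have hqq' : t ^ (m + n) = q * q' := IsFractionRing.injective R F <| by
    rw [map_mul, ← hq, ← hq', mul_mul_mul_comm, u.mul_inv, mul_one, map_pow, pow_add]
  have hχq : IsUnit (χ q) := isUnit_of_mul_isUnit_left <| by
    rw [← map_mul χ, ← hqq', map_pow]
    exact hχ.pow _
  have hab : t ^ m * a = q * b := IsFractionRing.injective R F <| by
    rw [map_mul, map_mul, h, ← hq, map_pow, mul_assoc]
  have natDegree_mul {c : Polynomial k} (hc : IsUnit c) (d : Polynomial k) :
      (c * d).natDegree = d.natDegree := by
    obtain rfl | hd := eq_or_ne d 0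
    · rw [mul_zero]
    · rw [Polynomial.natDegree_mul hc.ne_zero hd, Polynomial.natDegree_eq_zero_of_isUnit hc,
        zero_add]
  rw [← natDegree_mul (hχ.pow m), ← map_pow, ← map_mul, hab, map_mul, natDegree_mul hχq]

theorem zpow_mul_natDegree_add_eq_zero {k : Type*} [CommRing k] [IsDomain k]
    {χ : R →+* Polynomial k} {ht : t ≠ 0} (hχ : IsUnit (χ t)) {a b : R} (ha : χ a ≠ 0)
    (hb : χ b ≠ 0) {u v : Fˣ} (hu : (u : F) = algebraMap R F a) (hv : (v : F) = algebraMap R F b)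
    {m n : ℤ} (h : u ^ m * v ^ n ∈ (awaySubalgebra F ht).toSubmonoid.units) :
    m * (χ a).natDegree + n * (χ b).natDegree = 0 := by
  have huv : algebraMap R F (a ^ m.toNat * b ^ n.toNat) =
      (u ^ m * v ^ n : Fˣ) * algebraMap R F (a ^ (-m).toNat * b ^ (-n).toNat) := by
    have zpow_mul_pow (x : Fˣ) (i : ℤ) : x ^ i * x ^ (-i).toNat = x ^ i.toNat := by
      rw [← zpow_natCast, ← zpow_natCast, ← zpow_add]
      congr 1
      lia
    simp only [map_mul, map_pow, ← hu, ← hv]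
    norm_cast
    rw [mul_mul_mul_comm, zpow_mul_pow, zpow_mul_pow]
  have hdeg := natDegree_map_eq_of_mem_awaySubalgebra_units hχ h huv
  simp only [map_mul, map_pow] at hdeg
  rw [Polynomial.natDegree_mul (pow_ne_zero _ ha) (pow_ne_zero _ hb),
    Polynomial.natDegree_mul (pow_ne_zero _ ha) (pow_ne_zero _ hb)] at hdeg
  simp only [Polynomial.natDegree_pow] at hdeg
  have hm : m = m.toNat - (-m).toNat := by lia
  have hn : n = n.toNat - (-n).toNat := by lia
  zify at hdeg
  rw [hm, hn]
  linear_combination hdeg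

end Charts

theorem mem_of_dvd_of_mem_closure {M : Type*} [CommMonoidWithZero M] [IsCancelMulZero M]
    [DecompositionMonoid M] {S : Set M} (hS : ∀ q ∈ S, Irreducible q) {H : Submonoid M}
    (hunits : ∀ u : Mˣ, (u : M) ∈ H) (hSH : S ⊆ H) {p w : M} (hw : w ∈ Submonoid.closure S)
    (hp : p ∣ w) : p ∈ H := by
  induction hw using Submonoid.closure_induction generalizing p with
  | mem q hq =>
    rcases (hS q hq).dvd_iff.1 hp with ⟨u, rfl⟩ | ⟨u, rfl⟩
    exacts [hunits u, mul_mem (hSH hq) (hunits u)]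
  | one =>
    obtain ⟨u, rfl⟩ := isUnit_of_dvd_one hp
    exact hunits u
  | mul v w _ _ hv hw =>
    obtain ⟨a, b, ha, hb, rfl⟩ := exists_dvd_and_dvd_of_dvd_mul hp
    exact mul_mem (hv ha) (hw hb)

theorem units_le_of_mem_closure {P F : Type*} [CommRing P] [IsDomain P] [DecompositionMonoid P]
    [Field F] {φ : P →+* F} (hφ : Function.Injective φ) {B : Submonoid F} {w : P}
    (hB : ∀ z ∈ B, ∃ (n : ℕ) (p : P), φ w ^ n * z = φ p) {S : Set P} (hS : ∀ q ∈ S, Irreducible q)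
    (hw : w ∈ Submonoid.closure S) {H : Subgroup Fˣ} (hunits : ∀ u : Pˣ, Units.map φ u ∈ H)
    (hSH : ∀ q ∈ S, ∀ u : Fˣ, (u : F) = φ q → u ∈ H) : B.units ≤ H := by
  let H' : Submonoid P := {
    carrier := {p | ∃ u ∈ H, (u : F) = φ p}
    one_mem' := ⟨1, H.one_mem, by simp⟩
    mul_mem' := by
      rintro p q ⟨u, hu, hup⟩ ⟨v, hv, hvq⟩
      exact ⟨u * v, H.mul_mem hu hv, by simp [hup, hvq]⟩ }
  have hSH' : S ⊆ H' := fun q hq ↦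
    have hq0 : φ q ≠ 0 := (map_ne_zero_iff φ hφ).2 (hS q hq).ne_zero
    ⟨Units.mk0 _ hq0, hSH q hq _ rfl, rfl⟩
  intro u hu
  obtain ⟨n, p, hp⟩ := hB u hu.1
  obtain ⟨m, q, hq⟩ := hB _ hu.2
  have hpq : p * q = w ^ (n + m) := hφ <| by
    rw [map_mul, ← hp, ← hq, mul_mul_mul_comm, ← pow_add, map_pow]
    simp
  have hunits' (v : Pˣ) : (v : P) ∈ H' := ⟨_, hunits v, rfl⟩
  have mem_of_dvd {a : P} (ha : a ∣ w ^ (n + m)) : a ∈ H' :=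
    mem_of_dvd_of_mem_closure hS hunits' hSH' (pow_mem hw _) ha
  obtain ⟨a, ha, hap⟩ := mem_of_dvd ⟨q, hpq.symm⟩
  obtain ⟨b, hb, hbw⟩ := mem_of_dvd (pow_dvd_pow w (Nat.le_add_right n m))
  have hu : u = b⁻¹ * a := by
    rw [eq_inv_mul_iff_mul_eq]
    ext
    rw [Units.val_mul, hbw, hap, map_pow, hp]
  exact hu ▸ H.mul_mem (H.inv_mem hb) ha

section RegularElements

variable {A : Type*} [CommRing A] {I : Ideal A} {a b : A}

theorem isSMulRegular_quotient_iff :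
    IsSMulRegular (A ⧸ I) a ↔ ∀ x, a * x ∈ I → x ∈ I :=
  isSMulRegular_quotient_iff_mem_of_smul_mem I a

theorem isSMulRegular_quotient_of_isPrime [I.IsPrime] (ha : a ∉ I) : IsSMulRegular (A ⧸ I) a :=
  isSMulRegular_quotient_iff.2 fun _ hx ↦ (Ideal.IsPrime.mem_or_mem ‹_› hx).resolve_left ha

theorem isSMulRegular_quotient_span_singleton_sup (ha : IsSMulRegular (A ⧸ I) a)
    (hb : IsSMulRegular (A ⧸ Ideal.span {a} ⊔ I) b) :
    IsSMulRegular (A ⧸ Ideal.span {b} ⊔ I) a := by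
  rw [isSMulRegular_quotient_iff] at ha hb ⊢
  intro x hx
  obtain ⟨y, i, hi, hy⟩ := Ideal.mem_span_singleton_sup.1 hx
  obtain ⟨z, j, hj, rfl⟩ := Ideal.mem_span_singleton_sup.1 <|
    hb y (Ideal.mem_span_singleton_sup.2 ⟨x, -i, neg_mem hi, by linear_combination -hy⟩)
  have hxz : x - b * z ∈ I := by
    refine ha _ ?_
    have : a * (x - b * z) = b * j + i := by linear_combination -hy
    exact this ▸ add_mem (I.mul_mem_left b hj) hi
  exact Ideal.mem_span_singleton_sup.2 ⟨z, _, hxz, by ring⟩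

theorem isSMulRegular_quotient_map_iff {B E : Type*} [CommRing B] [FunLike E A B]
    [RingHomClass E A B] {e : E} (he : Function.Bijective e) :
    IsSMulRegular (B ⧸ I.map e) (e a) ↔ IsSMulRegular (A ⧸ I) a := by
  simp only [isSMulRegular_quotient_iff, he.2.forall, ← map_mul, ← Ideal.mem_comap,
    Ideal.comap_map_of_bijective e he]

theorem isSMulRegular_quotient_map_C_linear
    (ha : IsSMulRegular (Polynomial A ⧸ I.map Polynomial.C) (Polynomial.C a)) (g : A) :
    IsSMulRegular (Polynomial A ⧸ I.map Polynomial.C)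
      (Polynomial.C a * Polynomial.X + Polynomial.C g) := by
  have mem_map_C_iff (f : Polynomial A) :
      f ∈ I.map Polynomial.C ↔ f.map (Ideal.Quotient.mk I) = 0 := by
    simp [Ideal.mem_map_C_iff, Polynomial.ext_iff, Ideal.Quotient.eq_zero_iff_mem]
  rw [isSMulRegular_quotient_iff] at ha ⊢
  intro f hf
  rw [mem_map_C_iff] at hf ⊢
  cases subsingleton_or_nontrivial (A ⧸ I)
  · exact Subsingleton.elim _ _
  have ha' : Ideal.Quotient.mk I a ∈ (A ⧸ I)⁰ := by
    refine mem_nonZeroDivisors_iff_right.2 fun x hx ↦ ?_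
    obtain ⟨x, rfl⟩ := Ideal.Quotient.mk_surjective x
    have hax : Ideal.Quotient.mk I (a * x) = 0 := by rw [mul_comm, map_mul, hx]
    simpa only [mem_map_C_iff, Polynomial.map_C, ← Polynomial.C_mul, hax, map_zero,
      Polynomial.C_eq_zero, true_imp_iff] using ha (Polynomial.C x)
  rw [Polynomial.map_mul] at hf
  refine (mem_nonZeroDivisors_iff.1 (Polynomial.mem_nonZeroDivisors_of_leadingCoeff ?_)).1 _ hf
  simpa [Polynomial.leadingCoeff_linear (nonZeroDivisors.ne_zero ha')] using ha'

variable {σ K : Type*} [CommRing K]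

theorem X_mem_supported_of_mem {v : σ} {s : Set σ} (hv : v ∈ s) :
    (X v : MvPolynomial σ K) ∈ supported K s :=
  Algebra.subset_adjoin (Set.mem_image_of_mem X hv)

theorem isSMulRegular_quotient_linear {v : σ} {s : Set (MvPolynomial σ K)}
    (hs : s ⊆ supported K {v}ᶜ) {a g : MvPolynomial σ K} (ha : a ∈ supported K {v}ᶜ)
    (hg : g ∈ supported K {v}ᶜ) (hreg : IsSMulRegular (MvPolynomial σ K ⧸ Ideal.span s) a) :
    IsSMulRegular (MvPolynomial σ K ⧸ Ideal.span s) (a * X v + g) := by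
  classical
  let e : MvPolynomial σ K ≃ₐ[K] Polynomial (MvPolynomial {w // w ≠ v} K) :=
    (renameEquiv K (Equiv.optionSubtypeNe v).symm).trans (optionEquivLeft K _)
  have heX : e (X v) = Polynomial.X := by simp [e]
  have exists_eq_C {f : MvPolynomial σ K} (hf : f ∈ supported K {v}ᶜ) :
      ∃ f', e f = Polynomial.C f' := by
    rw [supported_eq_range_rename] at hf
    obtain ⟨f, rfl⟩ := hf
    have he : e.toAlgHom.comp (rename ((↑) : {w // w ≠ v} → σ)) = Polynomial.CAlgHom := by
      ext i : 1
      simp [e, Equiv.optionSubtypeNe_symm_of_ne i.2]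
    exact ⟨f, DFunLike.congr_fun he f⟩
  have hspan : (Ideal.span s).map e =
      (Ideal.span {f | ∃ h ∈ s, e h = Polynomial.C f}).map Polynomial.C := by
    rw [Ideal.map_span, Ideal.map_span]
    congr 1
    ext f
    constructor
    · rintro ⟨h, hh, rfl⟩
      obtain ⟨f, hf⟩ := exists_eq_C (hs hh)
      exact ⟨f, ⟨h, hh, hf⟩, hf.symm⟩
    · rintro ⟨f, ⟨h, hh, hf⟩, rfl⟩
      exact ⟨h, hh, hf⟩
  obtain ⟨a', ha'⟩ := exists_eq_C ha
  obtain ⟨g', hg'⟩ := exists_eq_C hg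
  rw [← isSMulRegular_quotient_map_iff e.bijective, hspan] at hreg ⊢
  simp only [map_add, map_mul, heX, ha', hg'] at hreg ⊢
  exact isSMulRegular_quotient_map_C_linear hreg g'

end RegularElements

section GenericDeterminant

variable {σ : Type*} (K : Type*) [CommRing K] {j : ℕ}

/-- The determinant of the matrix of variables `X (v a b)`. -/
noncomputable def genericDet (v : Fin j → Fin j → σ) : MvPolynomial σ K :=
  (Matrix.of fun a b ↦ X (v a b)).det

variable {K}

theorem map_genericDet {A : Type*} [CommRing A] (φ : MvPolynomial σ K →+* A)
    (v : Fin j → Fin j → σ) : φ (genericDet K v) = (Matrix.of fun a b ↦ φ (X (v a b))).det :=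
  φ.map_det _

theorem rename_genericDet {ρ : Type*} (f : σ → ρ) (v : Fin j → Fin j → σ) :
    rename f (genericDet K v) = genericDet K fun a b ↦ f (v a b) :=
  (map_genericDet (rename f : MvPolynomial σ K →ₐ[K] _).toRingHom v).trans (by simp [genericDet])

theorem genericDet_mem_supported {s : Set σ} {v : Fin j → Fin j → σ} (hv : ∀ a b, v a b ∈ s) :
    genericDet K v ∈ supported K s := by
  rw [genericDet, Matrix.det_apply]
  refine sum_mem fun π _ ↦ zsmul_mem (prod_mem fun a _ ↦ ?_) _
  exact X_mem_supported_of_mem (hv _ _)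

theorem exists_genericDet_succ_eq {v : Fin (j + 1) → Fin (j + 1) → σ}
    (hv : Function.Injective v.uncurry) :
    ∃ g ∈ supported K {v 0 0}ᶜ,
      genericDet K v = genericDet K (fun a b ↦ v a.succ b.succ) * X (v 0 0) + g := by
  have v_ne {a b} (h : a ≠ 0 ∨ b ≠ 0) : v a b ∈ ({v 0 0}ᶜ : Set σ) := fun h' ↦ by
    have : (a, b) = (0, 0) := hv h'
    simp_all
  refine ⟨∑ a : Fin j, (-1) ^ (a.succ : ℕ) * X (v a.succ 0) *
    genericDet K (fun b c ↦ v (a.succ.succAbove b) c.succ), ?_, ?_⟩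
  · refine sum_mem fun a _ ↦ mul_mem (mul_mem ?_ ?_) ?_
    · exact pow_mem (neg_mem (one_mem _)) _
    · exact X_mem_supported_of_mem (v_ne (.inl a.succ_ne_zero))
    · exact genericDet_mem_supported fun b c ↦ v_ne (.inr c.succ_ne_zero)
  · rw [genericDet, Matrix.det_succ_column_zero, Fin.sum_univ_succ]
    simp [genericDet, mul_comm, Matrix.submatrix]

theorem genericDet_ne_zero [Nontrivial K] {v : Fin j → Fin j → σ}
    (hv : Function.Injective v.uncurry) : genericDet K v ≠ 0 := by
  have h : genericDet K v = rename v.uncurry (Matrix.mvPolynomialX (Fin j) (Fin j) K).det := by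
    simp [genericDet, AlgHom.map_det, AlgHom.mapMatrix_apply, Matrix.map, Matrix.mvPolynomialX]
  rw [h, map_ne_zero_iff _ (rename_injective _ hv)]
  exact Matrix.det_mvPolynomialX_ne_zero _ _

theorem not_genericDet_succ_dvd_genericDet [Nontrivial K] {v : Fin (j + 2) → Fin (j + 2) → σ}
    (hv : Function.Injective v.uncurry) :
    ¬ genericDet K (fun a b : Fin (j + 1) ↦ v a.succ b.succ) ∣ genericDet K v := by
  -- At the permutation matrix of the transposition `(0 1)` the minor vanishes and `det v` does not.
  let M : Matrix (Fin (j + 2)) (Fin (j + 2)) K := (Equiv.swap 0 1).permMatrix K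
  let ε := eval (Function.extend v.uncurry M.uncurry 0)
  have hε (a b) : ε (X (v a b)) = M a b :=
    (eval_X _).trans (hv.extend_apply M.uncurry 0 (a, b))
  have hdet : ε (genericDet K v) = -1 := by
    rw [map_genericDet]
    simp only [hε]
    exact (Matrix.det_permutation _).trans (by simp)
  have hminor : ε (genericDet K fun a b : Fin (j + 1) ↦ v a.succ b.succ) = 0 := by
    rw [map_genericDet]
    refine Matrix.det_eq_zero_of_row_eq_zero 0 fun b ↦ ?_
    simp [hε, M, PEquiv.toMatrix_apply, b.succ_ne_zero.symm]
  rintro ⟨q, hq⟩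
  rw [hq, map_mul, hminor, zero_mul, zero_eq_neg] at hdet
  exact one_ne_zero hdet

theorem irreducible_genericDet [IsDomain K] {v : Fin (j + 1) → Fin (j + 1) → σ}
    (hv : Function.Injective v.uncurry) : Irreducible (genericDet K v) := by
  induction j with
  | zero =>
    rw [genericDet, Matrix.det_fin_one]
    exact X_prime.irreducible
  | succ j ih =>
    have hv' : Function.Injective (Function.uncurry fun a b : Fin (j + 1) ↦ v a.succ b.succ) := by
      rintro ⟨a, b⟩ ⟨a', b'⟩ h
      simpa using hv (a₁ := (a.succ, b.succ)) (a₂ := (a'.succ, b'.succ)) h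
    obtain ⟨g, hg, h⟩ := exists_genericDet_succ_eq (K := K) hv
    have notMem_vars {f : MvPolynomial σ K} (hf : f ∈ supported K {v 0 0}ᶜ) : v 0 0 ∉ f.vars :=
      fun h ↦ mem_supported.1 hf h rfl
    have hminor : (genericDet K fun a b : Fin (j + 1) ↦ v a.succ b.succ) ∈ supported K {v 0 0}ᶜ :=
      genericDet_mem_supported fun a b h ↦ by
        simpa using hv (a₁ := (a.succ, b.succ)) (a₂ := (0, 0)) h
    rw [h]
    refine irreducible_mul_X_add _ _ _ (ih hv').ne_zero (notMem_vars hminor) (notMem_vars hg)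
      ((ih hv').isRelPrime_iff_not_dvd.2 fun hdvd ↦
        not_genericDet_succ_dvd_genericDet (K := K) hv (h ▸ dvd_add (dvd_mul_right _ _) hdvd))

end GenericDeterminant

section Chart

variable {R P K : Type*} [CommRing R] [CommRing P]

theorem exists_pow_mul_eq_of_adjoin_eq_top [CommRing K] [Algebra K R] [Algebra K P]
    (ψ : P →ₐ[K] R) {x : P} {s : Set R} (hs : Algebra.adjoin K s = ⊤)
    (h : ∀ r ∈ s, ∃ q, ψ x * r = ψ q) (r : R) : ∃ (n : ℕ) (q : P), ψ x ^ n * r = ψ q := by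
  have hr : r ∈ Algebra.adjoin K s := hs ▸ Algebra.mem_top
  induction hr using Algebra.adjoin_induction with
  | mem r hr => exact ⟨1, by simpa using h r hr⟩
  | algebraMap k => exact ⟨0, algebraMap K P k, by simp⟩
  | add a b _ _ ha hb =>
    obtain ⟨m, p, hp⟩ := ha
    obtain ⟨n, q, hq⟩ := hb
    refine ⟨m + n, x ^ n * p + x ^ m * q, ?_⟩
    simp only [map_add, map_mul, map_pow, ← hp, ← hq]
    ring
  | mul a b _ _ ha hb =>
    obtain ⟨m, p, hp⟩ := ha
    obtain ⟨n, q, hq⟩ := hb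
    refine ⟨m + n, p * q, ?_⟩
    simp only [map_mul, ← hp, ← hq]
    ring

theorem injective_of_injective_comp {ψ : P →+* R} {x : P}
    (hsurj : ∀ r, ∃ (n : ℕ) (q : P), ψ x ^ n * r = ψ q) (hx : IsSMulRegular R (ψ x)) {Ω : Type*}
    [CommRing Ω] (θ : R →+* Ω) (hθ : Function.Injective (θ.comp ψ)) : Function.Injective θ := by
  refine (injective_iff_map_eq_zero θ).2 fun r hr ↦ ?_
  obtain ⟨n, q, hq⟩ := hsurj r
  have hq0 : q = 0 := (map_eq_zero_iff _ hθ).1 (by simp [← hq, hr])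
  refine hx.pow n ?_
  simp [hq, hq0]

end Chart

section RationalChart

variable {σ K : Type*} [CommRing K]

/-- The homomorphism to the coordinate ring of the zero locus of `L` that corresponds to the
projection onto the affine space with coordinates `τ`. -/
noncomputable def coordinateHom (L : Ideal (MvPolynomial σ K)) (τ : Set σ) :
    MvPolynomial τ K →ₐ[K] MvPolynomial σ K ⧸ L :=
  (Ideal.Quotient.mkₐ K L).comp (rename (↑))

theorem coordinateHom_X {L : Ideal (MvPolynomial σ K)} {τ : Set σ} (v : τ) :
    coordinateHom L τ (X v) = Ideal.Quotient.mk L (X v) := by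
  simp [coordinateHom]

theorem coordinateHom_genericDet {L : Ideal (MvPolynomial σ K)} {τ : Set σ} {j : ℕ}
    (v : Fin j → Fin j → τ) :
    coordinateHom L τ (genericDet K v) = Ideal.Quotient.mk L (genericDet K fun a b ↦ v a b) := by
  rw [coordinateHom, AlgHom.comp_apply, rename_genericDet]
  rfl

variable [IsDomain K] {L : Ideal (MvPolynomial σ K)} {τ : Set σ}

/-- A parametrization of the zero locus of the ideal `L` by the affine space with coordinates
`τ ⊆ σ`, valid where `den` is invertible: there the coordinate `v ∈ σ` is `num v / den`. -/
structure RationalChart (L : Ideal (MvPolynomial σ K)) (τ : Set σ) where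
  den : MvPolynomial τ K
  num : σ → MvPolynomial τ K
  den_ne_zero : den ≠ 0
  num_coe (v : τ) : num v = den * X v
  rename_den_mul_X_sub_mem (v : σ) : rename (↑) den * X v - rename (↑) (num v) ∈ L
  aeval_eq_zero : ∀ f ∈ L, aeval (fun v ↦ algebraMap _ (FractionRing (MvPolynomial τ K)) (num v) /
    algebraMap _ _ den) f = 0

namespace RationalChart

open Classical in
/-- The parametrization with denominator `den` and numerators `num v` for the remaining coordinates
`v ∉ τ`. -/
noncomputable def ofNum (den : MvPolynomial τ K) (num : σ → MvPolynomial τ K)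
    (den_ne_zero : den ≠ 0)
    (mem : ∀ v ∉ τ, rename (↑) den * X v - rename (↑) (num v) ∈ L)
    (le_ker : ∀ φ : MvPolynomial σ K →ₐ[K] FractionRing (MvPolynomial τ K),
      (∀ p : MvPolynomial τ K, φ (rename (↑) p) = algebraMap _ _ p) →
      (∀ v ∉ τ, φ (X v) = algebraMap _ _ (num v) / algebraMap _ _ den) → L ≤ RingHom.ker φ) :
    RationalChart L τ where
  den := den
  num v := if h : v ∈ τ then den * X ⟨v, h⟩ else num v
  den_ne_zero := den_ne_zero
  num_coe v := dif_pos v.2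
  rename_den_mul_X_sub_mem v := by
    split_ifs with hv
    · simp
    · exact mem v hv
  aeval_eq_zero f hf := by
    have hden : algebraMap _ (FractionRing (MvPolynomial τ K)) den ≠ 0 :=
      (FaithfulSMul.algebraMap_eq_zero_iff _ _).not.2 den_ne_zero
    refine le_ker _ (fun p ↦ ?_) (fun v hv ↦ ?_) hf
    · rw [aeval_rename]
      refine DFunLike.congr_fun (g := IsScalarTower.toAlgHom K _ _)
        (MvPolynomial.algHom_ext fun v ↦ ?_) p
      simp [hden]
    · simp [hv]

variable (C : RationalChart L τ)

/-- The homomorphism defined by the parametrization `C`. -/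
noncomputable def toFractionRing : MvPolynomial σ K ⧸ L →ₐ[K] FractionRing (MvPolynomial τ K) :=
  Ideal.Quotient.liftₐ L _ C.aeval_eq_zero

theorem toFractionRing_mk_X (v : σ) : C.toFractionRing (Ideal.Quotient.mk L (X v)) =
    algebraMap _ _ (C.num v) / algebraMap _ _ C.den :=
  aeval_X _ v

theorem toFractionRing_coordinateHom (p : MvPolynomial τ K) :
    C.toFractionRing (coordinateHom L τ p) = algebraMap _ _ p := by
  have hden : algebraMap _ (FractionRing (MvPolynomial τ K)) C.den ≠ 0 :=
    (FaithfulSMul.algebraMap_eq_zero_iff _ _).not.2 C.den_ne_zero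
  have : C.toFractionRing.comp (coordinateHom L τ) =
      IsScalarTower.toAlgHom K _ (FractionRing (MvPolynomial τ K)) := by
    ext v
    simp [coordinateHom_X, toFractionRing_mk_X, C.num_coe, hden]
  exact DFunLike.congr_fun this p

include C

theorem coordinateHom_injective : Function.Injective (coordinateHom L τ) := by
  refine .of_comp (f := C.toFractionRing) ?_
  rw [funext C.toFractionRing_coordinateHom (f := C.toFractionRing ∘ coordinateHom L τ)]
  exact IsFractionRing.injective _ _

theorem exists_pow_mul_eq (r : MvPolynomial σ K ⧸ L) :
    ∃ (n : ℕ) (q : MvPolynomial τ K), coordinateHom L τ C.den ^ n * r = coordinateHom L τ q := by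
  have htop : Algebra.adjoin K (Set.range fun v ↦ Ideal.Quotient.mkₐ K L (X v)) = ⊤ := by
    rw [Set.range_comp', ← AlgHom.map_adjoin, adjoin_range_X, Algebra.map_top,
      AlgHom.range_eq_top]
    exact Ideal.Quotient.mkₐ_surjective K L
  refine exists_pow_mul_eq_of_adjoin_eq_top (coordinateHom L τ) htop ?_ r
  rintro _ ⟨v, rfl⟩
  exact ⟨C.num v, Ideal.Quotient.eq.2 (C.rename_den_mul_X_sub_mem v)⟩

theorem isPrime (hC : IsSMulRegular (MvPolynomial σ K ⧸ L) (rename Subtype.val C.den)) :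
    L.IsPrime := by
  have hreg : IsSMulRegular (MvPolynomial σ K ⧸ L) (coordinateHom L τ C.den) :=
    fun _ _ h ↦ hC h
  have hinj : Function.Injective
      (C.toFractionRing.toRingHom.comp (coordinateHom L τ).toRingHom) := by
    convert IsFractionRing.injective (MvPolynomial τ K) (FractionRing (MvPolynomial τ K))
    exact RingHom.ext C.toFractionRing_coordinateHom
  rw [← Ideal.Quotient.isDomain_iff_prime]
  exact (injective_of_injective_comp C.exists_pow_mul_eq hreg _ hinj).isDomain _

theorem awaySubalgebra_units_le [UniqueFactorizationMonoid K] [IsDomain (MvPolynomial σ K ⧸ L)]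
    {F : Type*} [Field F] [Algebra (MvPolynomial σ K ⧸ L) F]
    [IsFractionRing (MvPolynomial σ K ⧸ L) F]
    {s : MvPolynomial σ K ⧸ L} {hs : s ≠ 0} {w : MvPolynomial τ K} (hden : C.den ∣ w)
    (hsw : s ∣ coordinateHom L τ w) {S : Set (MvPolynomial τ K)} (hS : ∀ q ∈ S, Irreducible q)
    (hw : w ∈ Submonoid.closure S) {H : Subgroup Fˣ}
    (hunits : ∀ u : (MvPolynomial σ K ⧸ L)ˣ,
      Units.map (algebraMap (MvPolynomial σ K ⧸ L) F : MvPolynomial σ K ⧸ L →* F) u ∈ H)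
    (hSH : ∀ q ∈ S, ∀ u : Fˣ, (u : F) = algebraMap _ F (coordinateHom L τ q) → u ∈ H) :
    (awaySubalgebra F hs).toSubmonoid.units ≤ H :=
  let ψ : MvPolynomial τ K →+* MvPolynomial σ K ⧸ L := coordinateHom L τ
  units_le_of_mem_closure (φ := (algebraMap _ F).comp ψ)
    ((IsFractionRing.injective _ F).comp C.coordinateHom_injective)
    (fun _ hz ↦ exists_pow_mul_eq_of_mem_awaySubalgebra C.exists_pow_mul_eq hden hsw hz) hS hw
    (fun u ↦ hunits (Units.map ψ.toMonoidHom u)) hSH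

end RationalChart

end RationalChart

section StarIdeal

variable {V κ : Type*} [Fintype κ] [DecidableEq κ] (K : Type*) [CommRing K]

/-- The edge polynomial of the edge `{i, c}` after setting to zero the variables of the row `c`
in the columns `T`. -/
noncomputable def truncatedEdge (c : V) (T : Finset κ) (i : V) : MvPolynomial (V × κ) K :=
  ∑ k ∈ Tᶜ, X (i, k) * X (c, k)

/-- The LSS ideal of the star with center `c` and set of leaves `A`, together with the variables
of the central row in the columns `T`. -/
noncomputable def starIdeal (c : V) (A : Finset V) (T : Finset κ) :
    Ideal (MvPolynomial (V × κ) K) :=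
  Ideal.span (truncatedEdge K c T '' A ∪ (fun k ↦ X (c, k)) '' T)

variable {K} {c i : V} {A : Finset V} {T : Finset κ} {k l : κ}

theorem starIdeal_insert_left [DecidableEq V] :
    starIdeal K c (insert i A) T = Ideal.span {truncatedEdge K c T i} ⊔ starIdeal K c A T := by
  rw [starIdeal, starIdeal, ← Ideal.span_insert, Finset.coe_insert, Set.image_insert_eq,
    Set.insert_union]

theorem truncatedEdge_empty :
    truncatedEdge K c (∅ : Finset κ) i = ∑ k, X (i, k) * X (c, k) := by
  rw [truncatedEdge, Finset.compl_empty]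

theorem truncatedEdge_eq_add (hk : k ∉ T) :
    truncatedEdge K c T i = X (c, k) * X (i, k) + truncatedEdge K c (insert k T) i := by
  rw [truncatedEdge, truncatedEdge, ← Finset.add_sum_erase _ _ (Finset.mem_compl.2 hk), mul_comm,
    Finset.compl_insert]

theorem starIdeal_le_iff {I : Ideal (MvPolynomial (V × κ) K)} :
    starIdeal K c A T ≤ I ↔ (∀ i ∈ A, truncatedEdge K c T i ∈ I) ∧ ∀ k ∈ T, X (c, k) ∈ I := by
  simp [starIdeal, Ideal.span_le, Set.subset_def]

theorem truncatedEdge_mem_starIdeal (hi : i ∈ A) : truncatedEdge K c T i ∈ starIdeal K c A T :=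
  (starIdeal_le_iff.1 le_rfl).1 i hi

theorem X_mem_starIdeal (hk : k ∈ T) : X (c, k) ∈ starIdeal K c A T :=
  (starIdeal_le_iff.1 le_rfl).2 k hk

theorem starIdeal_insert_right (hk : k ∉ T) :
    starIdeal K c A (insert k T) = Ideal.span {X (c, k)} ⊔ starIdeal K c A T := by
  refine le_antisymm (starIdeal_le_iff.2 ⟨fun i hi ↦ ?_, fun l hl ↦ ?_⟩)
    (sup_le ?_ (starIdeal_le_iff.2 ⟨fun i hi ↦ ?_, fun l hl ↦ ?_⟩))
  · refine Ideal.mem_span_singleton_sup.2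
      ⟨-X (i, k), _, truncatedEdge_mem_starIdeal hi, ?_⟩
    rw [truncatedEdge_eq_add hk]
    ring
  · rcases Finset.mem_insert.1 hl with rfl | hl
    · exact Ideal.mem_sup_left (Ideal.mem_span_singleton_self _)
    · exact Ideal.mem_sup_right (X_mem_starIdeal hl)
  · exact (Ideal.span_singleton_le_iff_mem _).2 (X_mem_starIdeal (Finset.mem_insert_self k T))
  · rw [truncatedEdge_eq_add hk]
    exact add_mem (Ideal.mul_mem_right _ _ (X_mem_starIdeal (Finset.mem_insert_self k T)))
      (truncatedEdge_mem_starIdeal hi)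
  · exact X_mem_starIdeal (Finset.mem_insert_of_mem hl)

theorem truncatedEdge_mem_supported {s : Set (V × κ)} (hi : ∀ k ∉ T, (i, k) ∈ s)
    (hc : ∀ k ∉ T, (c, k) ∈ s) : truncatedEdge K c T i ∈ supported K s :=
  sum_mem fun k hk ↦ mul_mem (X_mem_supported_of_mem (hi k (Finset.mem_compl.1 hk)))
    (X_mem_supported_of_mem (hc k (Finset.mem_compl.1 hk)))

theorem starIdeal_generators_subset_supported (hic : i ≠ c) (hi : i ∈ A → k ∈ T) :
    truncatedEdge K c T '' A ∪ (fun l ↦ X (c, l)) '' T ⊆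
      (supported K {(i, k)}ᶜ : Set (MvPolynomial (V × κ) K)) := by
  have center_mem (l) : (c, l) ∈ ({(i, k)}ᶜ : Set (V × κ)) := by simp [hic.symm]
  rintro _ (⟨i', hi', rfl⟩ | ⟨l, -, rfl⟩)
  · refine truncatedEdge_mem_supported (fun l hl h ↦ ?_) fun l _ ↦ center_mem l
    obtain ⟨rfl, rfl⟩ := Prod.ext_iff.1 h
    exact hl (hi hi')
  · exact X_mem_supported_of_mem (center_mem l)

theorem isSMulRegular_truncatedEdge {s : Set (MvPolynomial (V × κ) K)} (hic : i ≠ c)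
    (hs : s ⊆ supported K {(i, k)}ᶜ) (hk : k ∉ T)
    (hreg : IsSMulRegular (MvPolynomial (V × κ) K ⧸ Ideal.span s)
      (X (c, k) : MvPolynomial (V × κ) K)) :
    IsSMulRegular (MvPolynomial (V × κ) K ⧸ Ideal.span s) (truncatedEdge K c T i) := by
  have center_mem (l) : (c, l) ∈ ({(i, k)}ᶜ : Set (V × κ)) := by simp [hic.symm]
  rw [truncatedEdge_eq_add hk]
  refine isSMulRegular_quotient_linear hs (X_mem_supported_of_mem (center_mem k)) ?_ hreg
  exact truncatedEdge_mem_supported (fun l hl h ↦ hl (by simp_all)) fun l _ ↦ center_mem l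

theorem isSMulRegular_starIdeal_X_center (hc : c ∉ A) (hk : k ∉ T)
    (hcard : A.card + T.card < Fintype.card κ) :
    IsSMulRegular (MvPolynomial (V × κ) K ⧸ starIdeal K c A T)
      (X (c, k) : MvPolynomial (V × κ) K) := by
  classical
  induction A using Finset.induction_on generalizing T k with
  | empty =>
    have hs : (fun k ↦ X (c, k)) '' (T : Set κ) ⊆
        (supported K {(c, k)}ᶜ : Set (MvPolynomial (V × κ) K)) := by
      rintro _ ⟨l, hl, rfl⟩
      refine X_mem_supported_of_mem fun h ↦ hk ?_
      obtain rfl : l = k := congrArg Prod.snd h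
      exact hl
    rw [starIdeal, Finset.coe_empty, Set.image_empty, Set.empty_union]
    simpa using isSMulRegular_quotient_linear hs (one_mem _) (zero_mem _) (IsSMulRegular.one _)
  | insert i A hi ih =>
    rw [Finset.card_insert_of_notMem hi] at hcard
    obtain ⟨hic, hc⟩ := not_or.1 (mt Finset.mem_insert.2 hc)
    have hkT : (insert k T).card = T.card + 1 := Finset.card_insert_of_notMem hk
    obtain ⟨l, -, hl⟩ : ∃ l ∈ Finset.univ, l ∉ insert k T :=
      Finset.exists_mem_notMem_of_card_lt_card (by rw [hkT, Finset.card_univ]; lia)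
    rw [starIdeal_insert_left]
    refine isSMulRegular_quotient_span_singleton_sup (ih hc hk (by lia)) ?_
    rw [← starIdeal_insert_right hk]
    exact isSMulRegular_truncatedEdge (Ne.symm hic)
      (starIdeal_generators_subset_supported (Ne.symm hic) (absurd · hi))
      (fun h ↦ hl (Finset.mem_insert_of_mem h)) (ih hc hl (by lia))

section IsPrime

variable {q : κ}

/-- The free coordinates on the zero locus of `starIdeal K c A T` where the variable `(c, q)` is
invertible: the edge of `i ∈ A` is then solved for `(i, q)`. -/
def freeCoordinates (c : V) (A : Finset V) (T : Finset κ) (q : κ) : Set (V × κ) :=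
  {v | (v.1 = c → v.2 ∉ T) ∧ (v.1 ∈ A → v.2 ≠ q)}

omit [Fintype κ] [DecidableEq κ] in
theorem center_mem_freeCoordinates (hc : c ∉ A) (hk : k ∉ T) :
    (c, k) ∈ freeCoordinates c A T q :=
  ⟨fun _ ↦ hk, (absurd · hc)⟩

theorem exists_rename_eq_truncatedEdge (hc : c ∉ A) (i : V) :
    ∃ p : MvPolynomial (freeCoordinates c A T q) K,
      rename (↑) p = truncatedEdge K c (insert q T) i := by
  change truncatedEdge K c (insert q T) i ∈ (rename _).range
  rw [← supported_eq_range_rename]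
  refine truncatedEdge_mem_supported (fun k hk ↦ ?_) fun k hk ↦ ?_ <;>
    obtain ⟨hkq, hk⟩ := not_or.1 (mt Finset.mem_insert.2 hk)
  exacts [⟨fun _ ↦ hk, fun _ ↦ hkq⟩, center_mem_freeCoordinates hc hk]

variable [IsDomain K]

theorem exists_rationalChart_starIdeal (hc : c ∉ A) (hq : q ∉ T) :
    ∃ C : RationalChart (starIdeal K c A T) (freeCoordinates c A T q),
      C.den = X ⟨(c, q), center_mem_freeCoordinates hc hq⟩ := by
  classical
  choose p hp using exists_rename_eq_truncatedEdge (K := K) (T := T) (q := q) hc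
  refine ⟨.ofNum (X ⟨(c, q), center_mem_freeCoordinates hc hq⟩)
    (fun v ↦ if v.1 = c then 0 else -p v.1) (X_ne_zero _) (fun ⟨i, k⟩ hv ↦ ?_) fun φ hφ hφX ↦
      starIdeal_le_iff.2 ⟨fun i hi ↦ ?_, fun k hk ↦ ?_⟩, rfl⟩
  · by_cases hic : i = c
    · subst hic
      have hk : k ∈ T := by simpa [freeCoordinates, hc] using hv
      simpa using Ideal.mul_mem_left _ _ (X_mem_starIdeal hk)
    · obtain ⟨hi, rfl⟩ : i ∈ A ∧ k = q := by simpa [freeCoordinates, hic] using hv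
      simpa [hic, hp, ← truncatedEdge_eq_add hq] using truncatedEdge_mem_starIdeal hi
  · have hic : i ≠ c := fun h ↦ hc (h ▸ hi)
    have hφc := hφ (X ⟨(c, q), center_mem_freeCoordinates hc hq⟩)
    rw [rename_X] at hφc
    rw [RingHom.mem_ker, truncatedEdge_eq_add hq, ← hp, map_add, map_mul, hφ,
      hφX (i, q) fun h ↦ h.2 hi rfl, hφc, if_neg hic, map_neg, mul_div_cancel₀, neg_add_cancel]
    exact (FaithfulSMul.algebraMap_eq_zero_iff _ _).not.2 (X_ne_zero _)
  · rw [RingHom.mem_ker, hφX (c, k) fun h ↦ h.1 rfl hk, if_pos rfl, map_zero, zero_div]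

theorem isPrime_starIdeal (hc : c ∉ A) (hcard : A.card + T.card < Fintype.card κ) :
    (starIdeal K c A T).IsPrime := by
  obtain ⟨q, -, hq⟩ : ∃ q ∈ Finset.univ, q ∉ T :=
    Finset.exists_mem_notMem_of_card_lt_card (by rw [Finset.card_univ]; lia)
  obtain ⟨C, hC⟩ := exists_rationalChart_starIdeal (K := K) hc hq
  refine C.isPrime ?_
  rw [hC, rename_X]
  exact isSMulRegular_starIdeal_X_center hc hq hcard

end IsPrime

end StarIdeal

section StarIdealDeterminant

variable {V κ K : Type*} [Fintype κ] [DecidableEq κ] [CommRing K]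
variable {c : V} {A : Finset V} {T : Finset κ} {j : ℕ}

theorem genericDet_notMem_starIdeal [Nontrivial K] {v : Fin j → Fin j → V × κ}
    (hv : Function.Injective v.uncurry) (hc : ∀ a b, (v a b).1 ≠ c) :
    genericDet K v ∉ starIdeal K c A T := by
  classical
  let φ : MvPolynomial (V × κ) K →ₐ[K] MvPolynomial (V × κ) K :=
    aeval fun w ↦ if w.1 = c then 0 else X w
  have hφ : starIdeal K c A T ≤ RingHom.ker φ :=
    starIdeal_le_iff.2 ⟨by simp [φ, truncatedEdge], by simp [φ]⟩
  have hφv : φ (genericDet K v) = genericDet K v := by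
    refine (map_genericDet φ.toRingHom v).trans ?_
    simp [φ, genericDet, hc]
  exact fun h ↦ genericDet_ne_zero (K := K) hv (hφv.symm.trans (hφ h))

variable [IsDomain K] [DecidableEq V]

theorem isSMulRegular_starIdeal_genericDet_of_X_center {e : Fin (j + 1) → V}
    {f : Fin (j + 1) → κ} {k : κ}
    (he : Function.Injective e) (hec : ∀ a, e a ≠ c) (hf : Function.Injective f) (hf₀ : f 0 ∈ T)
    (hcard : j + T.card < Fintype.card κ) (hk : k ∉ T)
    (hreg : IsSMulRegular
      (MvPolynomial (V × κ) K ⧸ Ideal.span {genericDet K fun a b : Fin j ↦ (e a.succ, f b.succ)} ⊔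
        starIdeal K c (Finset.univ.image fun a : Fin j ↦ e a.succ) T)
      (X (c, k) : MvPolynomial (V × κ) K)) :
    IsSMulRegular (MvPolynomial (V × κ) K ⧸ starIdeal K c (Finset.univ.image e) T)
      (genericDet K fun a b ↦ (e a, f b)) := by
  have hv : Function.Injective (Function.uncurry fun a b ↦ (e a, f b)) := he.prodMap hf
  have minor_mem (l) :
      (genericDet K fun a b : Fin j ↦ (e a.succ, f b.succ)) ∈ supported K {(e 0, l)}ᶜ :=
    genericDet_mem_supported fun a b h ↦ a.succ_ne_zero (he (congrArg Prod.fst h))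
  have e₀_notMem : e 0 ∉ Finset.univ.image fun a : Fin j ↦ e a.succ := by simp [he.eq_iff]
  have image_e : Finset.univ.image e =
      insert (e 0) (Finset.univ.image fun a : Fin j ↦ e a.succ) := by
    ext i
    simp [Fin.exists_fin_succ, eq_comm]
  obtain ⟨g, hg, hdet⟩ := exists_genericDet_succ_eq (K := K) hv
  suffices h : IsSMulRegular (MvPolynomial (V × κ) K ⧸ starIdeal K c (Finset.univ.image e) T)
      (genericDet K fun a b : Fin j ↦ (e a.succ, f b.succ)) from
    hdet ▸ isSMulRegular_quotient_linear
      (starIdeal_generators_subset_supported (hec 0) fun _ ↦ hf₀) (minor_mem _) hg h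
  rw [image_e, starIdeal_insert_left]
  have hprime : (starIdeal K c (Finset.univ.image fun a : Fin j ↦ e a.succ) T).IsPrime := by
    refine isPrime_starIdeal (by simp [hec]) (lt_of_le_of_lt ?_ hcard)
    simpa using Finset.card_image_le (s := Finset.univ) (f := fun a : Fin j ↦ e a.succ)
  refine isSMulRegular_quotient_span_singleton_sup (isSMulRegular_quotient_of_isPrime
    (genericDet_notMem_starIdeal ?_ fun a _ ↦ hec _)) ?_
  · exact (he.comp (Fin.succ_injective _)).prodMap (hf.comp (Fin.succ_injective _))
  · rw [starIdeal, ← Ideal.span_insert] at hreg ⊢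
    exact isSMulRegular_truncatedEdge (hec 0) (Set.insert_subset (minor_mem k)
      (starIdeal_generators_subset_supported (hec 0) (absurd · e₀_notMem))) hk hreg

theorem exists_isSMulRegular_X_center {e : Fin j → V} {f : Fin j → κ}
    (he : Function.Injective e) (hec : ∀ a, e a ≠ c) (hf : Function.Injective f)
    (hfT : ∀ a, f a ∉ T) (hcard : j + T.card < Fintype.card κ) :
    ∃ k ∉ T, IsSMulRegular (MvPolynomial (V × κ) K ⧸
      Ideal.span {genericDet K fun a b ↦ (e a, f b)} ⊔ starIdeal K c (Finset.univ.image e) T)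
      (X (c, k) : MvPolynomial (V × κ) K) := by
  induction j generalizing T with
  | zero =>
    obtain ⟨k, -, hk⟩ : ∃ k ∈ Finset.univ, k ∉ T :=
      Finset.exists_mem_notMem_of_card_lt_card (by rw [Finset.card_univ]; lia)
    refine ⟨k, hk, isSMulRegular_quotient_iff.2 fun x _ ↦ ?_⟩
    simp [genericDet, Ideal.span_singleton_one]
  | succ j ih =>
    have hcard' : j + (insert (f 0) T).card < Fintype.card κ := by
      rw [Finset.card_insert_of_notMem (hfT 0)]
      lia
    obtain ⟨k, hk, hreg⟩ := ih (he.comp (Fin.succ_injective j)) (fun a ↦ hec _)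
      (hf.comp (Fin.succ_injective j)) (T := insert (f 0) T)
      (fun a ↦ by simp [hf.eq_iff, hfT]) hcard'
    refine ⟨f 0, hfT 0, isSMulRegular_quotient_span_singleton_sup
      (isSMulRegular_starIdeal_X_center (by simp [hec]) (hfT 0) (lt_of_le_of_lt ?_ hcard)) ?_⟩
    · simpa using Finset.card_image_le (s := Finset.univ) (f := e)
    · rw [← starIdeal_insert_right (hfT 0)]
      exact isSMulRegular_starIdeal_genericDet_of_X_center he hec hf
        (Finset.mem_insert_self _ _) hcard' hk hreg

theorem isSMulRegular_starIdeal_genericDet {e : Fin (j + 1) → V} {f : Fin (j + 1) → κ}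
    (he : Function.Injective e) (hec : ∀ a, e a ≠ c) (hf : Function.Injective f) (hf₀ : f 0 ∈ T)
    (hfT : ∀ a : Fin j, f a.succ ∉ T) (hcard : j + T.card < Fintype.card κ) :
    IsSMulRegular (MvPolynomial (V × κ) K ⧸ starIdeal K c (Finset.univ.image e) T)
      (genericDet K fun a b ↦ (e a, f b)) := by
  obtain ⟨k, hk, hreg⟩ := exists_isSMulRegular_X_center (K := K)
    (he.comp (Fin.succ_injective j)) (fun a ↦ hec _) (hf.comp (Fin.succ_injective j)) hfT hcard
  exact isSMulRegular_starIdeal_genericDet_of_X_center he hec hf hf₀ hcard hk hreg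

end StarIdealDeterminant

section CramerChart

theorem det_mul_add_mul_cramer {n R : Type*} [Fintype n] [DecidableEq n] [CommRing R]
    (M : Matrix n n R) (x y : n → R) (r : R) (b : n) :
    M.det * x b + r * M.cramer y b = ∑ a, M.adjugate b a * (∑ b, M a b * x b + y a * r) := by
  have hx : M.adjugate.mulVec (M.mulVec x) = M.det • x := by
    rw [Matrix.mulVec_mulVec, Matrix.adjugate_mul, Matrix.smul_mulVec, Matrix.one_mulVec]
  have hxb : M.det * x b = ∑ a, M.adjugate b a * ∑ b, M a b * x b := (congrFun hx b).symm
  have hy : M.cramer y b = ∑ a, M.adjugate b a * y a :=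
    congrFun (Matrix.cramer_eq_adjugate_mulVec M y) b
  rw [hxb, hy, Finset.mul_sum, ← Finset.sum_add_distrib]
  exact Finset.sum_congr rfl fun a _ ↦ by ring

theorem sum_map_mul_map_cramer_div {n R F : Type*} [Fintype n] [DecidableEq n] [CommRing R]
    [Field F] (φ : R →+* F) {M : Matrix n n R} (hM : φ M.det ≠ 0) (x : R) (y : n → R) (a : n) :
    ∑ b, φ (M a b) * (φ (-(x * M.cramer y b)) / φ M.det) + φ (y a) * φ x = 0 := by
  have hcramer : ∑ b, M a b * M.cramer y b = M.det * y a := congrFun (M.mulVec_cramer y) a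
  have hsum : ∑ b, M a b * -(x * M.cramer y b) = -(x * (M.det * y a)) := by
    simp only [← hcramer, Finset.mul_sum, ← Finset.sum_neg_distrib]
    exact Finset.sum_congr rfl fun b _ ↦ by ring
  simp only [← mul_div_assoc, ← map_mul]
  rw [← Finset.sum_div, ← map_sum, hsum, map_neg, map_mul, map_mul, map_mul]
  field_simp
  ring

variable {V K : Type*} [CommRing K] {c i : V} {j : ℕ}

theorem cramer_eq_genericDet {σ : Type*} (v : Fin j → Fin (j + 1) → σ) (b : Fin j) :
    (Matrix.of fun a b : Fin j ↦ (X (v a b.castSucc) : MvPolynomial σ K)).cramer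
      (fun a ↦ X (v a (Fin.last j))) b =
      genericDet K fun a k ↦ v a (Function.update Fin.castSucc b (Fin.last j) k) := by
  rw [Matrix.cramer_apply, genericDet]
  congr 1
  ext a k : 2
  simp only [Matrix.updateCol_apply, Matrix.of_apply, Function.update_apply]
  split_ifs <;> rfl

theorem truncatedEdge_empty_eq_add :
    truncatedEdge K c (∅ : Finset (Fin (j + 1))) i =
      ∑ b : Fin j, X (i, b.castSucc) * X (c, b.castSucc) +
        X (i, Fin.last j) * X (c, Fin.last j) := by
  rw [truncatedEdge_empty, Fin.sum_univ_castSucc]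

variable [DecidableEq V] {e : Fin j → V}

theorem genericDet_mul_X_center_add_mem_starIdeal (b : Fin j) :
    genericDet K (fun a b ↦ (e a, b.castSucc)) * X (c, b.castSucc) + X (c, Fin.last j) *
      genericDet K (fun a k ↦ (e a, Function.update Fin.castSucc b (Fin.last j) k)) ∈
      starIdeal K c (Finset.univ.image e) (∅ : Finset (Fin (j + 1))) := by
  have h := det_mul_add_mul_cramer (.of fun a b ↦ (X (e a, b.castSucc) : MvPolynomial _ K))
    (fun b ↦ X (c, b.castSucc)) (fun a ↦ X (e a, Fin.last j)) (X (c, Fin.last j)) b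
  rw [cramer_eq_genericDet (fun a k ↦ (e a, k))] at h
  refine h ▸ sum_mem fun a _ ↦ Ideal.mul_mem_left _ _ ?_
  have := truncatedEdge_mem_starIdeal (K := K) (c := c) (T := (∅ : Finset (Fin (j + 1))))
    (Finset.mem_image_of_mem e (Finset.mem_univ a))
  rwa [truncatedEdge_empty_eq_add] at this

/-- The free coordinates on the zero locus of the ideal of the star with leaves `e a` where the
maximal minor of their first `j` columns is invertible: Cramer's rule then determines the first
`j` entries of the row `c`. -/
def cramerCoordinates (c : V) (j : ℕ) : Set (V × Fin (j + 1)) :=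
  {v | v.1 = c → v.2 = Fin.last j}

omit [DecidableEq V] in
theorem leaf_mem_cramerCoordinates (hi : i ≠ c) (k : Fin (j + 1)) :
    (i, k) ∈ cramerCoordinates c j :=
  (absurd · hi)

theorem exists_rationalChart_starIdeal_cramer [IsDomain K] (he : Function.Injective e)
    (hec : ∀ a, e a ≠ c) :
    ∃ C : RationalChart (starIdeal K c (Finset.univ.image e) ∅) (cramerCoordinates c j),
      C.den = genericDet K fun a b ↦ ⟨(e a, b.castSucc), leaf_mem_cramerCoordinates (hec a) _⟩ := by
  let v (a : Fin j) (k) : cramerCoordinates c j := ⟨(e a, k), leaf_mem_cramerCoordinates (hec a) k⟩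
  let M : Matrix (Fin j) (Fin j) (MvPolynomial (cramerCoordinates c j) K) :=
    .of fun a b ↦ X (v a b.castSucc)
  let y (a : Fin j) : MvPolynomial (cramerCoordinates c j) K := X (v a (Fin.last j))
  let x : MvPolynomial (cramerCoordinates c j) K := X ⟨(c, Fin.last j), fun _ ↦ rfl⟩
  let num (w : V × Fin (j + 1)) : MvPolynomial (cramerCoordinates c j) K :=
    Fin.lastCases 0 (fun b ↦ -(x * M.cramer y b)) w.2
  have hM : M.det = genericDet K fun a b ↦ v a b.castSucc := rfl
  have num_castSucc (b : Fin j) : num (c, b.castSucc) = -(x * M.cramer y b) :=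
    Fin.lastCases_castSucc ..
  have hv : Function.Injective (Function.uncurry fun a b : Fin j ↦ v a b.castSucc) :=
    .of_comp (f := Subtype.val) (he.prodMap (Fin.castSucc_injective j))
  refine ⟨.ofNum M.det num (genericDet_ne_zero hv) (fun w hw ↦ ?_) fun φ hφ hφX ↦
    starIdeal_le_iff.2 ⟨fun i hi ↦ ?_, by simp⟩, rfl⟩
  · obtain ⟨hc, hne⟩ := Classical.not_imp.1 hw
    obtain ⟨b, hb⟩ := Fin.exists_castSucc_eq.2 hne
    obtain rfl : w = (c, b.castSucc) := Prod.ext hc hb.symm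
    rw [num_castSucc, cramer_eq_genericDet v, map_neg, map_mul, rename_X, sub_neg_eq_add]
    rw [rename_genericDet, hM, rename_genericDet]
    exact genericDet_mul_X_center_add_mem_starIdeal (e := e) b
  · obtain ⟨a, -, rfl⟩ := Finset.mem_image.1 hi
    have φ_leaf (k) : φ (X (e a, k)) = algebraMap (MvPolynomial _ K) _ (X (v a k)) := by
      rw [← hφ, rename_X]
    have φ_last : φ (X (c, Fin.last j)) = algebraMap _ _ x := by rw [← hφ, rename_X]
    have φ_castSucc (b : Fin j) : φ (X (c, b.castSucc)) =
        algebraMap _ _ (-(x * M.cramer y b)) / algebraMap _ _ M.det := by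
      rw [hφX _ fun h ↦ Fin.castSucc_ne_last b (h rfl), num_castSucc]
    rw [truncatedEdge_empty_eq_add, RingHom.mem_ker, map_add, map_mul, map_sum]
    simp only [map_mul φ, φ_leaf, φ_last, φ_castSucc]
    exact sum_map_mul_map_cramer_div _
      ((FaithfulSMul.algebraMap_eq_zero_iff _ _).not.2 (genericDet_ne_zero hv)) x y a

end CramerChart

section StarRing

variable {V : Type*} [DecidableEq V] (K : Type*) [CommRing K] {m : ℕ} (c : V) (e : Fin (m + 1) → V)

/-- The LSS ring of the star with center `c` and leaves `e a`, in dimension one more than the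
number of leaves. -/
abbrev StarRing : Type _ :=
  MvPolynomial (V × Fin (m + 2)) K ⧸ starIdeal K c (Finset.univ.image e) ∅

/-- The `k`-th coordinate of the vector at the center of the star. -/
noncomputable def centerCoord (k : Fin (m + 2)) : StarRing K c e :=
  Ideal.Quotient.mk _ (X (c, k))

/-- The maximal minor in the columns `f` of the matrix whose rows are the vectors at the leaves
of the star. -/
noncomputable def leafMinor (f : Fin (m + 1) → Fin (m + 2)) : StarRing K c e :=
  Ideal.Quotient.mk _ (genericDet K fun a b ↦ (e a, f b))

variable {K c e}

theorem leafMinor_mul_centerCoord (b : Fin (m + 1)) :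
    leafMinor K c e Fin.castSucc * centerCoord K c e b.castSucc =
      -(centerCoord K c e (Fin.last _) *
        leafMinor K c e (Function.update Fin.castSucc b (Fin.last _))) :=
  eq_neg_of_add_eq_zero_left
    (Ideal.Quotient.eq_zero_iff_mem.2 (genericDet_mul_X_center_add_mem_starIdeal b))

variable (K c e) in
/-- The ideal of the locus where the vector at the center of the star vanishes. -/
noncomputable def centerIdeal : Ideal (StarRing K c e) :=
  Ideal.span (Set.range (centerCoord K c e))

theorem centerCoord_mem_centerIdeal (k : Fin (m + 2)) : centerCoord K c e k ∈ centerIdeal K c e :=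
  Ideal.subset_span (Set.mem_range_self k)

theorem centerIdeal_ne_bot {k : Fin (m + 2)} (hk : centerCoord K c e k ≠ 0) :
    centerIdeal K c e ≠ ⊥ :=
  (Submodule.ne_bot_iff _).2 ⟨_, centerCoord_mem_centerIdeal k, hk⟩

theorem centerCoord_last_dvd_leafMinor_mul {r : StarRing K c e} (hr : r ∈ centerIdeal K c e) :
    centerCoord K c e (Fin.last _) ∣ leafMinor K c e Fin.castSucc * r := by
  induction hr using Submodule.span_induction with
  | mem r hr =>
    obtain ⟨k, rfl⟩ := hr
    cases k using Fin.lastCases with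
    | last => exact dvd_mul_left _ _
    | cast b =>
      rw [leafMinor_mul_centerCoord]
      exact (dvd_mul_right (centerCoord K c e _) _).neg_right
  | zero => simp
  | add a b _ _ ha hb => exact mul_add _ a b ▸ dvd_add ha hb
  | smul a r _ hr => exact mul_left_comm _ a r ▸ hr.mul_left a

theorem mk_dvd_mk_iff {A : Type*} [CommRing A] {I : Ideal A} {a b : A} :
    Ideal.Quotient.mk I a ∣ Ideal.Quotient.mk I b ↔ b ∈ Ideal.span {a} ⊔ I := by
  rw [← Ideal.mem_span_singleton, ← Set.image_singleton, ← Ideal.map_span, ← Ideal.mem_comap,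
    Ideal.comap_map_of_surjective' _ Ideal.Quotient.mk_surjective, Ideal.mk_ker]

theorem centerCoord_zero_dvd_of_dvd_leafMinor_mul [IsDomain K] (he : Function.Injective e)
    (hec : ∀ a, e a ≠ c) {r : StarRing K c e}
    (h : centerCoord K c e 0 ∣ leafMinor K c e Fin.castSucc * r) : centerCoord K c e 0 ∣ r := by
  obtain ⟨r, rfl⟩ := Ideal.Quotient.mk_surjective r
  rw [leafMinor, centerCoord, ← map_mul, mk_dvd_mk_iff,
    ← starIdeal_insert_right (Finset.notMem_empty 0)] at h
  rw [centerCoord, mk_dvd_mk_iff, ← starIdeal_insert_right (Finset.notMem_empty 0)]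
  exact isSMulRegular_quotient_iff.1 (isSMulRegular_starIdeal_genericDet he hec
    (Fin.castSucc_injective _) (by simp) (by simp [Fin.ext_iff]) (by simp)) r h

section Arc

/-- The point of the variety of the star with values in `K[T]` whose vector at the center is
`(w * T, …, w * T, T)`, and at the leaf `e a` the basis vector `a` minus `w` times the last basis
vector. -/
noncomputable def arc (c : V) (e : Fin (m + 1) → V) (w : Polynomial K) (v : V × Fin (m + 2)) :
    Polynomial K :=
  if v.1 = c then Fin.lastCases Polynomial.X (fun _ ↦ w * Polynomial.X) v.2
  else Fin.lastCases (-w) (fun b ↦ if v.1 = e b then 1 else 0) v.2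

theorem starIdeal_le_ker_aeval_arc (he : Function.Injective e) (hec : ∀ a, e a ≠ c)
    (w : Polynomial K) : starIdeal K c (Finset.univ.image e) ∅ ≤
      RingHom.ker (aeval (R := K) (arc c e w)) := by
  refine starIdeal_le_iff.2 ⟨fun i hi ↦ ?_, by simp⟩
  obtain ⟨a, -, rfl⟩ := Finset.mem_image.1 hi
  simp [truncatedEdge_empty_eq_add, arc, hec, he.eq_iff]

/-- Evaluation of the functions on the variety of the star at `arc c e w`. -/
noncomputable def evalArc (he : Function.Injective e) (hec : ∀ a, e a ≠ c) (w : Polynomial K) :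
    StarRing K c e →+* Polynomial K :=
  Ideal.Quotient.lift _ (aeval (arc c e w)).toRingHom (starIdeal_le_ker_aeval_arc he hec w)

variable (he : Function.Injective e) (hec : ∀ a, e a ≠ c) (w : Polynomial K)

theorem evalArc_centerCoord_castSucc (b : Fin (m + 1)) :
    evalArc he hec w (centerCoord K c e b.castSucc) = w * Polynomial.X := by
  simp [evalArc, centerCoord, arc]

theorem evalArc_centerCoord_zero :
    evalArc he hec w (centerCoord K c e 0) = w * Polynomial.X :=
  evalArc_centerCoord_castSucc he hec w 0

theorem evalArc_centerCoord_last :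
    evalArc he hec w (centerCoord K c e (Fin.last _)) = Polynomial.X := by
  simp [evalArc, centerCoord, arc]

theorem evalArc_leafMinor_castSucc : evalArc he hec w (leafMinor K c e Fin.castSucc) = 1 := by
  refine (map_genericDet (aeval (arc c e w)).toRingHom _).trans
    ((congrArg Matrix.det ?_).trans Matrix.det_one)
  ext a b : 2
  simp [arc, hec, he.eq_iff, Matrix.one_apply]

variable [Nontrivial K]

include he hec

theorem centerCoord_ne_zero (k : Fin (m + 2)) : centerCoord K c e k ≠ 0 := by
  refine ne_zero_of_map (f := evalArc he hec 1) ?_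
  cases k using Fin.lastCases with
  | last => simp [evalArc_centerCoord_last]
  | cast b => simp [evalArc_centerCoord_castSucc]

theorem leafMinor_castSucc_ne_zero : leafMinor K c e Fin.castSucc ≠ 0 := by
  refine ne_zero_of_map (f := evalArc he hec 1) ?_
  simp [evalArc_leafMinor_castSucc]

end Arc

section Charts

variable [IsDomain K]

/-- The free coordinates on the locus of the variety of the star where `X (c, 0)` is invertible. -/
abbrev leafCoordinates (c : V) (e : Fin (m + 1) → V) : Set (V × Fin (m + 2)) :=
  freeCoordinates c (Finset.univ.image e) ∅ 0

theorem exists_irreducible_coordinateHom_eq_centerCoord (hec : ∀ a, e a ≠ c) (k : Fin (m + 2)) :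
    ∃ q, Irreducible q ∧
      coordinateHom (starIdeal K c (Finset.univ.image e) ∅) (leafCoordinates c e) q =
        centerCoord K c e k :=
  ⟨X ⟨(c, k), center_mem_freeCoordinates (by simpa using hec) (Finset.notMem_empty k)⟩,
    X_prime.irreducible, coordinateHom_X _⟩

theorem exists_irreducible_coordinateHom_eq_leafMinor (he : Function.Injective e)
    (hec : ∀ a, e a ≠ c) :
    ∃ q, Irreducible q ∧
      coordinateHom (starIdeal K c (Finset.univ.image e) ∅) (leafCoordinates c e) q =
        leafMinor K c e (Function.update Fin.castSucc 0 (Fin.last _)) := by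
  have update_ne_zero (b : Fin (m + 1)) :
      Function.update Fin.castSucc 0 (Fin.last (m + 1)) b ≠ 0 := by
    rcases eq_or_ne b 0 with rfl | hb
    · simp [Fin.ext_iff]
    · simp [hb]
  have update_injective :
      Function.Injective (Function.update Fin.castSucc (0 : Fin (m + 1)) (Fin.last (m + 1))) := by
    intro a b h
    rcases eq_or_ne a 0 with rfl | ha <;> rcases eq_or_ne b 0 with rfl | hb
    · rfl
    · simp [hb, eq_comm] at h
    · simp [ha] at h
    · simpa [ha, hb] using h
  refine ⟨genericDet K fun a b ↦ ⟨(e a, Function.update Fin.castSucc 0 (Fin.last _) b),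
    fun h ↦ absurd h (hec a), fun _ ↦ update_ne_zero b⟩, irreducible_genericDet ?_,
    coordinateHom_genericDet _⟩
  exact .of_comp (f := Subtype.val) (he.prodMap update_injective)

theorem exists_rationalChart_leafCoordinates (hec : ∀ a, e a ≠ c) :
    ∃ C : RationalChart (starIdeal K c (Finset.univ.image e) ∅) (leafCoordinates c e),
      Irreducible C.den ∧ coordinateHom _ _ C.den = centerCoord K c e 0 := by
  obtain ⟨C, hC⟩ := exists_rationalChart_starIdeal (K := K) (c := c)
    (A := Finset.univ.image e) (by simpa using hec) (Finset.notMem_empty (0 : Fin (m + 2)))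
  exact ⟨C, hC ▸ X_prime.irreducible, hC ▸ coordinateHom_X _⟩

theorem exists_rationalChart_cramerCoordinates (he : Function.Injective e)
    (hec : ∀ a, e a ≠ c) :
    ∃ C : RationalChart (starIdeal K c (Finset.univ.image e) ∅) (cramerCoordinates c (m + 1)),
      coordinateHom _ _ C.den = leafMinor K c e Fin.castSucc := by
  obtain ⟨C, hC⟩ := exists_rationalChart_starIdeal_cramer (K := K) he hec
  exact ⟨C, hC ▸ coordinateHom_genericDet _⟩

end Charts

variable [IsDomain (StarRing K c e)] {F : Type*} [Field F] [Algebra (StarRing K c e) F]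
  [IsFractionRing (StarRing K c e) F]
  {hs : centerCoord K c e 0 ≠ 0} {ht : leafMinor K c e Fin.castSucc ≠ 0}

section LocalGenerator

variable {s p : Fˣ}

theorem isLocalGenerator_awaySubalgebra_centerCoord
    (hsF : (s : F) = algebraMap _ F (centerCoord K c e 0)) :
    IsLocalGenerator (awaySubalgebra F hs) (centerIdeal K c e : FractionalIdeal _ F) s :=
  isLocalGenerator_coeIdeal_of_mul_le hs (centerCoord_mem_centerIdeal 0) hsF
    fun _ _ ↦ dvd_mul_right _ _

theorem isLocalGenerator_awaySubalgebra_leafMinor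
    (hpF : (p : F) = algebraMap _ F (centerCoord K c e (Fin.last _))) :
    IsLocalGenerator (awaySubalgebra F ht) (centerIdeal K c e : FractionalIdeal _ F) p :=
  isLocalGenerator_coeIdeal_of_mul_le ht (centerCoord_mem_centerIdeal _) hpF
    fun _ hr ↦ centerCoord_last_dvd_leafMinor_mul hr

end LocalGenerator

variable [IsDomain K]

theorem awaySubalgebra_centerCoord_inf_leafMinor (he : Function.Injective e)
    (hec : ∀ a, e a ≠ c) : awaySubalgebra F hs ⊓ awaySubalgebra F ht = ⊥ :=
  awaySubalgebra_inf_awaySubalgebra hs ht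
    fun _ ↦ centerCoord_zero_dvd_of_dvd_leafMinor_mul he hec

section UniqueFactorizationMonoid

variable [UniqueFactorizationMonoid K]

theorem uniqueFactorizationMonoid_awaySubalgebra_centerCoord (hec : ∀ a, e a ≠ c) :
    UniqueFactorizationMonoid (awaySubalgebra F hs) := by
  obtain ⟨C, -, hC⟩ := exists_rationalChart_leafCoordinates (K := K) hec
  exact uniqueFactorizationMonoid_awaySubalgebra C.coordinateHom_injective hs hC
    (hC ▸ C.exists_pow_mul_eq)

theorem uniqueFactorizationMonoid_awaySubalgebra_leafMinor (he : Function.Injective e)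
    (hec : ∀ a, e a ≠ c) : UniqueFactorizationMonoid (awaySubalgebra F ht) := by
  obtain ⟨C, hC⟩ := exists_rationalChart_cramerCoordinates (K := K) he hec
  exact uniqueFactorizationMonoid_awaySubalgebra C.coordinateHom_injective ht hC
    (hC ▸ C.exists_pow_mul_eq)

theorem isIntegrallyClosed_starRing (he : Function.Injective e) (hec : ∀ a, e a ≠ c) :
    IsIntegrallyClosed (StarRing K c e) := by
  have hs := centerCoord_ne_zero (K := K) he hec 0
  have ht := leafMinor_castSucc_ne_zero (K := K) he hec
  let F := FractionRing (StarRing K c e)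
  have : IsIntegrallyClosed (awaySubalgebra F hs) :=
    (uniqueFactorizationMonoid_awaySubalgebra_centerCoord hec).instIsIntegrallyClosed
  have : IsIntegrallyClosed (awaySubalgebra F ht) :=
    (uniqueFactorizationMonoid_awaySubalgebra_leafMinor he hec).instIsIntegrallyClosed
  exact isIntegrallyClosed_of_inf_eq_bot
    (awaySubalgebra_centerCoord_inf_leafMinor (F := F) (hs := hs) (ht := ht) he hec)

end UniqueFactorizationMonoid

section Units

variable [UniqueFactorizationMonoid K] {s p : Fˣ}

theorem awaySubalgebra_centerCoord_units_le (hec : ∀ a, e a ≠ c)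
    (hsF : (s : F) = algebraMap _ F (centerCoord K c e 0)) :
    (awaySubalgebra F hs).toSubmonoid.units ≤
      (Units.map (algebraMap (StarRing K c e) F : StarRing K c e →* F)).range ⊔
        Subgroup.zpowers s := by
  obtain ⟨C, hirr, hC⟩ := exists_rationalChart_leafCoordinates (K := K) hec
  refine C.awaySubalgebra_units_le dvd_rfl hC.symm.dvd (S := {C.den}) (by simpa)
    (Submonoid.subset_closure rfl) (fun u ↦ Subgroup.mem_sup_left ⟨u, rfl⟩) ?_
  rintro _ rfl u hu
  obtain rfl : u = s := Units.ext (hu.trans (hC ▸ hsF.symm))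
  exact Subgroup.mem_sup_right (Subgroup.mem_zpowers u)

theorem awaySubalgebra_mul_units_le (he : Function.Injective e) (hec : ∀ a, e a ≠ c)
    (hsF : (s : F) = algebraMap _ F (centerCoord K c e 0))
    (hpF : (p : F) = algebraMap _ F (centerCoord K c e (Fin.last _))) :
    (awaySubalgebra F (mul_ne_zero hs ht)).toSubmonoid.units ≤
      (awaySubalgebra F hs).toSubmonoid.units ⊔ (awaySubalgebra F ht).toSubmonoid.units ⊔
        Subgroup.zpowers (p / s) := by
  obtain ⟨C, hirr, hC⟩ := exists_rationalChart_leafCoordinates (K := K) hec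
  obtain ⟨x, hx, hxp⟩ := exists_irreducible_coordinateHom_eq_centerCoord (K := K) hec (Fin.last _)
  obtain ⟨d, hd, hdD⟩ := exists_irreducible_coordinateHom_eq_leafMinor (K := K) he hec
  have hxd : coordinateHom _ _ (x * d) = -(leafMinor K c e Fin.castSucc * centerCoord K c e 0) := by
    rw [map_mul, hxp, hdD]
    exact (neg_eq_iff_eq_neg.2 (leafMinor_mul_centerCoord 0)).symm
  have hS : ∀ f ∈ ({C.den, x, d} : Set _), Irreducible f := by
    rintro _ (rfl | rfl | rfl) <;> assumption
  refine C.awaySubalgebra_units_le (dvd_mul_right C.den (x * d)) ?_ hS ?_ ?_ ?_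
  · rw [map_mul, hC, hxd]
    exact mul_dvd_mul dvd_rfl (dvd_mul_right _ _).neg_right
  · exact mul_mem (Submonoid.subset_closure (by simp)) (mul_mem
      (Submonoid.subset_closure (by simp)) (Submonoid.subset_closure (by simp)))
  · exact fun v ↦ Subgroup.mem_sup_left (Subgroup.mem_sup_left
      (algebraMap_mem_awaySubalgebra_units (n := 0) rfl (by simp)))
  · rintro _ (rfl | rfl | rfl) u hu
    · exact Subgroup.mem_sup_left (Subgroup.mem_sup_left
        (algebraMap_mem_awaySubalgebra_units (n := 1) hu (by simp [hC])))
    · have hups : u = p / s * s := by rw [div_mul_cancel, Units.ext_iff, hu, hxp, hpF]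
      rw [hups]
      exact mul_mem (Subgroup.mem_sup_right (Subgroup.mem_zpowers _))
        (Subgroup.mem_sup_left (Subgroup.mem_sup_left
          (algebraMap_mem_awaySubalgebra_units (n := 1) hsF (by simp))))
    · have hups : ((u * (p / s) : Fˣ) : F) = algebraMap _ F (-leafMinor K c e Fin.castSucc) := by
        rw [mul_div_assoc', Units.val_div_eq_div_val, Units.val_mul, div_eq_iff s.ne_zero, hu,
          hpF, hsF, ← hxp, ← map_mul, ← map_mul, mul_comm, hxd, map_neg, map_mul, map_neg, neg_mul]
      rw [← Subgroup.mul_mem_cancel_right _ (Subgroup.mem_sup_right (Subgroup.mem_zpowers (p / s)))]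
      exact Subgroup.mem_sup_left (Subgroup.mem_sup_right
        (algebraMap_mem_awaySubalgebra_units (n := 1) hups ⟨-1, by ring⟩))

theorem eq_zero_of_zpow_mem_sup (he : Function.Injective e) (hec : ∀ a, e a ≠ c)
    (hsF : (s : F) = algebraMap _ F (centerCoord K c e 0))
    (hpF : (p : F) = algebraMap _ F (centerCoord K c e (Fin.last _))) {k : ℤ}
    (hk : (p / s) ^ k ∈
      (awaySubalgebra F hs).toSubmonoid.units ⊔ (awaySubalgebra F ht).toSubmonoid.units) :
    k = 0 := by
  obtain ⟨u, hu, v, hv, huv⟩ := Subgroup.mem_sup.1 hk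
  obtain ⟨_, ⟨a, rfl⟩, _, ⟨j, rfl⟩, rfl⟩ :=
    Subgroup.mem_sup.1 (awaySubalgebra_centerCoord_units_le hec hsF hu)
  have ha : Units.map (algebraMap (StarRing K c e) F : StarRing K c e →* F) a ∈
      (awaySubalgebra F ht).toSubmonoid.units :=
    algebraMap_mem_awaySubalgebra_units (n := 0) rfl (by simp)
  have hmem : p ^ k * s ^ (-k - j) ∈ (awaySubalgebra F ht).toSubmonoid.units := by
    have : p ^ k * s ^ (-k - j) = Units.map (algebraMap (StarRing K c e) F : _ →* F) a * v := by
      rw [zpow_sub, zpow_neg, ← mul_assoc, ← div_eq_mul_inv, ← div_eq_mul_inv, ← div_zpow, ← huv,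
        mul_right_comm, mul_div_cancel_right]
    exact this ▸ mul_mem ha hv
  have natDegree_eq {w : Polynomial K} (hw : w ≠ 0) : k + (-k - j) * (w.natDegree + 1) = 0 := by
    have h := zpow_mul_natDegree_add_eq_zero (χ := evalArc he hec w)
      (by simp [evalArc_leafMinor_castSucc]) (by simp [evalArc_centerCoord_last])
      (by simp [evalArc_centerCoord_zero, hw]) hpF hsF hmem
    rwa [evalArc_centerCoord_last, evalArc_centerCoord_zero, Polynomial.natDegree_X,
      Polynomial.natDegree_mul_X hw, Nat.cast_one, mul_one, Nat.cast_succ] at h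
  have h₀ := natDegree_eq one_ne_zero
  have h₁ := natDegree_eq Polynomial.X_ne_zero
  simp only [Polynomial.natDegree_one, Polynomial.natDegree_X] at h₀ h₁
  push_cast at h₀ h₁
  lia

end Units

end StarRing

theorem lssIdeal_starGraph_eq_starIdeal (K : Type) [Field K] {m : ℕ} (hn : 2 ≤ m + 2) :
    lssIdeal K (starGraph (m + 2) hn) (m + 2) =
      starIdeal K (Fin.last (m + 1)) (Finset.univ.image Fin.castSucc) ∅ := by
  refine le_antisymm (Ideal.span_le.2 ?_) (starIdeal_le_iff.2 ⟨fun i hi ↦ ?_, by simp⟩)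
  · have hedge {i : Fin (m + 2)} (hi : i ≠ Fin.last (m + 1)) :
        ∑ k, X (i, k) * X (Fin.last (m + 1), k) ∈
          starIdeal K (Fin.last (m + 1)) (Finset.univ.image Fin.castSucc)
            (∅ : Finset (Fin (m + 2))) := by
      rw [← truncatedEdge_empty]
      exact truncatedEdge_mem_starIdeal (by simpa [Fin.exists_castSucc_eq] using hi)
    rintro _ ⟨i, j, ⟨hij, rfl | rfl⟩, rfl⟩
    · rw [Finset.sum_congr rfl fun k _ ↦ mul_comm _ (X (j, k))]
      exact hedge hij.symm
    · exact hedge hij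
  · obtain ⟨a, -, rfl⟩ := Finset.mem_image.1 hi
    rw [truncatedEdge_empty]
    exact Ideal.subset_span ⟨_, _, ⟨a.castSucc_ne_last, .inr rfl⟩, rfl⟩

end LovaszSaksSchrijver

open LovaszSaksSchrijver in
theorem lss_star_classGroup_general {K V : Type} [CommRing K] [IsDomain K]
    [UniqueFactorizationMonoid K] [IsNoetherianRing K] [Finite V] [DecidableEq V] {c : V} {m : ℕ}
    {e : Fin (m + 1) → V} (he : Function.Injective e) (hec : ∀ a, e a ≠ c) :
    ∃ _ : IsDomain (StarRing K c e), IsIntegrallyClosed (StarRing K c e) ∧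
      IsNoetherianRing (StarRing K c e) ∧
        DivisorClassGroupIsFreeOfRank (StarRing K c e) (FractionRing (StarRing K c e)) 1 := by
  have : IsDomain (StarRing K c e) := by
    have := isPrime_starIdeal (K := K) (c := c) (A := Finset.univ.image e) (T := ∅)
      (κ := Fin (m + 2)) (by simpa using hec) (by simp [Finset.card_image_of_injective _ he])
    exact Ideal.Quotient.isDomain _
  refine ⟨this, isIntegrallyClosed_starRing he hec, inferInstance, ?_⟩
  let F := FractionRing (StarRing K c e)
  have hs := centerCoord_ne_zero (K := K) he hec 0
  have hp := centerCoord_ne_zero (K := K) he hec (Fin.last _)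
  have ht := leafMinor_castSucc_ne_zero (K := K) he hec
  have := uniqueFactorizationMonoid_awaySubalgebra_centerCoord (F := F) (hs := hs) hec
  have := uniqueFactorizationMonoid_awaySubalgebra_leafMinor (F := F) (ht := ht) he hec
  let s : Fˣ := Units.mk0 (algebraMap _ F (centerCoord K c e 0)) (by simpa using hs)
  let p : Fˣ := Units.mk0 (algebraMap _ F (centerCoord K c e (Fin.last _))) (by simpa using hp)
  exact divisorClassGroupIsFreeOfRank_one
    (B₁ := awaySubalgebra F hs) (B₂ := awaySubalgebra F ht)
    (B₁₂ := awaySubalgebra F (mul_ne_zero hs ht))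
    (awaySubalgebra_centerCoord_inf_leafMinor he hec)
    (.powers (centerCoord K c e 0)) (.powers (leafMinor K c e Fin.castSucc))
    (.powers (centerCoord K c e 0 * leafMinor K c e Fin.castSucc))
    (awaySubalgebra_le_of_dvd (dvd_mul_right _ _)) (awaySubalgebra_le_of_dvd (dvd_mul_left _ _))
    (FractionalIdeal.coeIdeal_ne_zero.2 (centerIdeal_ne_bot hs))
    (isLocalGenerator_awaySubalgebra_centerCoord (s := s) rfl)
    (isLocalGenerator_awaySubalgebra_leafMinor (p := p) rfl)
    (awaySubalgebra_mul_units_le he hec rfl rfl)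
    fun _ ↦ eq_zero_of_zpow_mem_sup he hec rfl rfl

/-- For the `(n-1)`-star graph `G` and `d = n`, the LSS ring `R_G(n)` is a normal
Noetherian domain whose divisor class group is isomorphic to `ℤ`. -/
theorem lss_star_classGroup (K : Type) [Field K] (n : ℕ) (hn : 2 ≤ n) :
    ∃ _ : IsDomain (MvPolynomial (Fin n × Fin n) K ⧸ lssIdeal K (starGraph n hn) n),
      IsIntegrallyClosed (MvPolynomial (Fin n × Fin n) K ⧸ lssIdeal K (starGraph n hn) n) ∧
      IsNoetherianRing (MvPolynomial (Fin n × Fin n) K ⧸ lssIdeal K (starGraph n hn) n) ∧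
      DivisorClassGroupIsFreeOfRank
        (MvPolynomial (Fin n × Fin n) K ⧸ lssIdeal K (starGraph n hn) n)
        (FractionRing (MvPolynomial (Fin n × Fin n) K ⧸ lssIdeal K (starGraph n hn) n)) 1 := by
  obtain ⟨m, rfl⟩ := Nat.exists_eq_add_of_le' hn
  rw [LovaszSaksSchrijver.lssIdeal_starGraph_eq_starIdeal]
  exact lss_star_classGroup_general (Fin.castSucc_injective _) Fin.castSucc_ne_last
end
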